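/- Let 1 → K → G →^π Q → 1 be an exact sequence of infinite hyperbolic groups, let Q₁ < Q be a qi embedded subgroup, and let G₁ = π⁻¹(Q₁) (which is hyperbolic). Suppose H is a qi embedded subgroup of G₁ with [G₁ : H] = ∞, and suppose H is not qi embedded in G. Then there is a finitely generated, infinite subgroup K₁ of K ∩ H such that Λ_K(K₁) ≠ ∂K, [K : K₁] = ∞, and K₁ is distorted in G. -/

import Mathlib

/-! ### Core coarse-geometric definitions
Gromov products, hyperbolicity, Gromov boundaries, Cannon–Thurston maps,
word metrics, quasi-isometric embeddings, laminations. -/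

/-- The Gromov product of `x` and `y` with respect to the basepoint `o`,
for a distance function `d`. -/
noncomputable def gprod {X : Type*} (d : X → X → ℝ) (o x y : X) : ℝ :=
  (d x o + d y o - d x y) / 2

/-- A distance function is (Gromov) hyperbolic: the four point condition. -/
def IsHypD {X : Type*} (d : X → X → ℝ) : Prop :=
  ∃ δ : ℝ, 0 ≤ δ ∧ ∀ o x y z : X,
    min (gprod d o x y) (gprod d o y z) ≤ gprod d o x z + δ

/-- A sequence tends to infinity if its Gromov products tend to infinity. -/
def SeqToInf {X : Type*} (d : X → X → ℝ) (s : ℕ → X) : Prop :=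
  ∀ (o : X) (M : ℝ), ∃ N : ℕ, ∀ m n : ℕ, N ≤ m → N ≤ n → M ≤ gprod d o (s m) (s n)

/-- Two sequences tending to infinity determine the same boundary point. -/
def SeqFellow {X : Type*} (d : X → X → ℝ) (s t : ℕ → X) : Prop :=
  ∀ (o : X) (M : ℝ), ∃ N : ℕ, ∀ m n : ℕ, N ≤ m → N ≤ n → M ≤ gprod d o (s m) (t n)

/-- Sequences in `X` tending to infinity. -/
def BdryPre {X : Type*} (d : X → X → ℝ) : Type _ := { s : ℕ → X // SeqToInf d s }

/-- The (sequential model of the) Gromov boundary of `(X, d)`. -/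
def Bdry {X : Type*} (d : X → X → ℝ) : Type _ :=
  Quot fun s t : BdryPre d => SeqFellow d s.1 t.1

/-- The boundary point represented by a sequence tending to infinity. -/
def Bdry.mk {X : Type*} {d : X → X → ℝ} (s : BdryPre d) : Bdry d := Quot.mk _ s

/-- A sequence in `X` converges to the boundary point `ξ`. -/
def ConvTo {X : Type*} (d : X → X → ℝ) (s : ℕ → X) (ξ : Bdry d) : Prop :=
  ∃ h : SeqToInf d s, Bdry.mk ⟨s, h⟩ = ξ

/-- The visual topology on the Gromov boundary. -/
noncomputable instance bdryTopology {X : Type*} (d : X → X → ℝ) :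
    TopologicalSpace (Bdry d) :=
  TopologicalSpace.generateFrom
    { U | ∃ (o : X) (M : ℝ) (s : BdryPre d),
        U = { η | ∃ t : BdryPre d, Bdry.mk t = η ∧
          ∀ m n : ℕ, M ≤ gprod d o (s.1 m) (t.1 n) } }

/-- `g` is a Cannon–Thurston map for `f : (Y,dY) → (X,dX)`: it is continuous and,
whenever a sequence in `Y` converges to a boundary point `ξ`, the image sequence
converges to `g ξ`. -/
def IsCTMapD {Y X : Type*} (dY : Y → Y → ℝ) (dX : X → X → ℝ)
    (f : Y → X) (g : Bdry dY → Bdry dX) : Prop :=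
  Continuous g ∧
    ∀ (s : ℕ → Y) (ξ : Bdry dY), ConvTo dY s ξ → ConvTo dX (fun n => f (s n)) (g ξ)

/-- `f : (Y,dY) → (X,dX)` admits a Cannon–Thurston map. -/
def AdmitsCT {Y X : Type*} (dY : Y → Y → ℝ) (dX : X → X → ℝ) (f : Y → X) : Prop :=
  ∃ g, IsCTMapD dY dX f g

/-- The limit set of `A ⊆ X` in the Gromov boundary of `(X,d)`. -/
def limitSetD {X : Type*} (d : X → X → ℝ) (A : Set X) : Set (Bdry d) :=
  { ξ | ∃ s : ℕ → X, (∀ n, s n ∈ A) ∧ ConvTo d s ξ }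

/-- Quasi-isometric embedding with multiplicative/additive constant `k`. -/
def IsQIEmbWith {Y X : Type*} (dY : Y → Y → ℝ) (dX : X → X → ℝ) (k : ℝ) (f : Y → X) : Prop :=
  ∀ y y' : Y, dY y y' / k - k ≤ dX (f y) (f y') ∧ dX (f y) (f y') ≤ k * dY y y' + k

/-- Quasi-isometric embedding. -/
def IsQIEmbD {Y X : Type*} (dY : Y → Y → ℝ) (dX : X → X → ℝ) (f : Y → X) : Prop :=
  ∃ k : ℝ, 1 ≤ k ∧ IsQIEmbWith dY dX k f

/-- `A` is contained in a finite (`d`-)neighborhood of `B`. -/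
def InFiniteNbhd {X : Type*} (d : X → X → ℝ) (A B : Set X) : Prop :=
  ∃ D : ℝ, ∀ a ∈ A, ∃ b ∈ B, d a b ≤ D

/-- The word length of `g` with respect to `S` (inverses of generators allowed). -/
noncomputable def wordLength {G : Type*} [Group G] (S : Set G) (g : G) : ℕ :=
  sInf { n : ℕ | ∃ l : List G, (∀ x ∈ l, x ∈ S ∨ x⁻¹ ∈ S) ∧ l.length = n ∧ l.prod = g }

/-- The word metric on `G` with respect to `S`. -/
noncomputable def wordDist {G : Type*} [Group G] (S : Set G) (g h : G) : ℝ :=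
  wordLength S (g⁻¹ * h)

/-- `S` is a finite generating set of `G`. -/
def GenSet {G : Type*} [Group G] (S : Set G) : Prop :=
  S.Finite ∧ Subgroup.closure S = ⊤

/-- A finitely generated group is hyperbolic if some (equivalently, any) of its
word metrics with respect to a finite generating set is Gromov hyperbolic. -/
def IsHypGroup (G : Type*) [Group G] : Prop :=
  ∃ S : Set G, GenSet S ∧ IsHypD (wordDist S)

/-- The standard distance on `ℤ` (to parametrize (quasi)geodesic lines). -/
noncomputable def zdist : ℤ → ℤ → ℝ := fun m n => |(m : ℝ) - (n : ℝ)|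

/-- A quasigeodesic line in `(Y,dY)`. -/
def IsQGLine {Y : Type*} (dY : Y → Y → ℝ) (α : ℤ → Y) : Prop :=
  IsQIEmbD zdist dY α

/-- `α` is a leaf of the Cannon–Thurston lamination of `f`, whose CT map is `g`:
a quasigeodesic line whose two distinct endpoints at infinity are identified by `g`. -/
def IsLeafD {Y X : Type*} (dY : Y → Y → ℝ) (dX : X → X → ℝ)
    (f : Y → X) (g : Bdry dY → Bdry dX) (α : ℤ → Y) : Prop :=
  IsQGLine dY α ∧
  ∃ ξp ξm : Bdry dY,
    ConvTo dY (fun n : ℕ => α (n : ℤ)) ξp ∧ ConvTo dY (fun n : ℕ => α (-(n : ℤ))) ξm ∧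
    ξp ≠ ξm ∧ g ξp = g ξm

/-- A finitely generated subgroup `H ≤ G` is qi embedded (= quasiconvex when `G` is
hyperbolic, = undistorted): the inclusion is a quasi-isometric embedding for word
metrics coming from finite generating sets (this does not depend on the choices). -/
def QIEmbSubgroup {G : Type*} [Group G] (H : Subgroup G) : Prop :=
  ∃ (S : Set G) (T : Set ↥H), GenSet S ∧ GenSet T ∧
    IsQIEmbD (wordDist T) (wordDist S) (Subtype.val : ↥H → G)

/-- A group is virtually cyclic (elementary). -/
def VirtCyclic (G : Type*) [Group G] : Prop :=
  ∃ H : Subgroup G, (∃ g : G, H = Subgroup.zpowers g) ∧ H.index ≠ 0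

/-- A geodesic metric space. -/
def IsGeodesicMS (X : Type*) [MetricSpace X] : Prop :=
  ∀ x y : X, ∃ γ : ℝ → X, γ 0 = x ∧ γ (dist x y) = y ∧
    ∀ s ∈ Set.Icc (0:ℝ) (dist x y), ∀ t ∈ Set.Icc (0:ℝ) (dist x y),
      dist (γ s) (γ t) = |s - t|

/-!
The extension is viewed as a bundle of copies of `K`, the fibers of `π`. Geodesics of `G` are
controlled by *ladders*: a bounded-Lipschitz section of `π` through each point (its leaf) exists
because coarse centers of ideal triangles of `K` can be chosen equivariantly, and the union of the
fiber geodesics joining two leaves is a Lipschitz retract of `G`, hence quasiconvex. Pushing ladders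
to `π⁻¹(Q₁)` with the gate projection to `Q₁` shows that a `G₁`-geodesic between two points of `H`,
and hence `H`, passes near all vertical segments that occur in the corresponding part of the ladder.

So a pair of points of `H` is joined by a chain of short jumps and of vertical segments that stay
near `H`. Pigeonhole makes each such segment a path in a single finitely generated subgroup
`K₁ ≤ K ∩ H`, generated by the short elements of `K ∩ H`. Were `K₁` undistorted in `G`, the chain
would bound the distance in `H` by the square of the distance in `G`, and then `H` would be
undistorted by the stability of quasigeodesics with subexponential distortion.

If `Λ_K(K₁)` were all of `∂K`, every point `p` of `G₁` would lie on a ladder line joining two points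
of `K₁`: translate by `p⁻¹` the two ends of a loxodromic axis through `1`. Then `G₁` would be in a
bounded neighborhood of `H`, contradicting the infinite index. Finally a subgroup of finite index
has full limit set, and a finite one is undistorted.
-/

namespace HypExt

section CoarseGeometry

variable {X : Type*} {d : X → X → ℝ}

/-- A pseudometric, given as a bare distance function so that it applies to `wordDist`. -/
structure IsPseudoDist (d : X → X → ℝ) : Prop where
  self : ∀ x, d x x = 0
  symm : ∀ x y, d x y = d y x
  tri : ∀ x y z, d x z ≤ d x y + d y z

/-- `p 0, …, p n` is a geodesic parametrized by natural numbers. -/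
def IsDiscreteGeodesic (d : X → X → ℝ) (p : ℕ → X) (n : ℕ) : Prop :=
  ∀ i j, i ≤ j → j ≤ n → d (p i) (p j) = (j : ℝ) - i

/-- A pseudometric in which any two points are joined by a discrete geodesic, as in the vertex
set of a connected graph. -/
structure IsGraphDist (d : X → X → ℝ) : Prop extends IsPseudoDist d where
  exists_geodesic : ∀ x y, ∃ (n : ℕ) (p : ℕ → X), p 0 = x ∧ p n = y ∧ IsDiscreteGeodesic d p n

/-- Gromov hyperbolicity with constant `δ`, i.e. `IsHypD` with its constant exposed; the four-point
condition is cleared of minima and halves so that it splits into two linear inequalities. -/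
structure IsHypWith (d : X → X → ℝ) (δ : ℝ) : Prop where
  nonneg : 0 ≤ δ
  four_point : ∀ o x y z,
    d x z + d y o ≤ d x y + d z o + 2 * δ ∨ d x z + d y o ≤ d y z + d x o + 2 * δ

/-- `m` lies coarsely between `x` and `y`: passing through `m` costs at most `2 * c`. In a
hyperbolic space this says that `m` is close to a geodesic from `x` to `y`. -/
def CoarseBtw (d : X → X → ℝ) (c : ℝ) (x m y : X) : Prop :=
  d x m + d m y ≤ d x y + 2 * c

lemma IsPseudoDist.nonneg (hd : IsPseudoDist d) (x y : X) : 0 ≤ d x y := by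
  linarith [hd.tri x y x, hd.self x, hd.symm x y]

lemma IsHypWith.mono {δ δ' : ℝ} (hy : IsHypWith d δ) (hle : δ ≤ δ') : IsHypWith d δ' where
  nonneg := hy.nonneg.trans hle
  four_point o x y z := (hy.four_point o x y z).imp (fun h => by linarith) (fun h => by linarith)

lemma isHypWith_of_gprod {δ : ℝ} (hδ : 0 ≤ δ)
    (h : ∀ o x y z, min (gprod d o x y) (gprod d o y z) ≤ gprod d o x z + δ) : IsHypWith d δ where
  nonneg := hδ
  four_point o x y z := by
    have hmin := h o x y z
    simp only [gprod, min_le_iff] at hmin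
    exact hmin.imp (fun h => by linarith) (fun h => by linarith)

namespace CoarseBtw

variable {c c' e : ℝ} {x x' m m' y y' : X}

lemma nonneg (h : CoarseBtw d c x m y) (hd : IsPseudoDist d) : 0 ≤ c := by
  unfold CoarseBtw at h; linarith [hd.tri x m y]

lemma mono (h : CoarseBtw d c x m y) (hc : c ≤ c') : CoarseBtw d c' x m y := by
  unfold CoarseBtw at *; linarith

lemma symm (h : CoarseBtw d c x m y) (hd : IsPseudoDist d) : CoarseBtw d c y m x := by
  unfold CoarseBtw at *; rw [hd.symm y m, hd.symm m x, hd.symm y x]; linarith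

lemma refl_left (hd : IsPseudoDist d) (hc : 0 ≤ c) (x y : X) : CoarseBtw d c x x y := by
  unfold CoarseBtw; rw [hd.self]; linarith

lemma refl_right (hd : IsPseudoDist d) (hc : 0 ≤ c) (x y : X) : CoarseBtw d c x y y := by
  unfold CoarseBtw; rw [hd.self]; linarith

lemma move_mid (h : CoarseBtw d c x m y) (hd : IsPseudoDist d) (he : d m m' ≤ e) :
    CoarseBtw d (c + e) x m' y := by
  unfold CoarseBtw at *
  linarith [hd.tri x m m', hd.tri m' m y, hd.symm m m']

lemma move_left (h : CoarseBtw d c x m y) (hd : IsPseudoDist d) (he : d x x' ≤ e) :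
    CoarseBtw d (c + e) x' m y := by
  unfold CoarseBtw at *
  linarith [hd.tri x' x m, hd.tri x x' y, hd.symm x x']

lemma move_right (h : CoarseBtw d c x m y) (hd : IsPseudoDist d) (he : d y y' ≤ e) :
    CoarseBtw d (c + e) x m y' := by
  unfold CoarseBtw at *
  linarith [hd.tri m y y', hd.tri x y' y, hd.symm y y']

end CoarseBtw

lemma IsDiscreteGeodesic.coarseBtw {p : ℕ → X} {n i : ℕ} (hp : IsDiscreteGeodesic d p n)
    (hi : i ≤ n) : CoarseBtw d 0 (p 0) (p i) (p n) := by
  unfold CoarseBtw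
  rw [hp 0 i (Nat.zero_le i) hi, hp i n hi le_rfl, hp 0 n (Nat.zero_le n) le_rfl]
  linarith

lemma IsDiscreteGeodesic.dist_endpoints {p : ℕ → X} {n : ℕ} (hp : IsDiscreteGeodesic d p n) :
    d (p 0) (p n) = n := by
  simpa using hp 0 n (Nat.zero_le n) le_rfl

end CoarseGeometry

section GromovProduct

variable {X : Type*} {d : X → X → ℝ} {δ : ℝ}

lemma gprod_comm (hd : IsPseudoDist d) (o x y : X) : gprod d o x y = gprod d o y x := by
  unfold gprod; rw [hd.symm x y]; ring

lemma gprod_le_dist_left (hd : IsPseudoDist d) (o x y : X) : gprod d o x y ≤ d o x := by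
  unfold gprod
  linarith [hd.tri y x o, hd.symm x o, hd.symm y x]

lemma gprod_le_iff_coarseBtw (hd : IsPseudoDist d) {o x y : X} {c : ℝ} :
    gprod d o x y ≤ c ↔ CoarseBtw d c x o y := by
  unfold gprod CoarseBtw
  rw [hd.symm y o]
  constructor <;> intro h <;> linarith

lemma gprod_sub_dist_le_base (hd : IsPseudoDist d) (o o' x y : X) :
    gprod d o x y - d o o' ≤ gprod d o' x y := by
  unfold gprod
  linarith [hd.tri x o' o, hd.tri y o' o, hd.symm o o']

lemma gprod_sub_dist_le_right (hd : IsPseudoDist d) (o x y y' : X) :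
    gprod d o x y - d y y' ≤ gprod d o x y' := by
  unfold gprod
  linarith [hd.tri y y' o, hd.tri x y y']

lemma IsHypWith.le_gprod_trans (hy : IsHypWith d δ) {o x y z : X} {B : ℝ}
    (hxy : B ≤ gprod d o x y) (hyz : B ≤ gprod d o y z) : B - δ ≤ gprod d o x z := by
  unfold gprod at *
  rcases hy.four_point o x y z with h | h <;> linarith

lemma IsHypWith.le_gprod_of_chain_of_lt (hy : IsHypWith d δ) {f : ℕ → X} {o : X} {B : ℝ} (m : ℕ) :
    ∀ i j : ℕ, i < j → j ≤ i + 2 ^ m →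
      (∀ l, i ≤ l → l < j → B ≤ gprod d o (f l) (f (l + 1))) →
      B - m * δ ≤ gprod d o (f i) (f j) := by
  have hδ := hy.nonneg
  induction m with
  | zero =>
    intro i j hij hj hs
    obtain rfl : j = i + 1 := by simp only [pow_zero] at hj; omega
    simpa using hs i le_rfl (by omega)
  | succ m ih =>
    intro i j hij hj hs
    push_cast
    by_cases hc : j ≤ i + 2 ^ m
    · linarith [ih i j hij hc hs]
    · have hp : 0 < 2 ^ m := by positivity
      have h1 := ih i (i + 2 ^ m) (by omega) le_rfl (fun l hl hl' => hs l hl (by omega))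
      have h2 := ih (i + 2 ^ m) j (by omega) (by omega) (fun l hl hl' => hs l (by omega) hl')
      linarith [hy.le_gprod_trans h1 h2]

/- Bisecting a chain of `2 ^ m` steps uses the hyperbolicity inequality only `m` times, so the loss
is logarithmic in the length of the chain. -/
lemma IsHypWith.le_gprod_of_chain (hd : IsPseudoDist d) (hy : IsHypWith d δ) {f : ℕ → X} {o : X}
    {B : ℝ} {m n : ℕ} (hs : ∀ l < n, B ≤ gprod d o (f l) (f (l + 1))) (hb : ∀ l ≤ n, B ≤ d (f l) o)
    {i j : ℕ} (hi : i ≤ n) (hj : j ≤ n) (hij : j ≤ i + 2 ^ m) (hji : i ≤ j + 2 ^ m) :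
    B - m * δ ≤ gprod d o (f i) (f j) := by
  rcases lt_trichotomy i j with hlt | rfl | hlt
  · exact hy.le_gprod_of_chain_of_lt m i j hlt hij fun l _ _ => hs l (by omega)
  · have hδ : 0 ≤ m * δ := mul_nonneg (Nat.cast_nonneg _) hy.nonneg
    unfold gprod
    linarith [hb i hi, hd.self (f i)]
  · rw [gprod_comm hd]
    exact hy.le_gprod_of_chain_of_lt m j i hlt hji fun l _ _ => hs l (by omega)

lemma dist_sub_dist_le_gprod_left (hd : IsPseudoDist d) (o x y : X) :
    d x o - d x y ≤ gprod d o x y := by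
  unfold gprod
  linarith [hd.tri x y o]

lemma dist_sub_dist_le_gprod_right (hd : IsPseudoDist d) (o x y : X) :
    d y o - d x y ≤ gprod d o x y := by
  unfold gprod
  linarith [hd.tri y x o, hd.symm y x]

end GromovProduct

section Morse

open Filter

lemma eventually_exists_cube_le_two_pow {δ : ℝ} (hδ : 0 ≤ δ) (B : ℝ) :
    ∀ᶠ h : ℝ in atTop, ∃ m : ℕ, B * (h + 1) ^ 3 ≤ 2 ^ m ∧ δ * m + B ≤ h := by
  have hslope : 0 < 2 * (δ + 1) := by linarith
  set C : ℝ := 2 * (δ + 1) + 1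
  have hcube : ∀ᶠ n : ℕ in atTop, 2 * |B| * C ^ 3 * (n : ℝ) ^ 3 ≤ 2 ^ n := by
    have hlittle := (isLittleO_pow_const_const_pow_of_one_lt (R := ℝ) 3
      (one_lt_two : (1 : ℝ) < 2)).bound (c := (2 * |B| * C ^ 3 + 1)⁻¹) (by positivity)
    filter_upwards [hlittle] with n hn
    rw [inv_mul_eq_div, le_div_iff₀ (by positivity), Real.norm_of_nonneg (by positivity),
      Real.norm_of_nonneg (by positivity)] at hn
    have hn3 : (0 : ℝ) ≤ (n : ℝ) ^ 3 := by positivity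
    linarith
  have hfloor : Tendsto (fun h : ℝ => ⌊h / (2 * (δ + 1))⌋₊ + 1) atTop atTop :=
    (tendsto_add_atTop_nat 1).comp (tendsto_nat_floor_atTop.comp
      (tendsto_id.atTop_div_const hslope))
  filter_upwards [hfloor.eventually hcube, eventually_ge_atTop (2 * B), eventually_ge_atTop 0]
    with h hpow hB h0
  set m := ⌊h / (2 * (δ + 1))⌋₊
  have hm_le : (m : ℝ) * (2 * (δ + 1)) ≤ h :=
    (le_div_iff₀ hslope).1 (Nat.floor_le (div_nonneg h0 hslope.le))
  have hm_lt : h < (m + 1) * (2 * (δ + 1)) := (div_lt_iff₀ hslope).1 (Nat.lt_floor_add_one _)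
  refine ⟨m, ?_, by nlinarith [Nat.cast_nonneg (α := ℝ) m]⟩
  have hCm : h + 1 ≤ C * (m + 1) := by nlinarith [Nat.cast_nonneg (α := ℝ) m]
  have hscale : |B| * (h + 1) ^ 3 ≤ |B| * (C * (m + 1)) ^ 3 := by gcongr
  have habs : B * (h + 1) ^ 3 ≤ |B| * (h + 1) ^ 3 := by gcongr; exact le_abs_self B
  push_cast [pow_succ] at hpow
  nlinarith

lemma of_descent {P : ℝ → Prop} {h₀ : ℝ} (mono : ∀ a b, a ≤ b → P a → P b)
    (step : ∀ h, h₀ ≤ h → P (h + 1) → P h) (ex : ∃ h, P h) : P h₀ := by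
  obtain ⟨h, hh⟩ := ex
  have descend : ∀ n : ℕ, P (h₀ + n) → P h₀ := by
    intro n
    induction n with
    | zero => simp
    | succ n ih =>
      intro hn
      refine ih (step _ (by linarith [Nat.cast_nonneg (α := ℝ) n]) ?_)
      rwa [Nat.cast_succ, ← add_assoc] at hn
  exact descend ⌈h - h₀⌉₊ (mono _ _ (by linarith [Nat.le_ceil (h - h₀)]) hh)

variable {X : Type*} {d : X → X → ℝ} {δ k A : ℝ} {γ : ℕ → X} {n : ℕ}

lemma IsDiscreteGeodesic.exists_dist_le_of_coarseBtw {N : ℕ} {g : ℕ → X}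
    (hg : IsDiscreteGeodesic d g N) (hd : IsPseudoDist d) (hy : IsHypWith d δ) {c : ℝ} {p : X}
    (hp : CoarseBtw d c (g 0) p (g N)) : ∃ s ≤ N, d p (g s) ≤ 2 * c + 2 * δ + 1 := by
  have hc := hp.nonneg hd
  have hδ := hy.nonneg
  have hN := hg.dist_endpoints
  unfold CoarseBtw at hp
  by_cases hx : d (g 0) p ≤ N
  · set s := ⌊d (g 0) p⌋₊
    have hs_le : (s : ℝ) ≤ d (g 0) p := Nat.floor_le (hd.nonneg _ _)
    have hs_lt : d (g 0) p < s + 1 := Nat.lt_floor_add_one _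
    have hsN : s ≤ N := by exact_mod_cast hs_le.trans hx
    have h0s := hg 0 s (Nat.zero_le s) hsN
    have hsN' := hg s N hsN le_rfl
    rw [Nat.cast_zero, sub_zero] at h0s
    refine ⟨s, hsN, ?_⟩
    rcases hy.four_point (g s) (g 0) p (g N) with h | h <;> linarith [hd.symm (g N) (g s)]
  · exact ⟨N, le_rfl, by linarith [hd.nonneg p (g N)]⟩

/-- A discrete path `γ 0, …, γ n` with steps of length at most `k` whose parameter length is
bounded by a cubic polynomial in the distance. In a hyperbolic space such paths still satisfy the
Morse lemma, and the cubic bound is often easier to verify than a linear one. -/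
structure IsCubicQuasigeodesic (d : X → X → ℝ) (k A : ℝ) (γ : ℕ → X) (n : ℕ) : Prop where
  step : ∀ i < n, d (γ i) (γ (i + 1)) ≤ k
  length_le : ∀ i j, i ≤ j → j ≤ n → (j : ℝ) - i ≤ A * (d (γ i) (γ j) + 1) ^ 3

lemma dist_le_mul_of_step_le (hd : IsPseudoDist d) (hs : ∀ i < n, d (γ i) (γ (i + 1)) ≤ k)
    {i j : ℕ} (hij : i ≤ j) (hj : j ≤ n) : d (γ i) (γ j) ≤ k * ((j : ℝ) - i) := by
  induction j, hij using Nat.le_induction with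
  | base => simp [hd.self]
  | succ j _ ih =>
    push_cast
    linarith [ih (by omega), hs j (by omega), hd.tri (γ i) (γ j) (γ (j + 1))]

lemma IsCubicQuasigeodesic.length_le_of_dist_le (hγ : IsCubicQuasigeodesic d k A γ n) (hA : 0 ≤ A)
    (hd : IsPseudoDist d) {i j : ℕ} (hj : j ≤ n) {r : ℝ} (hr : d (γ i) (γ j) ≤ r) :
    (j : ℝ) - i ≤ A * (r + 1) ^ 3 := by
  have hnn := hd.nonneg (γ i) (γ j)
  rcases le_total i j with hij | hij
  · exact (hγ.length_le i j hij hj).trans (by gcongr)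
  · have hr1 : 0 ≤ r + 1 := by linarith
    have : (j : ℝ) ≤ i := by exact_mod_cast hij
    have : 0 ≤ A * (r + 1) ^ 3 := by positivity
    linarith

lemma IsCubicQuasigeodesic.index_le (hγ : IsCubicQuasigeodesic d k A γ n) (hA : 0 ≤ A)
    (hd : IsPseudoDist d) {i j m : ℕ} (hj : j ≤ n) {r : ℝ} (hr : d (γ i) (γ j) ≤ r)
    (hm : A * (r + 1) ^ 3 ≤ 2 ^ m) : j ≤ i + 2 ^ m := by
  have hlen := hγ.length_le_of_dist_le hA hd hj hr
  have : (j : ℝ) ≤ i + 2 ^ m := by linarith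
  exact_mod_cast this

section Shadow

variable {N s : ℕ} {g : ℕ → X}

/- If the shadow `f t` of `g t` is far from `g s`, then `g t` and `f t` are in the same direction
seen from `g s`, either because `t` is at distance `W` from `s` or because `t` is an endpoint. -/
lemma IsDiscreteGeodesic.exists_anchors (hg : IsDiscreteGeodesic d g N) (hd : IsPseudoDist d)
    (hs : s ≤ N) {f : ℕ → X} {r c h : ℝ} {W : ℕ} (hf : ∀ t ≤ N, d (g t) (f t) ≤ r)
    (hf0 : d (g 0) (f 0) ≤ c) (hfN : d (g N) (f N) ≤ c) (hfar : ∀ t ≤ N, h ≤ d (f t) (g s))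
    (hW : h + r ≤ W + c) :
    ∃ a b, a ≤ s ∧ s ≤ b ∧ b ≤ N ∧ b ≤ a + 2 * W ∧
      h - c ≤ gprod d (g s) (g a) (f a) ∧ h - c ≤ gprod d (g s) (g b) (f b) := by
  have hleft : ∃ a ≤ s, s ≤ a + W ∧ h - c ≤ gprod d (g s) (g a) (f a) := by
    by_cases hsW : s ≤ W
    · refine ⟨0, Nat.zero_le s, by omega, le_trans ?_ (dist_sub_dist_le_gprod_right hd _ _ _)⟩
      linarith [hfar 0 (Nat.zero_le N)]
    · refine ⟨s - W, by omega, by omega, le_trans ?_ (dist_sub_dist_le_gprod_left hd _ _ _)⟩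
      rw [hg (s - W) s (by omega) hs, Nat.cast_sub (by omega)]
      linarith [hf (s - W) (by omega)]
  have hright : ∃ b ≤ N, s ≤ b ∧ b ≤ s + W ∧ h - c ≤ gprod d (g s) (g b) (f b) := by
    by_cases hsW : N ≤ s + W
    · refine ⟨N, le_rfl, hs, hsW, le_trans ?_ (dist_sub_dist_le_gprod_right hd _ _ _)⟩
      linarith [hfar N le_rfl]
    · refine ⟨s + W, by omega, by omega, le_rfl,
        le_trans ?_ (dist_sub_dist_le_gprod_left hd _ _ _)⟩
      rw [hd.symm, hg s (s + W) (by omega) (by omega), Nat.cast_add]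
      linarith [hf (s + W) (by omega)]
  obtain ⟨a, has, hsa, ha⟩ := hleft
  obtain ⟨b, hbN, hsb, hbs, hb⟩ := hright
  exact ⟨a, b, has, hsb, hbN, by omega, ha, hb⟩

/- A path that shadows a geodesic cannot avoid a large ball around a point of the geodesic: the
detour would have length exponential in the radius. -/
lemma IsDiscreteGeodesic.radius_le_of_avoiding_shadow (hg : IsDiscreteGeodesic d g N)
    (hd : IsPseudoDist d) (hy : IsHypWith d δ) (hs : s ≤ N) {φ : ℕ → ℕ} {r h : ℝ} {W m : ℕ}
    (hstep : ∀ l < n, d (γ l) (γ (l + 1)) ≤ 2 * k) (hφ : ∀ t ≤ N, φ t ≤ n)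
    (hshadow : ∀ t ≤ N, d (g t) (γ (φ t)) ≤ r) (hstart : d (g 0) (γ (φ 0)) ≤ k)
    (hend : d (g N) (γ (φ N)) ≤ k) (hfar : ∀ l ≤ n, h ≤ d (γ l) (g s)) (hW : h + r ≤ W + k)
    (hwindow : ∀ a b, a ≤ b → b ≤ N → b ≤ a + 2 * W →
      φ b ≤ φ a + 2 ^ m ∧ φ a ≤ φ b + 2 ^ m) :
    h ≤ k + (m + 2) * δ := by
  have hδ := hy.nonneg
  have hk : 0 ≤ k := (hd.nonneg _ _).trans hstart
  obtain ⟨a, b, has, hsb, hbN, hba, ha, hb⟩ :=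
    hg.exists_anchors hd hs hshadow hstart hend (fun t ht => hfar _ (hφ t ht)) hW
  have hab := has.trans hsb
  obtain ⟨hwin, hwin'⟩ := hwindow a b hab hbN hba
  have hchain : h - k - m * δ ≤ gprod d (g s) (γ (φ a)) (γ (φ b)) := by
    refine hy.le_gprod_of_chain hd (fun l hl => ?_) (fun l hl => by linarith [hfar l hl])
      (hφ a (hab.trans hbN)) (hφ b hbN) hwin hwin'
    unfold gprod
    linarith [hstep l hl, hfar l hl.le, hfar (l + 1) hl]
  have hmδ : 0 ≤ m * δ := by positivity
  rw [gprod_comm hd] at hb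
  have hafb := hy.le_gprod_trans (B := h - k - m * δ) (by linarith) hchain
  have hab' := hy.le_gprod_trans (B := h - k - m * δ - δ) hafb (by linarith)
  have hzero : gprod d (g s) (g a) (g b) = 0 := by
    unfold gprod
    rw [hg a b hab hbN, hg a s has hs, hd.symm (g b), hg s b hsb hbN]
    ring
  linarith

lemma exists_shadow_parametrization (hd : IsPseudoDist d) {D : ℝ} (hD : 0 ≤ D) (hg0 : g 0 = γ 0)
    (hgN : g N = γ n) (hclose : ∀ t ≤ N, ∃ i ≤ n, d (g t) (γ i) ≤ D) :
    ∃ φ : ℕ → ℕ, φ 0 = 0 ∧ γ (φ N) = g N ∧ ∀ t ≤ N, φ t ≤ n ∧ d (g t) (γ (φ t)) ≤ D := by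
  have hchoice : ∀ t, ∃ i, (t = 0 → i = 0) ∧ (t = N → γ i = g N) ∧
      (t ≤ N → i ≤ n ∧ d (g t) (γ i) ≤ D) := by
    intro t
    rcases eq_or_ne t 0 with rfl | h0
    · exact ⟨0, fun _ => rfl, fun h => by rw [← h, hg0], fun _ =>
        ⟨Nat.zero_le n, by rwa [hg0, hd.self]⟩⟩
    rcases eq_or_ne t N with rfl | hN
    · exact ⟨n, fun h => absurd h h0, fun _ => hgN.symm, fun _ => ⟨le_rfl, by rwa [hgN, hd.self]⟩⟩
    by_cases ht : t ≤ N
    · obtain ⟨i, hi⟩ := hclose t ht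
      exact ⟨i, fun h => absurd h h0, fun h => absurd h hN, fun _ => hi⟩
    · exact ⟨0, fun _ => rfl, fun h => absurd h hN, fun h => absurd h ht⟩
  choose φ hφ0 hφN hφ using hchoice
  exact ⟨φ, hφ0 0 rfl, hφN N rfl, hφ⟩

end Shadow

lemma IsCubicQuasigeodesic.closeness_improves (hγ : IsCubicQuasigeodesic d k A γ n) (hk : 0 ≤ k)
    (hA : 0 ≤ A) (hd : IsPseudoDist d) (hy : IsHypWith d δ) {N : ℕ} {g : ℕ → X}
    (hg : IsDiscreteGeodesic d g N) (hg0 : g 0 = γ 0) (hgN : g N = γ n) {h : ℝ} (hh : 0 ≤ h) {m : ℕ}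
    (hpow : A * (6 * h + 7) ^ 3 ≤ 2 ^ m) (hlog : k + (m + 2) * δ < h)
    (hclose : ∀ t ≤ N, ∃ i ≤ n, d (g t) (γ i) ≤ h + 1) :
    ∀ s ≤ N, ∃ i ≤ n, d (g s) (γ i) ≤ h := by
  intro s hs
  by_contra! hcon
  obtain ⟨φ, hφ0, hφN, hφ⟩ :=
    exists_shadow_parametrization hd (show 0 ≤ h + 1 by linarith) hg0 hgN hclose
  have hW := Nat.le_ceil (2 * h + 1)
  have hW' := Nat.ceil_lt_add_one (show 0 ≤ 2 * h + 1 by linarith)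
  refine hlog.not_ge (hg.radius_le_of_avoiding_shadow hd hy hs (γ := γ) (φ := φ) (r := h + 1)
    (W := ⌈2 * h + 1⌉₊) (fun l hl => by linarith [hγ.step l hl]) (fun t ht => (hφ t ht).1)
    (fun t ht => (hφ t ht).2) (by rwa [hφ0, hg0, hd.self]) (by rwa [hφN, hd.self])
    (fun l hl => hd.symm (g s) (γ l) ▸ (hcon l hl).le) (by linarith) fun a b hab hbN hba => ?_)
  have hba' : (b : ℝ) ≤ a + 2 * ⌈2 * h + 1⌉₊ := by exact_mod_cast hba
  have hdist : d (γ (φ a)) (γ (φ b)) ≤ 6 * h + 6 := by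
    linarith [hd.tri (γ (φ a)) (g a) (γ (φ b)), hd.tri (g a) (g b) (γ (φ b)), hg a b hab hbN,
      hd.symm (γ (φ a)) (g a), (hφ a (hab.trans hbN)).2, (hφ b hbN).2]
  have hpow' : A * (6 * h + 6 + 1) ^ 3 ≤ 2 ^ m := by convert hpow using 3; ring
  exact ⟨hγ.index_le hA hd (hφ b hbN).1 hdist hpow',
    hγ.index_le hA hd (hφ a (hab.trans hbN)).1 (hd.symm (γ (φ a)) _ ▸ hdist) hpow'⟩

/- Starting from a trivial bound, the closeness constant is improved by one until it reaches a
threshold that depends only on the parameters. -/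
theorem exists_geodesic_close_to_cubicQuasigeodesic (hδ : 0 ≤ δ) (hk : 0 ≤ k) (hA : 0 ≤ A) :
    ∃ D : ℝ, 0 ≤ D ∧ ∀ {X : Type*} (d : X → X → ℝ) (_ : IsPseudoDist d) (_ : IsHypWith d δ)
      (γ : ℕ → X) (n : ℕ) (_ : IsCubicQuasigeodesic d k A γ n) (N : ℕ) (g : ℕ → X)
      (_ : IsDiscreteGeodesic d g N) (_ : g 0 = γ 0) (_ : g N = γ n),
      ∀ s ≤ N, ∃ i ≤ n, d (g s) (γ i) ≤ D := by
  obtain ⟨D, hD⟩ := eventually_atTop.1 ((eventually_exists_cube_le_two_pow hδ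
    (343 * A + k + 2 * δ + 1)).and (eventually_ge_atTop 0))
  refine ⟨D, (hD D le_rfl).2, fun d hd hy γ n hγ N g hg hg0 hgN => ?_⟩
  refine of_descent (P := fun h => ∀ s ≤ N, ∃ i ≤ n, d (g s) (γ i) ≤ h) ?_ ?_ ?_
  · exact fun a b hab ha s hs => (ha s hs).imp fun i hi => ⟨hi.1, hi.2.trans hab⟩
  · intro h hDh hclose
    obtain ⟨⟨m, hpow, hlog⟩, hh⟩ := hD h hDh
    refine hγ.closeness_improves hk hA hd hy hg hg0 hgN hh (m := m) ?_ (by nlinarith) hclose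
    calc A * (6 * h + 7) ^ 3 ≤ A * (7 * (h + 1)) ^ 3 := by gcongr; linarith
      _ = 343 * A * (h + 1) ^ 3 := by ring
      _ ≤ (343 * A + k + 2 * δ + 1) * (h + 1) ^ 3 := by gcongr; linarith
      _ ≤ 2 ^ m := hpow
  · refine ⟨N, fun s hs => ⟨0, Nat.zero_le n, ?_⟩⟩
    rw [← hg0, hd.symm, hg 0 s (Nat.zero_le s) hs]
    simpa using hs

end Morse

section Morse

variable {X : Type*} {d : X → X → ℝ} {δ k A : ℝ} {γ : ℕ → X} {n : ℕ}

/-- The conclusion of the Morse lemma: the path `γ 0, …, γ n` is close to every geodesic joining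
its endpoints, and its parameter length is linear in the distance of its endpoints. -/
structure IsCoarseGeodesic (d : X → X → ℝ) (D : ℝ) (γ : ℕ → X) (n : ℕ) : Prop where
  coarseBtw : ∀ i ≤ n, CoarseBtw d D (γ 0) (γ i) (γ n)
  exists_close : ∀ c p, CoarseBtw d c (γ 0) p (γ n) → ∃ i ≤ n, d p (γ i) ≤ D + 2 * c
  length_le : (n : ℝ) ≤ D * (d (γ 0) (γ n) + 1)

lemma exists_index_covering {φ : ℕ → ℕ} {N : ℕ} {F : ℝ} (h0 : φ 0 = 0)
    (hstep : ∀ s < N, (φ (s + 1) : ℝ) ≤ φ s + F) (hN : (n : ℝ) ≤ φ N + F) {i : ℕ} (hi : i ≤ n) :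
    ∃ s ≤ N, φ s ≤ i ∧ (i : ℝ) ≤ φ s + F := by
  set s := Nat.findGreatest (φ · ≤ i) N
  have hsN : s ≤ N := Nat.findGreatest_le N
  have hs : φ s ≤ i := Nat.findGreatest_spec (P := (φ · ≤ i)) (Nat.zero_le N) (by simp [h0])
  refine ⟨s, hsN, hs, ?_⟩
  rcases hsN.eq_or_lt with heq | hlt
  · rw [heq]
    exact (Nat.cast_le.2 hi).trans hN
  · have hnot : ¬ φ (s + 1) ≤ i :=
      Nat.findGreatest_is_greatest (P := (φ · ≤ i)) (Nat.lt_succ_self s) hlt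
    exact (Nat.cast_le.2 (not_le.1 hnot).le).trans (hstep s hlt)

lemma cast_le_mul_of_step_le {φ : ℕ → ℕ} {N : ℕ} {F : ℝ} (h0 : φ 0 = 0)
    (hstep : ∀ s < N, (φ (s + 1) : ℝ) ≤ φ s + F) : (φ N : ℝ) ≤ F * N := by
  induction N with
  | zero => simp [h0]
  | succ N ih =>
    push_cast
    linarith [ih fun s hs => hstep s (by omega), hstep N (by omega)]

lemma IsCubicQuasigeodesic.isCoarseGeodesic_of_close (hγ : IsCubicQuasigeodesic d k A γ n)
    (hk : 0 ≤ k) (hA : 0 ≤ A) (hd : IsPseudoDist d) (hy : IsHypWith d δ) {N : ℕ} {g : ℕ → X}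
    (hg : IsDiscreteGeodesic d g N) (hg0 : g 0 = γ 0) (hgN : g N = γ n) {D F : ℝ} (hD : 0 ≤ D)
    (hF : A * (2 * D + 2) ^ 3 ≤ F) (hclose : ∀ s ≤ N, ∃ i ≤ n, d (g s) (γ i) ≤ D) :
    IsCoarseGeodesic d (D + k * F + 2 * δ + 1 + F) γ n := by
  have hδ := hy.nonneg
  have hF0 : 0 ≤ F := le_trans (by positivity) hF
  have hkF : 0 ≤ k * F := by positivity
  obtain ⟨φ, hφ0, hφN, hφ⟩ := exists_shadow_parametrization hd hD hg0 hgN hclose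
  have hjump : ∀ {i j}, j ≤ n → d (γ i) (γ j) ≤ 2 * D + 1 → (j : ℝ) ≤ i + F := fun hj hij => by
    have := hγ.length_le_of_dist_le hA hd hj hij
    rw [show 2 * D + 1 + 1 = 2 * D + 2 by ring] at this
    linarith
  have hstep : ∀ s < N, (φ (s + 1) : ℝ) ≤ φ s + F := fun s hs => by
    have hgs := hg s (s + 1) (by omega) (by omega)
    push_cast at hgs
    refine hjump (hφ (s + 1) (by omega)).1 ?_
    linarith [hd.tri (γ (φ s)) (g s) (γ (φ (s + 1))), hd.tri (g s) (g (s + 1)) (γ (φ (s + 1))),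
      (hφ s hs.le).2, (hφ (s + 1) hs).2, hd.symm (γ (φ s)) (g s)]
  have hlast : (n : ℝ) ≤ φ N + F := hjump le_rfl (by rw [hφN, hgN, hd.self]; linarith)
  refine ⟨fun i hi => ?_, fun c p hp => ?_, ?_⟩
  · obtain ⟨s, hs, hsi, his⟩ := exists_index_covering hφ0 hstep hlast hi
    have hsteps := dist_le_mul_of_step_le hd hγ.step hsi hi
    have hkF' : k * ((i : ℝ) - φ s) ≤ k * F := by gcongr; linarith
    have hbtw := hg.coarseBtw hs
    rw [hg0, hgN] at hbtw
    have hgi : d (g s) (γ i) ≤ D + k * F := by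
      linarith [hd.tri (g s) (γ (φ s)) (γ i), (hφ s hs).2]
    exact (hbtw.move_mid hd hgi).mono (by linarith)
  · rw [← hg0, ← hgN] at hp
    obtain ⟨s, hs, hps⟩ := hg.exists_dist_le_of_coarseBtw hd hy hp
    exact ⟨φ s, (hφ s hs).1, by linarith [hd.tri p (g s) (γ (φ s)), (hφ s hs).2]⟩
  · rw [← hg0, ← hgN, hg.dist_endpoints]
    have hlen := cast_le_mul_of_step_le hφ0 hstep
    have hN : (0 : ℝ) ≤ (D + k * F + 2 * δ + 1) * (N + 1) := by positivity
    linarith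

theorem exists_isCoarseGeodesic_of_isCubicQuasigeodesic (hδ : 0 ≤ δ) (hk : 0 ≤ k) (hA : 0 ≤ A) :
    ∃ D : ℝ, 0 ≤ D ∧ ∀ {X : Type*} (d : X → X → ℝ) (_ : IsGraphDist d) (_ : IsHypWith d δ)
      (γ : ℕ → X) (n : ℕ), IsCubicQuasigeodesic d k A γ n → IsCoarseGeodesic d D γ n := by
  obtain ⟨D, hD, hclose⟩ := exists_geodesic_close_to_cubicQuasigeodesic hδ hk hA
  refine ⟨D + k * (A * (2 * D + 2) ^ 3) + 2 * δ + 1 + A * (2 * D + 2) ^ 3, by positivity,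
    fun d hd hy γ n hγ => ?_⟩
  obtain ⟨N, g, hg0, hgN, hg⟩ := hd.exists_geodesic (γ 0) (γ n)
  exact hγ.isCoarseGeodesic_of_close hk hA hd.toIsPseudoDist hy hg hg0 hgN hD le_rfl
    (hclose d hd.toIsPseudoDist hy γ n hγ N g hg hg0 hgN)

lemma CoarseBtw.exists_path (hd : IsGraphDist d) {c : ℝ} {x m y : X} (h : CoarseBtw d c x m y) :
    ∃ (n a : ℕ) (γ : ℕ → X), a ≤ n ∧ γ 0 = x ∧ γ a = m ∧ γ n = y ∧
      ∀ i j, i ≤ j → j ≤ n → d (γ i) (γ j) ≤ (j : ℝ) - i ∧ (j : ℝ) - i ≤ d (γ i) (γ j) + 2 * c := by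
  have hc := h.nonneg hd.toIsPseudoDist
  obtain ⟨a, p, rfl, rfl, hp⟩ := hd.exists_geodesic x m
  obtain ⟨b, q, hq0, rfl, hq⟩ := hd.exists_geodesic (p a) y
  have hxm := hp.dist_endpoints
  have hmy := hq.dist_endpoints
  rw [hq0] at hmy
  unfold CoarseBtw at h
  refine ⟨a + b, a, fun i => if i ≤ a then p i else q (i - a), by omega, by simp, by simp, ?_, ?_⟩
  · rcases eq_or_ne b 0 with rfl | hb
    · simp [hq0]
    · simp [hb]
  intro i j hij hj
  by_cases hja : j ≤ a
  · simp only [hja, hij.trans hja, if_true, hp i j hij hja]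
    constructor <;> linarith
  by_cases hia : i ≤ a
  · simp only [hia, hja, if_true, if_false]
    have hpi := hp i a hia le_rfl
    have hpi' := hp 0 i (Nat.zero_le i) hia
    have hqj := hq 0 (j - a) (Nat.zero_le _) (by omega)
    have hqj' := hq (j - a) b (by omega) le_rfl
    rw [Nat.cast_sub (by omega)] at hqj hqj'
    rw [hq0] at hqj
    push_cast at hpi' hqj
    constructor <;> linarith [hd.tri (p i) (p a) (q (j - a)), hd.tri (p 0) (p i) (q b),
      hd.tri (p i) (q (j - a)) (q b)]
  · simp only [hia, hja, if_false]
    rw [hq _ _ (by omega) (by omega), Nat.cast_sub (by omega), Nat.cast_sub (by omega)]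
    constructor <;> linarith

lemma add_one_le_cube {t : ℝ} (ht : 0 ≤ t) : t + 1 ≤ (t + 1) ^ 3 :=
  le_self_pow₀ (by linarith) (by norm_num)

theorem CoarseBtw.exists_map_of_bilipschitz {l c : ℝ} (hδ : 0 ≤ δ) (hl : 0 ≤ l) (hc : 0 ≤ c) :
    ∃ D : ℝ, 0 ≤ D ∧ ∀ {X : Type*} {Y : Type*} (d : X → X → ℝ) (_ : IsGraphDist d)
      (d' : Y → Y → ℝ) (_ : IsGraphDist d') (_ : IsHypWith d' δ) (f : X → Y)
      (_ : ∀ x y, d' (f x) (f y) ≤ l * (d x y + 1)) (_ : ∀ x y, d x y ≤ l * (d' (f x) (f y) + 1))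
      (x m y : X), CoarseBtw d c x m y → CoarseBtw d' D (f x) (f m) (f y) := by
  obtain ⟨D, hD, hmorse⟩ := exists_isCoarseGeodesic_of_isCubicQuasigeodesic (δ := δ) (k := 2 * l)
    (A := l + 2 * c) hδ (by positivity) (by positivity)
  refine ⟨D, hD, fun {X Y} d hd d' hd' hy f hlip hcolip x m y hb => ?_⟩
  obtain ⟨n, a, γ, han, rfl, rfl, rfl, hγ⟩ := hb.exists_path hd
  refine (hmorse d' hd' hy (fun i => f (γ i)) n ⟨fun i hi => ?_, fun i j hij hj => ?_⟩).coarseBtw a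
    han
  · have hi' := (hγ i (i + 1) (by omega) hi).1
    push_cast at hi'
    nlinarith [hlip (γ i) (γ (i + 1))]
  · have hnn := hd'.nonneg (f (γ i)) (f (γ j))
    have hlin : (j : ℝ) - i ≤ (l + 2 * c) * (d' (f (γ i)) (f (γ j)) + 1) := by
      nlinarith [(hγ i j hij hj).2, hcolip (γ i) (γ j)]
    exact hlin.trans (mul_le_mul_of_nonneg_left (add_one_le_cube hnn) (by positivity))

end Morse

section Retraction

variable {X : Type*} {d : X → X → ℝ} {δ C : ℝ} {P : X → X}

/-- `P` is coarsely Lipschitz and coarsely idempotent; in a hyperbolic space its image is then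
quasiconvex. -/
structure IsCoarseRetraction (d : X → X → ℝ) (C : ℝ) (P : X → X) : Prop where
  lip : ∀ z w, d (P z) (P w) ≤ C * (d z w + 1)
  idem : ∀ z, d (P (P z)) (P z) ≤ C

lemma IsCoarseRetraction.dist_self_le (hP : IsCoarseRetraction d C P) (hC : 0 ≤ C)
    (hd : IsPseudoDist d) {h : ℝ} {p z : X} (hz : d p (P z) ≤ h) :
    d p (P p) ≤ h + C * (h + 1) + C := by
  have hmono : C * (d p (P z) + 1) ≤ C * (h + 1) := by gcongr
  linarith [hP.lip p (P z), hP.idem z, hd.tri p (P z) (P p), hd.tri (P z) (P (P z)) (P p),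
    hd.symm (P z) (P (P z)), hd.symm (P (P z)) (P p)]

lemma IsCoarseRetraction.closeness_improves (hP : IsCoarseRetraction d C P) (hC : 0 ≤ C)
    (hd : IsPseudoDist d) (hy : IsHypWith d δ) {N : ℕ} {g : ℕ → X} (hg : IsDiscreteGeodesic d g N)
    (h0 : d (g 0) (P (g 0)) ≤ C) (hN : d (g N) (P (g N)) ≤ C) {h : ℝ} (hh : 0 ≤ h) {m : ℕ}
    (hpow : 2 * (2 * h + C * (h + 3) + 2) ≤ 2 ^ m) (hlog : C + (m + 2) * δ < h)
    (hclose : ∀ s ≤ N, ∃ z, d (g s) (P z) ≤ h + 1) : ∀ s ≤ N, ∃ z, d (g s) (P z) ≤ h := by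
  intro s hs
  by_contra! hfar
  set r := (h + 1) + C * (h + 1 + 1) + C
  have hr : 0 ≤ h + r := by positivity
  refine hlog.not_ge (hg.radius_le_of_avoiding_shadow hd hy hs (γ := fun i => P (g i)) (φ := id)
    (r := r) (W := ⌈h + r⌉₊) (fun l hl => ?_) (fun t ht => ht) (fun t ht => ?_) h0 hN
    (fun l _ => hd.symm (g s) _ ▸ (hfar (g l)).le) (by linarith [Nat.le_ceil (h + r)])
    fun a b hab _ hba => ?_)
  · have hlip := hP.lip (g l) (g (l + 1))
    rw [hg l (l + 1) (by omega) hl] at hlip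
    push_cast at hlip
    linarith
  · obtain ⟨z, hz⟩ := hclose t ht
    exact hP.dist_self_le hC hd hz
  · have hceil : (2 * ⌈h + r⌉₊ : ℝ) ≤ 2 ^ m := by linarith [Nat.ceil_lt_add_one hr]
    have hceil' : 2 * ⌈h + r⌉₊ ≤ 2 ^ m := by exact_mod_cast hceil
    simp only [id]
    omega

theorem IsCoarseRetraction.exists_dist_le_of_coarseBtw {c : ℝ} (hδ : 0 ≤ δ) (hC : 0 ≤ C)
    (hc : 0 ≤ c) :
    ∃ D : ℝ, 0 ≤ D ∧ ∀ {X : Type*} (d : X → X → ℝ) (_ : IsGraphDist d) (_ : IsHypWith d δ)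
      (P : X → X) (_ : IsCoarseRetraction d C P) (x y : X) (_ : d x (P x) ≤ C)
      (_ : d y (P y) ≤ C) (p : X), CoarseBtw d c x p y → d p (P p) ≤ D := by
  obtain ⟨h₀, hh₀⟩ := Filter.eventually_atTop.1 ((eventually_exists_cube_le_two_pow hδ
    (100 * (C + 1) + 2 * δ + 2)).and (Filter.eventually_ge_atTop 0))
  have hpos := (hh₀ h₀ le_rfl).2
  refine ⟨(2 * c + 2 * δ + 1 + h₀) + C * (2 * c + 2 * δ + 1 + h₀ + 1) + C, by positivity,
    fun d hd hy P hP x y hx hy' p hp => ?_⟩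
  obtain ⟨N, g, rfl, rfl, hg⟩ := hd.exists_geodesic x y
  have hclose : ∀ s ≤ N, ∃ z, d (g s) (P z) ≤ h₀ := by
    refine of_descent (P := fun h => ∀ s ≤ N, ∃ z, d (g s) (P z) ≤ h) ?_ ?_ ⟨N + C, ?_⟩
    · exact fun a b hab ha s hs => (ha s hs).imp fun z hz => hz.trans hab
    · intro h hle hh
      obtain ⟨⟨m, hpow, hlog⟩, hnn⟩ := hh₀ h hle
      refine hP.closeness_improves hC hd.toIsPseudoDist hy hg hx hy' hnn (m := m) ?_
        (by nlinarith) hh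
      calc 2 * (2 * h + C * (h + 3) + 2) ≤ (100 * (C + 1) + 2 * δ + 2) * (h + 1) := by
            nlinarith [mul_nonneg hC hnn, mul_nonneg hδ hnn]
        _ ≤ (100 * (C + 1) + 2 * δ + 2) * (h + 1) ^ 3 := by
            gcongr; exact add_one_le_cube hnn
        _ ≤ 2 ^ m := hpow
    · intro s hs
      have h0s := hg 0 s (Nat.zero_le s) hs
      have hsN : (s : ℝ) ≤ N := by exact_mod_cast hs
      rw [hd.symm] at h0s
      push_cast at h0s
      exact ⟨g 0, by linarith [hd.tri (g s) (g 0) (P (g 0))]⟩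
  obtain ⟨s, hs, hps⟩ := hg.exists_dist_le_of_coarseBtw hd.toIsPseudoDist hy hp
  obtain ⟨z, hz⟩ := hclose s hs
  exact hP.dist_self_le hC hd.toIsPseudoDist (z := z) (by linarith [hd.tri p (g s) (P z)])

/-- Every point between two points of `A` is within `D` of `A`. -/
def IsQuasiconvexSet (d : X → X → ℝ) (D : ℝ) (A : Set X) : Prop :=
  ∀ a ∈ A, ∀ a' ∈ A, ∀ m, CoarseBtw d 0 a m a' → ∃ a'' ∈ A, d m a'' ≤ D

lemma IsQuasiconvexSet.coarseBtw_of_nearest {D : ℝ} {A : Set X} (hA : IsQuasiconvexSet d D A)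
    (hd : IsGraphDist d) (hy : IsHypWith d δ) {v q a : X} (hq : q ∈ A)
    (hnear : ∀ a ∈ A, d v q ≤ d v a) (ha : a ∈ A) : CoarseBtw d (2 * δ + D + 1) v q a := by
  obtain ⟨N, g, rfl, rfl, hg⟩ := hd.exists_geodesic q a
  have hN := hg.dist_endpoints
  set t := (d v (g 0) + d (g 0) (g N) - d v (g N)) / 2 with ht
  have ht0 : 0 ≤ t := by linarith [hd.tri v (g 0) (g N)]
  have htN : t ≤ N := by linarith [hd.tri v (g N) (g 0), hd.symm (g N) (g 0)]
  have hst : (⌊t⌋₊ : ℝ) ≤ t := Nat.floor_le ht0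
  have hts : t < ⌊t⌋₊ + 1 := Nat.lt_floor_add_one t
  have hsN : ⌊t⌋₊ ≤ N := by exact_mod_cast hst.trans htN
  obtain ⟨a'', ha'', hdist⟩ := hA _ hq _ ha _ (hg.coarseBtw hsN)
  have h0s := hg 0 _ (Nat.zero_le _) hsN
  have hsN' := hg _ N hsN le_rfl
  push_cast at h0s
  unfold CoarseBtw
  rcases hy.four_point v (g 0) (g ⌊t⌋₊) (g N) with h | h <;>
    linarith [hnear a'' ha'', hd.tri v (g ⌊t⌋₊) a'', hd.symm (g ⌊t⌋₊) v, hd.symm (g N) v,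
      hd.symm (g 0) v]

end Retraction

section Guessing

variable {X : Type*} {d : X → X → ℝ} {L : X → X → X → Prop} {D r k M : ℝ} {γ : ℕ → X} {n : ℕ}

/-- A candidate family of paths, `L x y p` meaning that `p` lies on the candidate path from `x` to
`y`: triangles of such paths are thin, and paths between points at distance at most `r` are
short. -/
structure IsThinFamily (d : X → X → ℝ) (L : X → X → X → Prop) (D r : ℝ) : Prop where
  thin : ∀ x y z p, L x y p → ∃ p', d p p' ≤ D ∧ (L x z p' ∨ L z y p')
  small : ∀ x y p, d x y ≤ r → L x y p → d p x ≤ D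

/-- The candidate paths between points of `γ` are within `M` of the corresponding subpaths. -/
def NearSubpaths (d : X → X → ℝ) (L : X → X → X → Prop) (γ : ℕ → X) (n : ℕ) (M : ℝ) : Prop :=
  ∀ i j, i ≤ j → j ≤ n → ∀ p, L (γ i) (γ j) p → ∃ l, i ≤ l ∧ l ≤ j ∧ d p (γ l) ≤ M

namespace IsThinFamily

lemma exists_dist_le_log (hL : IsThinFamily d L D r) (hd : IsPseudoDist d) (hD : 0 ≤ D)
    (hr : 0 ≤ r) (hstep : ∀ i < n, d (γ i) (γ (i + 1)) ≤ r) (m : ℕ) :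
    ∀ i j : ℕ, i ≤ j → j ≤ n → j ≤ i + 2 ^ m → ∀ p, L (γ i) (γ j) p →
      ∃ l, i ≤ l ∧ l ≤ j ∧ d p (γ l) ≤ D * m + D := by
  induction m with
  | zero =>
    intro i j hij hj hjm p hp
    have hsmall : d (γ i) (γ j) ≤ r := by
      rcases hij.eq_or_lt with rfl | hlt
      · rwa [hd.self]
      · obtain rfl : j = i + 1 := by simp only [pow_zero] at hjm; omega
        exact hstep i (by omega)
    exact ⟨i, le_rfl, hij, by simpa using hL.small _ _ _ hsmall hp⟩
  | succ m ih =>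
    intro i j hij hj hjm p hp
    push_cast
    by_cases hc : j ≤ i + 2 ^ m
    · obtain ⟨l, hil, hlj, hl⟩ := ih i j hij hj hc p hp
      exact ⟨l, hil, hlj, by linarith⟩
    · obtain ⟨p', hpp', h | h⟩ := hL.thin _ _ (γ (i + 2 ^ m)) p hp
      · obtain ⟨l, hil, hlj, hl⟩ := ih i (i + 2 ^ m) (by omega) (by omega) le_rfl p' h
        exact ⟨l, hil, by omega, by linarith [hd.tri p p' (γ l)]⟩
      · obtain ⟨l, hil, hlj, hl⟩ := ih (i + 2 ^ m) j (by omega) hj (by omega) p' h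
        exact ⟨l, by omega, hlj, by linarith [hd.tri p p' (γ l)]⟩

lemma exists_cut_left (hL : IsThinFamily d L D r) (hd : IsPseudoDist d) (hD : 0 ≤ D) {W : ℕ}
    (hnear : NearSubpaths d L γ n M)
    (hfar : ∀ l l', l ≤ l' → l' ≤ n → d (γ l) (γ l') ≤ 2 * M + 2 * D → l' < l + W)
    {i l j : ℕ} (hil : i ≤ l) (hlj : l ≤ j) (hj : j ≤ n) {p : X} (hp : L (γ i) (γ j) p)
    (hpl : d p (γ l) ≤ M + D) :
    ∃ i' p', i' ≤ l ∧ i ≤ i' ∧ l ≤ i' + W ∧ d p p' ≤ D ∧ L (γ i') (γ j) p' := by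
  by_cases hc : l ≤ i + W
  · exact ⟨i, p, hil, le_rfl, hc, by rwa [hd.self], hp⟩
  obtain ⟨p', hpp', h | h⟩ := hL.thin _ _ (γ (l - W)) p hp
  · obtain ⟨l', _, hl', hp'⟩ := hnear i (l - W) (by omega) (by omega) p' h
    have := hfar l' l (by omega) (by omega) (by
      linarith [hd.tri (γ l') p' (γ l), hd.tri p' p (γ l), hd.symm p p', hd.symm p' (γ l')])
    omega
  · exact ⟨l - W, p', by omega, by omega, by omega, hpp', h⟩

lemma exists_cut_right (hL : IsThinFamily d L D r) (hd : IsPseudoDist d) (hD : 0 ≤ D) {W : ℕ}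
    (hnear : NearSubpaths d L γ n M)
    (hfar : ∀ l l', l ≤ l' → l' ≤ n → d (γ l) (γ l') ≤ 2 * M + 2 * D → l' < l + W)
    {i l j : ℕ} (hlj : l ≤ j) (hj : j ≤ n) {p : X} (hp : L (γ i) (γ j) p)
    (hpl : d p (γ l) ≤ M + D) :
    ∃ j' p', l ≤ j' ∧ j' ≤ j ∧ j' ≤ l + W ∧ d p p' ≤ D ∧ L (γ i) (γ j') p' := by
  by_cases hc : j ≤ l + W
  · exact ⟨j, p, hlj, le_rfl, hc, by rwa [hd.self], hp⟩
  obtain ⟨p', hpp', h | h⟩ := hL.thin _ _ (γ (l + W)) p hp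
  · exact ⟨l + W, p', by omega, by omega, le_rfl, hpp', h⟩
  · obtain ⟨l', hl', hl'j, hp'⟩ := hnear (l + W) j (by omega) hj p' h
    have := hfar l l' (by omega) (by omega) (by
      linarith [hd.tri (γ l) p' (γ l'), hd.tri (γ l) p p', hd.symm p (γ l)])
    omega

/- Cut the candidate path down to a subpath of bounded parameter length around a point of `γ` close
to `p`; there the logarithmic bound is better than the given one. -/
lemma nearSubpaths_improves (hL : IsThinFamily d L D r) (hd : IsPseudoDist d) (hD : 0 ≤ D)
    (hr : 0 ≤ r) (hk : 0 ≤ k) (hstep : ∀ i < n, d (γ i) (γ (i + 1)) ≤ r)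
    (hlen : ∀ i j, i ≤ j → j ≤ n → (j : ℝ) - i ≤ k * (d (γ i) (γ j) + 1)) {h : ℝ} (hh : 0 ≤ h)
    {m : ℕ} (hpow : 2 * (k * (2 * (h + 1) + 2 * D + 1) + 2) ≤ 2 ^ m)
    (hlog : D * m + 3 * D ≤ h) (hnear : NearSubpaths d L γ n (h + 1)) :
    NearSubpaths d L γ n h := by
  intro i j hij hj p hp
  set W := ⌊k * (2 * (h + 1) + 2 * D + 1)⌋₊ + 1 with hW
  have hWm : 2 * W ≤ 2 ^ m := by
    have : ((2 * W : ℕ) : ℝ) ≤ 2 ^ m := by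
      rw [hW]; push_cast
      linarith [Nat.floor_le (show 0 ≤ k * (2 * (h + 1) + 2 * D + 1) by positivity)]
    exact_mod_cast this
  have hfar : ∀ l l', l ≤ l' → l' ≤ n → d (γ l) (γ l') ≤ 2 * (h + 1) + 2 * D → l' < l + W := by
    intro l l' hll' hl' hdist
    have hk' : k * (d (γ l) (γ l') + 1) ≤ k * (2 * (h + 1) + 2 * D + 1) := by gcongr
    have hfloor := Nat.lt_floor_add_one (k * (2 * (h + 1) + 2 * D + 1))
    have : (l' : ℝ) < l + W := by rw [hW]; push_cast; linarith [hlen l l' hll' hl']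
    exact_mod_cast this
  obtain ⟨l, hil, hlj, hpl⟩ := hnear i j hij hj p hp
  obtain ⟨i', p', hi'l, hii', hli', hpp', hp'⟩ :=
    hL.exists_cut_left hd hD hnear hfar hil hlj hj hp (by linarith)
  obtain ⟨j', p'', hlj', hj'j, hj'l, hpp'', hp''⟩ :=
    hL.exists_cut_right hd hD hnear hfar hlj hj hp'
      (by linarith [hd.tri p' p (γ l), hd.symm p p'])
  obtain ⟨l', hil', hlj', hl'⟩ := hL.exists_dist_le_log hd hD hr hstep m i' j' (by omega)
    (by omega) (by omega) p'' hp''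
  exact ⟨l', by omega, by omega, by linarith [hd.tri p p' (γ l'), hd.tri p' p'' (γ l')]⟩

theorem exists_dist_le_of_quasigeodesic (hD : 0 ≤ D) (hr : 0 ≤ r) (hk : 0 ≤ k) :
    ∃ M : ℝ, 0 ≤ M ∧ ∀ {X : Type*} (d : X → X → ℝ) (_ : IsPseudoDist d) (L : X → X → X → Prop)
      (_ : IsThinFamily d L D r) (γ : ℕ → X) (n : ℕ) (_ : ∀ i < n, d (γ i) (γ (i + 1)) ≤ r)
      (_ : ∀ i j, i ≤ j → j ≤ n → (j : ℝ) - i ≤ k * (d (γ i) (γ j) + 1)) (p : X),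
      L (γ 0) (γ n) p → ∃ i ≤ n, d p (γ i) ≤ M := by
  obtain ⟨M, hM⟩ := Filter.eventually_atTop.1 ((eventually_exists_cube_le_two_pow hD
    (100 * (k + 1) * (D + 1) + 3 * D)).and (Filter.eventually_ge_atTop 0))
  refine ⟨M, (hM M le_rfl).2, fun d hd L hL γ n hstep hlen p hp => ?_⟩
  suffices NearSubpaths d L γ n M by
    obtain ⟨l, -, hl, hpl⟩ := this 0 n (Nat.zero_le n) le_rfl p hp
    exact ⟨l, hl, hpl⟩
  refine of_descent (P := NearSubpaths d L γ n) ?_ ?_ ⟨D * n + D, fun i j hij hj p hp =>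
    hL.exists_dist_le_log hd hD hr hstep n i j hij hj (by linarith [n.lt_two_pow_self]) p hp⟩
  · intro a b hab ha i j hij hj p hp
    obtain ⟨l, hil, hlj, hpl⟩ := ha i j hij hj p hp
    exact ⟨l, hil, hlj, hpl.trans hab⟩
  · intro h hle hh
    obtain ⟨⟨m, hpow, hlog⟩, hnn⟩ := hM h hle
    have hkD : 0 ≤ 100 * (k + 1) * (D + 1) := by positivity
    refine hL.nearSubpaths_improves hd hD hr hk hstep hlen hnn (m := m) ?_ (by linarith) hh
    calc 2 * (k * (2 * (h + 1) + 2 * D + 1) + 2) ≤ 100 * (k + 1) * (D + 1) * (h + 1) := by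
          nlinarith [mul_nonneg hk hnn, mul_nonneg hk hD, mul_nonneg hnn hD,
            mul_nonneg (mul_nonneg hk hnn) hD]
      _ ≤ (100 * (k + 1) * (D + 1) + 3 * D) * (h + 1) ^ 3 := by
          gcongr
          · linarith
          · exact add_one_le_cube hnn
      _ ≤ 2 ^ m := hpow

end IsThinFamily

end Guessing

section GromovProduct

variable {X : Type*} {d : X → X → ℝ} {δ : ℝ}

lemma IsHypWith.gprod_le_of_dist_le (hy : IsHypWith d δ) (hd : IsPseudoDist d) {o y y' z z' : X}
    {e M : ℝ} (hyz : d y z ≤ e) (hyz' : d y' z' ≤ e) (hM : gprod d o y y' ≤ M)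
    (hfar : M + e + 2 * δ < d o y) (hfar' : M + e + 2 * δ < d o y') :
    gprod d o z z' ≤ M + 2 * δ := by
  by_contra! hc
  have hδ := hy.nonneg
  unfold gprod at *
  rcases hy.four_point o y z z' with h | h <;> rcases hy.four_point o y z' y' with h' | h' <;>
    linarith [hd.symm o y, hd.symm o y', hd.tri o z y, hd.tri o z' y', hd.symm z y, hd.symm z o,
      hd.symm z' y', hd.symm z' o]

end GromovProduct

section WordMetric

variable {Γ : Type*} [Group Γ] {S : Set Γ}

lemma wordLength_prod_le {l : List Γ} (hl : ∀ x ∈ l, x ∈ S ∨ x⁻¹ ∈ S) :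
    wordLength S l.prod ≤ l.length :=
  Nat.sInf_le ⟨l, hl, rfl, rfl⟩

lemma exists_list_length_eq_wordLength (hS : GenSet S) (g : Γ) :
    ∃ l : List Γ, (∀ x ∈ l, x ∈ S ∨ x⁻¹ ∈ S) ∧ l.length = wordLength S g ∧ l.prod = g := by
  have hg : g ∈ Subgroup.closure S := hS.2 ▸ Subgroup.mem_top g
  rw [← Subgroup.mem_toSubmonoid, Subgroup.closure_toSubmonoid] at hg
  obtain ⟨l, hl, rfl⟩ := Submonoid.exists_list_of_mem_closure hg
  exact Nat.sInf_mem (s := {n | ∃ l' : List Γ, (∀ x ∈ l', x ∈ S ∨ x⁻¹ ∈ S) ∧ l'.length = n ∧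
    l'.prod = l.prod}) ⟨l.length, l, hl, rfl, rfl⟩

@[simp]
lemma wordLength_one : wordLength S (1 : Γ) = 0 := by
  simpa using wordLength_prod_le (S := S) (l := []) (by simp)

lemma wordLength_mul_le (hS : GenSet S) (g h : Γ) :
    wordLength S (g * h) ≤ wordLength S g + wordLength S h := by
  obtain ⟨l, hl, hlg, rfl⟩ := exists_list_length_eq_wordLength hS g
  obtain ⟨l', hl', hlh, rfl⟩ := exists_list_length_eq_wordLength hS h
  rw [← hlg, ← hlh, ← List.length_append, ← List.prod_append]
  exact wordLength_prod_le fun x hx => (List.mem_append.1 hx).elim (hl x) (hl' x)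

lemma wordLength_inv_le (hS : GenSet S) (g : Γ) : wordLength S g⁻¹ ≤ wordLength S g := by
  obtain ⟨l, hl, hlg, rfl⟩ := exists_list_length_eq_wordLength hS g
  rw [← hlg, List.prod_inv_reverse]
  refine (wordLength_prod_le fun x hx => ?_).trans_eq (by simp)
  obtain ⟨y, hy, rfl⟩ := List.mem_map.1 (List.mem_reverse.1 hx)
  rw [inv_inv]
  exact (hl y hy).symm

lemma wordLength_inv (hS : GenSet S) (g : Γ) : wordLength S g⁻¹ = wordLength S g :=
  le_antisymm (wordLength_inv_le hS g) (by simpa using wordLength_inv_le hS g⁻¹)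

lemma wordDist_mul_left (x y z : Γ) : wordDist S (x * y) (x * z) = wordDist S y z := by
  unfold wordDist; congr 2; group

lemma wordDist_one_left (g : Γ) : wordDist S 1 g = wordLength S g := by
  unfold wordDist; simp

lemma isPseudoDist_wordDist (hS : GenSet S) : IsPseudoDist (wordDist S) where
  self x := by unfold wordDist; simp
  symm x y := by
    unfold wordDist
    rw [← wordLength_inv hS, mul_inv_rev, inv_inv]
  tri x y z := by
    have h := wordLength_mul_le hS (x⁻¹ * y) (y⁻¹ * z)
    rw [show x⁻¹ * y * (y⁻¹ * z) = x⁻¹ * z by group] at h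
    unfold wordDist
    exact_mod_cast h

lemma wordDist_mul_prod_take_le {l : List Γ} (hl : ∀ x ∈ l, x ∈ S ∨ x⁻¹ ∈ S) (x : Γ) {i j : ℕ}
    (hij : i ≤ j) (hj : j ≤ l.length) :
    wordDist S (x * (l.take i).prod) (x * (l.take j).prod) ≤ (j : ℝ) - i := by
  have hsplit : l.take j = l.take i ++ (l.take j).drop i := by
    simpa [List.take_take, min_eq_left hij] using (List.take_append_drop i (l.take j)).symm
  have hprod : (l.take i).prod⁻¹ * (l.take j).prod = ((l.take j).drop i).prod := by
    conv_lhs => rw [hsplit, List.prod_append, inv_mul_cancel_left]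
  have hlen := wordLength_prod_le (S := S) (l := (l.take j).drop i)
    fun x hx => hl x (List.mem_of_mem_take (List.mem_of_mem_drop hx))
  rw [wordDist_mul_left, wordDist, hprod, ← Nat.cast_sub hij]
  exact_mod_cast hlen.trans_eq (by simp [hj])

lemma isGraphDist_wordDist (hS : GenSet S) : IsGraphDist (wordDist S) where
  toIsPseudoDist := isPseudoDist_wordDist hS
  exists_geodesic x y := by
    have hd := isPseudoDist_wordDist hS
    obtain ⟨l, hl, hlen, hprod⟩ := exists_list_length_eq_wordLength hS (x⁻¹ * y)
    have hxy : wordDist S x y = l.length := by rw [hlen, wordDist]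
    have hend : x * (l.take l.length).prod = y := by simp [hprod]
    refine ⟨l.length, fun i => x * (l.take i).prod, by simp, hend, fun i j hij hj => ?_⟩
    refine le_antisymm (wordDist_mul_prod_take_le hl x hij hj) ?_
    have hfirst := wordDist_mul_prod_take_le hl x (Nat.zero_le i) (hij.trans hj)
    have hlast := wordDist_mul_prod_take_le hl x hj le_rfl
    rw [List.take_zero, List.prod_nil, mul_one, Nat.cast_zero] at hfirst
    rw [hend] at hlast
    linarith [hd.tri x (x * (l.take i).prod) y,
      hd.tri (x * (l.take i).prod) (x * (l.take j).prod) y]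

open Pointwise in
lemma finite_setOf_wordLength_le (hS : GenSet S) (n : ℕ) : {g : Γ | wordLength S g ≤ n}.Finite := by
  induction n with
  | zero =>
    refine (Set.finite_singleton (1 : Γ)).subset fun g hg => ?_
    obtain ⟨l, -, hlen, rfl⟩ := exists_list_length_eq_wordLength hS g
    obtain rfl : l = [] := List.eq_nil_of_length_eq_zero (hlen.trans (Nat.le_zero.1 hg))
    simp
  | succ n ih =>
    have hfin : (S ∪ S⁻¹ ∪ {1}).Finite := (hS.1.union hS.1.inv).union (Set.finite_singleton 1)
    refine (hfin.mul ih).subset fun g hg => ?_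
    obtain ⟨l, hl, hlen, rfl⟩ := exists_list_length_eq_wordLength hS g
    cases l with
    | nil => exact ⟨1, by simp, 1, by simp, by simp⟩
    | cons a t =>
      refine ⟨a, Or.inl (hl a (by simp)), t.prod, ?_, by simp⟩
      have htail := wordLength_prod_le (l := t) fun x hx => hl x (by simp [hx])
      simp only [Set.mem_ofPred_eq, List.length_cons] at hg hlen ⊢
      omega

lemma finite_setOf_cast_wordLength_le (hS : GenSet S) (r : ℝ) :
    {g : Γ | (wordLength S g : ℝ) ≤ r}.Finite :=
  (finite_setOf_wordLength_le hS ⌊r⌋₊).subset fun _ hg => Nat.le_floor hg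

lemma exists_wordLength_map_le {Γ' : Type*} [Group Γ'] {S' : Set Γ'} (hS : GenSet S)
    (hS' : GenSet S') (f : Γ →* Γ') :
    ∃ C : ℝ, 0 ≤ C ∧ ∀ g, (wordLength S' (f g) : ℝ) ≤ C * wordLength S g := by
  obtain ⟨C, hC⟩ := (hS.1.image fun s => wordLength S' (f s)).bddAbove
  refine ⟨C, Nat.cast_nonneg C, fun g => ?_⟩
  obtain ⟨l, hl, hlen, rfl⟩ := exists_list_length_eq_wordLength hS g
  rw [← hlen]
  clear hlen
  suffices wordLength S' (f l.prod) ≤ C * l.length by exact_mod_cast this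
  induction l with
  | nil => simp
  | cons a t ih =>
    have hmul := wordLength_mul_le hS' (f a) (f t.prod)
    have htail := ih fun x hx => hl x (by simp [hx])
    have hhead : wordLength S' (f a) ≤ C := by
      rcases hl a (by simp) with ha | ha
      · exact hC ⟨a, ha, rfl⟩
      · rw [← wordLength_inv hS', ← map_inv]
        exact hC ⟨a⁻¹, ha, rfl⟩
    rw [List.prod_cons, map_mul, List.length_cons, mul_add, mul_one]
    omega

lemma wordDist_map {Γ' : Type*} [Group Γ'] {S' : Set Γ'} (f : Γ →* Γ') (x y : Γ) :
    wordDist S' (f x) (f y) = wordLength S' (f (x⁻¹ * y)) := by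
  unfold wordDist; simp

lemma gprod_wordDist_one (hS : GenSet S) (g h : Γ) : gprod (wordDist S) 1 g h =
    ((wordLength S g : ℝ) + wordLength S h - wordLength S (g⁻¹ * h)) / 2 := by
  have hd := isPseudoDist_wordDist hS
  rw [gprod, hd.symm g, hd.symm h, wordDist_one_left, wordDist_one_left, wordDist]

end WordMetric

section Loxodromic

variable {Γ : Type*} [Group Γ] {S : Set Γ} {δ C : ℝ} {H : Subgroup Γ}

/- Since `k⁻¹` and `k` have small Gromov product, each further power of `k` extends the previous one
by a definite amount. -/
lemma le_wordLength_pow (hS : GenSet S) (hy : IsHypWith (wordDist S) δ) {k : Γ}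
    (hk : 2 * (gprod (wordDist S) 1 k k⁻¹ + δ) + 1 ≤ wordLength S k) (n : ℕ) :
    (n : ℝ) ≤ wordLength S (k ^ n) := by
  have hδ := hy.nonneg
  have hd := isPseudoDist_wordDist hS
  have hgp := gprod_wordDist_one hS k k⁻¹
  have hnn : 0 ≤ gprod (wordDist S) 1 k k⁻¹ := by
    unfold gprod; linarith [hd.tri k 1 k⁻¹, hd.symm 1 k⁻¹]
  rw [wordLength_inv hS] at hgp
  have hgrow : ∀ n : ℕ, (wordLength S (k ^ n) : ℝ) + 1 ≤ wordLength S (k ^ (n + 1)) := by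
    intro n
    suffices (wordLength S (k ^ n) : ℝ) + wordLength S k -
        2 * (gprod (wordDist S) 1 k k⁻¹ + δ) ≤ wordLength S (k ^ (n + 1)) by linarith
    induction n with
    | zero => simp only [pow_zero, wordLength_one, zero_add, pow_one]; push_cast; linarith
    | succ n ih =>
      have hback : wordDist S (k ^ (n + 2)) (k ^ n) = wordLength S (k⁻¹ * k⁻¹) := by
        unfold wordDist; congr 2; group
      have hlast : wordDist S (k ^ (n + 2)) (k ^ (n + 1)) = wordLength S k := by
        rw [wordDist, ← wordLength_inv hS]; congr 2; group
      have hprev : wordDist S (k ^ n) (k ^ (n + 1)) = wordLength S k := by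
        unfold wordDist; congr 2; group
      have h := hy.four_point (k ^ (n + 1)) (k ^ n) 1 (k ^ (n + 2))
      rw [hd.symm (k ^ n) (k ^ (n + 2)), hback, hlast, hprev, hd.symm (k ^ n) 1, wordDist_one_left,
        wordDist_one_left, wordDist_one_left] at h
      rcases h with h | h <;> linarith
  induction n with
  | zero => simp
  | succ n ih => push_cast; linarith [hgrow n]

/- In the absence of loxodromic elements all elements of `H` point in the same direction, up to half
of their length. -/
lemma le_gprod_of_forall_wordLength_lt (hS : GenSet S) (hy : IsHypWith (wordDist S) δ)
    (hH : ∀ k ∈ H, (wordLength S k : ℝ) < 2 * (gprod (wordDist S) 1 k k⁻¹ + δ) + 1) {k k' : Γ}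
    (hk : k ∈ H) (hk' : k' ∈ H) {m : ℝ} (hm : 2 * m ≤ wordLength S k)
    (hm' : 2 * m ≤ wordLength S k') : m - (5 * δ + 1) ≤ gprod (wordDist S) 1 k k' := by
  by_contra! hlt
  have hδ := hy.nonneg
  have hd := isPseudoDist_wordDist hS
  have hkk := hH k hk
  have hkk' := hH k' hk'
  have hprod := hH (k * k') (H.mul_mem hk hk')
  have hinvk := gprod_wordDist_one hS k⁻¹ k'
  have hkprod := gprod_wordDist_one hS k (k * k')
  have hprodk' := gprod_wordDist_one hS (k * k')⁻¹ k'⁻¹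
  rw [wordLength_inv hS, inv_inv] at hinvk
  rw [inv_mul_cancel_left] at hkprod
  rw [wordLength_inv hS, wordLength_inv hS, inv_inv, mul_inv_cancel_right] at hprodk'
  have hleft : gprod (wordDist S) 1 k⁻¹ k' < m - 4 * δ - 1 := by
    by_contra! h
    linarith [hy.le_gprod_trans (o := 1) (x := k) (B := m - 4 * δ - 1) (by linarith)
      (show m - 4 * δ - 1 ≤ gprod (wordDist S) 1 k⁻¹ k' by linarith)]
  have hright : gprod (wordDist S) 1 k k'⁻¹ < m - 4 * δ - 1 := by
    by_contra! h
    have h' : m - 4 * δ - 1 ≤ gprod (wordDist S) 1 k'⁻¹ k' := by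
      rw [gprod_comm hd]; linarith
    linarith [hy.le_gprod_trans (o := 1) (x := k) (y := k'⁻¹) (B := m - 4 * δ - 1) (by linarith) h']
  have hkinv := hy.le_gprod_trans (o := 1) (x := k) (y := k * k') (z := (k * k')⁻¹)
    (B := m + 4 * δ - δ) (by linarith) (by linarith)
  linarith [hy.le_gprod_trans (z := k'⁻¹) (B := m + 4 * δ - δ - δ) hkinv (by linarith)]

lemma wordLength_conj_le (hS : GenSet S) (hy : IsHypWith (wordDist S) δ) (hC : 0 ≤ C)
    (hH : ∀ a ∈ H, ∀ b ∈ H, ∀ t : ℝ, 2 * t ≤ wordLength S a → 2 * t ≤ wordLength S b →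
      t - C ≤ gprod (wordDist S) 1 a b) {f k m : Γ} (hf : f ∈ H) (hk : k ∈ H)
    (hfm : wordLength S f ≤ wordLength S m)
    (hmk : (wordLength S m : ℝ) + wordLength S (m⁻¹ * k) = wordLength S k)
    (hbig : 3 * (wordLength S m : ℝ) + 4 * C ≤ wordLength S k) :
    (wordLength S (m⁻¹ * f * m) : ℝ) ≤ 6 * C + 6 * δ := by
  have hd := isPseudoDist_wordDist hS
  have hfm' : (wordLength S f : ℝ) ≤ wordLength S m := by exact_mod_cast hfm
  have hkm : wordLength S (k⁻¹ * m) = wordLength S (m⁻¹ * k) := by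
    rw [← wordLength_inv hS, mul_inv_rev, inv_inv]
  have hfinv := hH f⁻¹ (H.inv_mem hf) k hk (wordLength S f / 2)
    (by rw [wordLength_inv hS]; linarith) (by linarith)
  have hffk := hH f hf (f * k) (H.mul_mem hf hk) (wordLength S f / 2) (by linarith) (by
    have h : (wordLength S k : ℝ) ≤ wordLength S f + wordLength S (f * k) := by
      have := wordLength_mul_le hS f⁻¹ (f * k)
      rw [inv_mul_cancel_left, wordLength_inv hS] at this
      exact_mod_cast this
    linarith)
  rw [gprod_wordDist_one hS, inv_mul_cancel_left] at hffk
  have hkfk := hH k hk (f * k) (H.mul_mem hf hk) (wordLength S m + C) (by linarith) (by linarith)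
  have hkm_gprod : gprod (wordDist S) 1 k m = wordLength S m := by
    rw [gprod_wordDist_one hS, hkm]; linarith
  have hfm_le : (wordLength S (f * m) : ℝ) ≤ wordLength S m + 2 * C + 2 * δ := by
    have h := hy.le_gprod_trans (z := m) (B := wordLength S f / 2 - C) hfinv
      (by rw [hkm_gprod]; linarith)
    rw [gprod_wordDist_one hS, wordLength_inv hS, inv_inv] at h
    linarith
  have hfkfm : (wordLength S m : ℝ) - 2 * C ≤ gprod (wordDist S) 1 (f * k) (f * m) := by
    have htri : (wordLength S (f * k) : ℝ) ≤ wordLength S (f * m) + wordLength S (m⁻¹ * k) := by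
      have := wordLength_mul_le hS (f * m) (m⁻¹ * k)
      rw [show f * m * (m⁻¹ * k) = f * k by group] at this
      exact_mod_cast this
    rw [gprod_wordDist_one hS, show (f * k)⁻¹ * (f * m) = k⁻¹ * m by group, hkm]
    linarith
  have hkfm := hy.le_gprod_trans (B := wordLength S m - 2 * C) (by linarith [hkfk]) hfkfm
  have hmfm := hy.le_gprod_trans (x := m) (B := wordLength S m - 2 * C - δ)
    (by rw [gprod_comm hd, hkm_gprod]; linarith [hy.nonneg]) hkfm
  rw [gprod_wordDist_one hS, ← mul_assoc] at hmfm
  linarith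

theorem exists_mem_forall_le_wordLength_pow (hS : GenSet S) (hy : IsHypWith (wordDist S) δ)
    (hinf : (H : Set Γ).Infinite) : ∃ k ∈ H, ∀ n : ℕ, (n : ℝ) ≤ wordLength S (k ^ n) := by
  by_contra! hno
  have hδ := hy.nonneg
  have hshort : ∀ k ∈ H, (wordLength S k : ℝ) < 2 * (gprod (wordDist S) 1 k k⁻¹ + δ) + 1 := by
    intro k hk
    by_contra! hc
    obtain ⟨n, hn⟩ := hno k hk
    exact absurd (le_wordLength_pow hS hy hc n) hn.not_ge
  set C := 5 * δ + 1
  have hfin := finite_setOf_cast_wordLength_le hS (6 * C + 6 * δ)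
  obtain ⟨F, hFH, hFcard⟩ := hinf.exists_subset_card_eq (hfin.toFinset.card + 1)
  set T := F.sup (wordLength S)
  obtain ⟨k, hk, hbig⟩ : ∃ k ∈ H, 3 * (T : ℝ) + 4 * C < wordLength S k := by
    by_contra! hc
    exact hinf ((finite_setOf_cast_wordLength_le hS _).subset hc)
  obtain ⟨N, g, hg0, rfl, hg⟩ := (isGraphDist_wordDist hS).exists_geodesic 1 k
  have hN := hg.dist_endpoints
  rw [hg0, wordDist_one_left] at hN
  have hTN : T ≤ N := by
    have : (T : ℝ) ≤ N := by linarith [Nat.cast_nonneg (α := ℝ) T]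
    exact_mod_cast this
  have hm : (wordLength S (g T) : ℝ) = T := by
    simpa [hg0, wordDist_one_left] using hg 0 T (Nat.zero_le T) hTN
  have hmk := hg T N hTN le_rfl
  rw [wordDist] at hmk
  have hconj : ∀ f ∈ F, (wordLength S ((g T)⁻¹ * f * g T) : ℝ) ≤ 6 * C + 6 * δ := fun f hf =>
    wordLength_conj_le hS hy (by positivity) (fun a ha b hb t ht ht' =>
      le_gprod_of_forall_wordLength_lt hS hy hshort ha hb ht ht') (hFH hf) hk
      (by rw [Nat.cast_inj.1 hm]; exact Finset.le_sup hf) (by linarith) (by linarith)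
  have hcard := Finset.card_le_card_of_injOn (s := F) (t := hfin.toFinset)
    (fun f => (g T)⁻¹ * f * g T) (fun f hf => by simpa using hconj f hf)
    (fun a _ b _ h => by simpa using h)
  omega

end Loxodromic

section Axis

variable {Γ : Type*} [Group Γ] {S : Set Γ} {δ C : ℝ} {k : Γ}

lemma coarseBtw_wordDist_mul_left (g x m y : Γ) {c : ℝ} :
    CoarseBtw (wordDist S) c (g * x) (g * m) (g * y) ↔ CoarseBtw (wordDist S) c x m y := by
  simp only [CoarseBtw, wordDist_mul_left]

lemma wordDist_zpow (a b : ℤ) : wordDist S (k ^ a) (k ^ b) = wordLength S (k ^ (b - a)) := by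
  rw [wordDist, ← zpow_neg, ← zpow_add, neg_add_eq_sub]

lemma wordDist_mul_zpow_natCast (hS : GenSet S) (g : Γ) (n : ℕ) :
    wordDist S g (g * k ^ (n : ℤ)) = wordLength S (k ^ n) ∧
      wordDist S g (g * k ^ (-(n : ℤ))) = wordLength S (k ^ n) := by
  constructor
  · rw [wordDist, inv_mul_cancel_left, zpow_natCast]
  · rw [wordDist, inv_mul_cancel_left, zpow_neg, wordLength_inv hS, zpow_natCast]

lemma isCubicQuasigeodesic_zpow (hC : 0 ≤ C) (hk : ∀ n : ℕ, (n : ℝ) ≤ C * wordLength S (k ^ n))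
    (i : ℤ) (n : ℕ) :
    IsCubicQuasigeodesic (wordDist S) (wordLength S k) C (fun t => k ^ (i + (t : ℤ))) n where
  step t _ := by
    rw [wordDist_zpow, show i + ((t + 1 : ℕ) : ℤ) - (i + (t : ℤ)) = 1 by push_cast; ring, zpow_one]
  length_le a b hab _ := by
    rw [wordDist_zpow, show i + (b : ℤ) - (i + (a : ℤ)) = ((b - a : ℕ) : ℤ) by omega, zpow_natCast,
      ← Nat.cast_sub hab]
    refine (hk (b - a)).trans (mul_le_mul_of_nonneg_left ?_ hC)
    linarith [add_one_le_cube (Nat.cast_nonneg (α := ℝ) (wordLength S (k ^ (b - a))))]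

theorem exists_coarseBtw_zpow (hS : GenSet S) (hy : IsHypWith (wordDist S) δ) (hC : 0 ≤ C)
    (hk : ∀ n : ℕ, (n : ℝ) ≤ C * wordLength S (k ^ n)) :
    ∃ D : ℝ, 0 ≤ D ∧
      (∀ i l j : ℤ, i ≤ l → l ≤ j → CoarseBtw (wordDist S) D (k ^ i) (k ^ l) (k ^ j)) ∧
      ∀ (i j : ℤ) (c : ℝ) (p : Γ), CoarseBtw (wordDist S) c (k ^ i) p (k ^ j) →
        ∃ l : ℤ, wordDist S p (k ^ l) ≤ D + 2 * c := by
  have hd := isGraphDist_wordDist hS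
  obtain ⟨D, hD, hmorse⟩ := exists_isCoarseGeodesic_of_isCubicQuasigeodesic (k := wordLength S k)
    hy.nonneg (Nat.cast_nonneg _) hC
  have hgeod (i : ℤ) (n : ℕ) := hmorse _ hd hy _ n (isCubicQuasigeodesic_zpow hC hk i n)
  refine ⟨D, hD, fun i l j hil hlj => ?_, fun i j c p hp => ?_⟩
  · obtain ⟨a, rfl⟩ := Int.le.dest hil
    obtain ⟨b, rfl⟩ := Int.le.dest hlj
    simpa [add_assoc] using (hgeod i (a + b)).coarseBtw a (Nat.le_add_right a b)
  · wlog hij : i ≤ j generalizing i j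
    · exact this j i (hp.symm hd.toIsPseudoDist) (le_of_not_ge hij)
    obtain ⟨n, rfl⟩ := Int.le.dest hij
    obtain ⟨t, -, ht⟩ := (hgeod i n).exists_close c p (by simpa using hp)
    exact ⟨_, ht⟩

lemma exists_mem_forall_wordDist_le (x : Γ) {A : Set Γ} (hA : A.Nonempty) :
    ∃ a ∈ A, ∀ b ∈ A, wordDist S x a ≤ wordDist S x b := by
  let f (a : Γ) := wordLength S (x⁻¹ * a)
  refine ⟨Function.argminOn f A hA, Function.argminOn_mem f A hA, fun b hb => ?_⟩
  exact Nat.cast_le.2 (Function.argminOn_le f A hb)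

theorem exists_gprod_zpow_le (hS : GenSet S) (hy : IsHypWith (wordDist S) δ) (hC : 0 ≤ C)
    (hk : ∀ n : ℕ, (n : ℝ) ≤ C * wordLength S (k ^ n)) :
    ∃ c : ℝ, 0 ≤ c ∧ ∀ (r : ℝ) (y : Γ), (∀ z : ℤ, r ≤ wordDist S y (k ^ z)) →
      ∃ a : Γ, r ≤ wordLength S a ∧ ∀ j : ℤ, gprod (wordDist S) 1 a (k ^ j) ≤ c := by
  have hd := isGraphDist_wordDist hS
  have hδ := hy.nonneg
  obtain ⟨D, hD, -, hclose⟩ := exists_coarseBtw_zpow hS hy hC hk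
  have hqc : IsQuasiconvexSet (wordDist S) D (Set.range fun z : ℤ => k ^ z) := by
    rintro _ ⟨i, rfl⟩ _ ⟨j, rfl⟩ m hm
    obtain ⟨l, hl⟩ := hclose i j 0 m hm
    exact ⟨_, ⟨l, rfl⟩, by simpa using hl⟩
  refine ⟨2 * δ + D + 1, by positivity, fun r y hr => ?_⟩
  obtain ⟨_, ⟨z, rfl⟩, hz⟩ := exists_mem_forall_wordDist_le (S := S) y
    (Set.range_nonempty fun z : ℤ => k ^ z)
  refine ⟨k ^ (-z) * y, ?_, fun j => ?_⟩
  · rw [zpow_neg, show ((k ^ z)⁻¹ * y) = (y⁻¹ * k ^ z)⁻¹ by group, wordLength_inv hS]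
    exact hr z
  · rw [gprod_le_iff_coarseBtw hd.toIsPseudoDist, ← coarseBtw_wordDist_mul_left (k ^ z), mul_one,
      ← mul_assoc, ← zpow_add, ← zpow_add, add_neg_cancel, zpow_zero, one_mul]
    exact hqc.coarseBtw_of_nearest hd hy ⟨z, rfl⟩ hz ⟨_, rfl⟩

/- The translate `g ⟨k⟩` is a quasi-axis with the same ends as `⟨k⟩`, so it passes close to it. -/
theorem exists_wordDist_zpow_le_of_forall (hS : GenSet S) (hy : IsHypWith (wordDist S) δ)
    (hk : ∀ n : ℕ, (n : ℝ) ≤ wordLength S (k ^ n)) :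
    ∃ R : ℝ, ∀ (g : Γ) (e : ℝ), (∀ j : ℤ, ∃ z : ℤ, wordDist S (g * k ^ j) (k ^ z) ≤ e) →
      ∃ z : ℤ, wordDist S g (k ^ z) ≤ R := by
  have hd := isPseudoDist_wordDist hS
  obtain ⟨D, -, hbtw, hclose⟩ := exists_coarseBtw_zpow (C := 1) hS hy zero_le_one
    (by simpa using hk)
  refine ⟨D + 2 * (D + 2 * δ), fun g e hg => ?_⟩
  obtain ⟨N, hN⟩ := exists_nat_gt (D + e + 2 * δ)
  obtain ⟨i, hi⟩ := hg (-(N : ℤ))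
  obtain ⟨j, hj⟩ := hg N
  obtain ⟨hfar', hfar⟩ := wordDist_mul_zpow_natCast (k := k) hS g N
  have hmid : gprod (wordDist S) g (g * k ^ (-(N : ℤ))) (g * k ^ (N : ℤ)) ≤ D := by
    have h := hbtw (-(N : ℤ)) 0 N (by omega) (by omega)
    rwa [zpow_zero, ← coarseBtw_wordDist_mul_left g, mul_one, ← gprod_le_iff_coarseBtw hd] at h
  refine hclose i j _ g ((gprod_le_iff_coarseBtw hd).1 (hy.gprod_le_of_dist_le hd hi hj hmid ?_ ?_))
  · rw [hfar]; linarith [hk N]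
  · rw [hfar']; linarith [hk N]

end Axis

/-- A short exact sequence `1 → K → G → Q → 1` of hyperbolic groups with `K` and `Q` infinite,
together with finite generating sets and a common hyperbolicity constant. -/
structure HypExtension (K G Q : Type*) [Group K] [Group G] [Group Q] where
  SK : Set K
  SG : Set G
  SQ : Set Q
  genK : GenSet SK
  genG : GenSet SG
  genQ : GenSet SQ
  δ : ℝ
  hypK : IsHypWith (wordDist SK) δ
  hypG : IsHypWith (wordDist SG) δ
  hypQ : IsHypWith (wordDist SQ) δ
  ι : K →* G
  π : G →* Q
  ι_injective : Function.Injective ι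
  π_surjective : Function.Surjective π
  range_ι : ι.range = π.ker
  infinite_K : Infinite K
  infinite_Q : Infinite Q

namespace HypExtension

variable {K G Q : Type*} [Group K] [Group G] [Group Q] (E : HypExtension K G Q)

lemma exists_of_isHypGroup [Infinite K] [Infinite Q] (hK : IsHypGroup K)
    (hG : IsHypGroup G) (hQ : IsHypGroup Q)
    {ι : K →* G} {π : G →* Q} (hι : Function.Injective ι) (hπ : Function.Surjective π)
    (hexact : ι.range = π.ker) : ∃ E : HypExtension K G Q, E.ι = ι ∧ E.π = π := by
  obtain ⟨SK, genK, δK, hδK, hypK⟩ := hK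
  obtain ⟨SG, genG, δG, hδG, hypG⟩ := hG
  obtain ⟨SQ, genQ, δQ, hδQ, hypQ⟩ := hQ
  exact ⟨{
    SK, SG, SQ, genK, genG, genQ
    δ := max δK (max δG δQ)
    hypK := (isHypWith_of_gprod hδK hypK).mono (le_max_left _ _)
    hypG := (isHypWith_of_gprod hδG hypG).mono (le_max_of_le_right (le_max_left _ _))
    hypQ := (isHypWith_of_gprod hδQ hypQ).mono (le_max_of_le_right (le_max_right _ _))
    ι, π
    ι_injective := hι
    π_surjective := hπ
    range_ι := hexact
    infinite_K := inferInstance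
    infinite_Q := inferInstance }, rfl, rfl⟩

/-- The word metric of the kernel. -/
noncomputable abbrev dK : K → K → ℝ := wordDist E.SK
/-- The word metric of the extension. -/
noncomputable abbrev dG : G → G → ℝ := wordDist E.SG
/-- The word metric of the quotient. -/
noncomputable abbrev dQ : Q → Q → ℝ := wordDist E.SQ
/-- Word length in the kernel. -/
noncomputable abbrev lK (k : K) : ℝ := wordLength E.SK k
/-- Word length in the extension. -/
noncomputable abbrev lG (g : G) : ℝ := wordLength E.SG g

lemma graphK : IsGraphDist E.dK := isGraphDist_wordDist E.genK
lemma graphG : IsGraphDist E.dG := isGraphDist_wordDist E.genG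
lemma graphQ : IsGraphDist E.dQ := isGraphDist_wordDist E.genQ
lemma distK : IsPseudoDist E.dK := E.graphK.toIsPseudoDist
lemma distG : IsPseudoDist E.dG := E.graphG.toIsPseudoDist
lemma distQ : IsPseudoDist E.dQ := E.graphQ.toIsPseudoDist

@[simp]
lemma π_ι (k : K) : E.π (E.ι k) = 1 := by
  rw [← MonoidHom.mem_ker, ← E.range_ι]
  exact ⟨k, rfl⟩

lemma exists_ι_eq {g : G} (h : E.π g = 1) : ∃ k, E.ι k = g := by
  rwa [← MonoidHom.mem_range, E.range_ι]

lemma exists_eq_mul_ι {g h : G} (hgh : E.π g = E.π h) : ∃ k, h = g * E.ι k := by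
  obtain ⟨k, hk⟩ := E.exists_ι_eq (g := g⁻¹ * h) (by simp [hgh])
  exact ⟨k, by rw [hk, mul_inv_cancel_left]⟩

lemma dG_mul_right (x g : G) : E.dG x (x * g) = E.lG g := by
  rw [dG, wordDist, inv_mul_cancel_left]

lemma exists_loxodromic : ∃ (k : K) (C : ℝ), 0 ≤ C ∧
    (∀ n : ℕ, (n : ℝ) ≤ E.lG (E.ι k ^ n)) ∧ ∀ n : ℕ, (n : ℝ) ≤ C * E.lK (k ^ n) := by
  have := E.infinite_K
  have hinf : (E.ι.range : Set G).Infinite := by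
    rw [MonoidHom.coe_range]; exact Set.infinite_range_of_injective E.ι_injective
  obtain ⟨_, ⟨k, rfl⟩, hk⟩ := exists_mem_forall_le_wordLength_pow E.genG E.hypG hinf
  obtain ⟨C, hC, hlip⟩ := exists_wordLength_map_le E.genK E.genG E.ι
  refine ⟨k, C, hC, hk, fun n => (hk n).trans ?_⟩
  rw [← map_pow]
  exact hlip (k ^ n)

/- If `⟨k⟩` were coarsely dense in `K`, then every translate of it in `G` would stay close to it, so
it would be coarsely dense in `G` and `Q` would be finite. -/
lemma exists_le_dK_zpow {k : K} (hk : ∀ n : ℕ, (n : ℝ) ≤ E.lG (E.ι k ^ n)) (r : ℝ) :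
    ∃ y : K, ∀ z : ℤ, r ≤ E.dK y (k ^ z) := by
  by_contra! hno
  obtain ⟨L, hL, hlip⟩ := exists_wordLength_map_le E.genK E.genG E.ι
  obtain ⟨R, hR⟩ := exists_wordDist_zpow_le_of_forall E.genG E.hypG hk
  have hdense (g : G) : ∃ z : ℤ, E.dG g (E.ι k ^ z) ≤ R := by
    refine hR g (E.lG g + L * r) fun j => ?_
    obtain ⟨y, hy⟩ := E.exists_ι_eq (g := g * E.ι k ^ j * g⁻¹) (by simp)
    obtain ⟨z, hz⟩ := hno y
    have hyz : E.dG (E.ι y) (E.ι k ^ z) ≤ L * r := by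
      rw [← map_zpow, dG, wordDist_map]
      exact (hlip _).trans (mul_le_mul_of_nonneg_left hz.le hL)
    have hyg : E.dG (E.ι y * g) (E.ι y) = E.lG g := by rw [E.distG.symm, dG_mul_right]
    refine ⟨z, ?_⟩
    rw [show g * E.ι k ^ j = E.ι y * g by rw [hy]; group]
    linarith [E.distG.tri (E.ι y * g) (E.ι y) (E.ι k ^ z)]
  refine (Set.infinite_univ_iff.2 E.infinite_Q)
    (((finite_setOf_cast_wordLength_le E.genG R).image E.π).subset fun q _ => ?_)
  obtain ⟨g, rfl⟩ := E.π_surjective q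
  obtain ⟨z, hz⟩ := hdense g
  rw [E.distG.symm] at hz
  exact ⟨(E.ι k ^ z)⁻¹ * g, hz, by simp⟩

theorem exists_triples : ∃ c : ℝ, 0 ≤ c ∧ ∀ n : ℕ, ∃ a b e : K,
    (n : ℝ) ≤ E.lK a ∧ (n : ℝ) ≤ E.lK b ∧ (n : ℝ) ≤ E.lK e ∧
      gprod E.dK 1 a b ≤ c ∧ gprod E.dK 1 a e ≤ c ∧ gprod E.dK 1 b e ≤ c := by
  obtain ⟨k, C, hC, hkG, hkK⟩ := E.exists_loxodromic
  obtain ⟨D, -, hbtw, -⟩ := exists_coarseBtw_zpow E.genK E.hypK hC hkK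
  obtain ⟨c, hc, hprod⟩ := exists_gprod_zpow_le E.genK E.hypK hC hkK
  refine ⟨max c D, hc.trans (le_max_left c D), fun n => ?_⟩
  obtain ⟨y, hy⟩ := E.exists_le_dK_zpow hkG n
  obtain ⟨a, ha, hak⟩ := hprod n y hy
  obtain ⟨N, hN⟩ := exists_nat_gt (C * n)
  have hlen : (n : ℝ) ≤ E.lK (k ^ N) := by
    by_contra! h
    linarith [hkK N, mul_le_mul_of_nonneg_left h.le hC]
  refine ⟨a, k ^ (N : ℤ), k ^ (-(N : ℤ)), ha, ?_, ?_, (hak _).trans (le_max_left c D),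
    (hak _).trans (le_max_left c D), le_trans ?_ (le_max_right c D)⟩
  · rwa [zpow_natCast]
  · rwa [zpow_neg, zpow_natCast, lK, wordLength_inv E.genK]
  · rw [gprod_comm E.distK, gprod_le_iff_coarseBtw E.distK, ← zpow_zero k]
    exact hbtw _ _ _ (by omega) (by omega)

end HypExtension

section CoarseCenter

variable {X Y : Type*} {d : X → X → ℝ} {δ c c' : ℝ} {m m' x y z : X}

/-- `m` is a coarse center of the triangle `x`, `y`, `z`: it lies coarsely on all three sides. -/
structure IsCoarseCenter (d : X → X → ℝ) (c : ℝ) (x y z m : X) : Prop where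
  btw₁₂ : CoarseBtw d c x m y
  btw₁₃ : CoarseBtw d c x m z
  btw₂₃ : CoarseBtw d c y m z

lemma IsCoarseCenter.mono (h : IsCoarseCenter d c x y z m) (hc : c ≤ c') :
    IsCoarseCenter d c' x y z m :=
  ⟨h.btw₁₂.mono hc, h.btw₁₃.mono hc, h.btw₂₃.mono hc⟩

lemma exists_isCoarseCenter (hd : IsGraphDist d) (hy : IsHypWith d δ) (x y z : X) :
    ∃ m, IsCoarseCenter d (δ + 1) x y z m := by
  obtain ⟨N, g, rfl, rfl, hg⟩ := hd.exists_geodesic x y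
  set t := (d (g 0) (g N) + d (g 0) z - d (g N) z) / 2 with ht
  have ht0 : 0 ≤ t := by linarith [hd.tri (g N) (g 0) z, hd.symm (g 0) (g N)]
  have htN : t ≤ N := by linarith [hd.tri (g 0) (g N) z, hg.dist_endpoints]
  have hfloor : (⌊t⌋₊ : ℝ) ≤ t := Nat.floor_le ht0
  have hfloor' : t < ⌊t⌋₊ + 1 := Nat.lt_floor_add_one _
  have hsN : ⌊t⌋₊ ≤ N := by exact_mod_cast hfloor.trans htN
  have hfirst := hg 0 ⌊t⌋₊ (Nat.zero_le _) hsN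
  have hlast := hg ⌊t⌋₊ N hsN le_rfl
  push_cast at hfirst
  have hz : d (g ⌊t⌋₊) z ≤ d (g 0) z - ⌊t⌋₊ + 2 * δ := by
    rcases hy.four_point z (g 0) (g ⌊t⌋₊) (g N) with h | h <;>
      linarith [hd.symm (g N) z, hg.dist_endpoints]
  have hδ := hy.nonneg
  refine ⟨g ⌊t⌋₊, ?_, ?_, ?_⟩ <;> unfold CoarseBtw <;>
    linarith [hd.symm (g N) (g ⌊t⌋₊), hg.dist_endpoints]

lemma CoarseBtw.dist_le (hd : IsPseudoDist d) (hy : IsHypWith d δ) (h : CoarseBtw d c x m y)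
    (h' : CoarseBtw d c x m' y) : d m m' ≤ |d x m - d x m'| + 2 * c + 2 * δ := by
  have hle := le_abs_self (d x m - d x m')
  have hge := neg_abs_le (d x m - d x m')
  unfold CoarseBtw at *
  rcases hy.four_point m' x m y with h | h <;> linarith [hd.symm m' y]

lemma IsCoarseCenter.abs_dist_sub_le (hd : IsPseudoDist d) (h : IsCoarseCenter d c x y z m)
    (h' : IsCoarseCenter d c x y z m') : |d x m - d x m'| ≤ 3 * c := by
  have bounds (w : X) (hw : IsCoarseCenter d c x y z w) :
      d x y + d x z - d y z - 2 * c ≤ 2 * d x w ∧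
        2 * d x w ≤ d x y + d x z - d y z + 4 * c := by
    obtain ⟨hxy, hxz, hyz⟩ := hw
    unfold CoarseBtw at *
    constructor <;> linarith [hd.tri x w y, hd.tri x w z, hd.tri y w z, hd.symm w y]
  rw [abs_le]
  constructor <;> linarith [bounds m h, bounds m' h']

lemma IsCoarseCenter.dist_le (hd : IsPseudoDist d) (hy : IsHypWith d δ)
    (h : IsCoarseCenter d c x y z m) (h' : IsCoarseCenter d c x y z m') :
    d m m' ≤ 5 * c + 2 * δ := by
  linarith [h.btw₁₂.dist_le hd hy h'.btw₁₂, h.abs_dist_sub_le hd h']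

lemma dist_map_le_of_dist_le_one {d' : Y → Y → ℝ} {C : ℝ} {f : X → Y} (hd : IsGraphDist d)
    (hd' : IsPseudoDist d') (h : ∀ x y, d x y ≤ 1 → d' (f x) (f y) ≤ C) (x y : X) :
    d' (f x) (f y) ≤ C * d x y := by
  obtain ⟨N, g, rfl, rfl, hg⟩ := hd.exists_geodesic x y
  have hstep : ∀ i < N, d' (f (g i)) (f (g (i + 1))) ≤ C := fun i hi =>
    h _ _ (by rw [hg i (i + 1) (by omega) hi]; push_cast; linarith)
  simpa [hg.dist_endpoints] using
    dist_le_mul_of_step_le (γ := fun i => f (g i)) hd' hstep (Nat.zero_le N) le_rfl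

end CoarseCenter

namespace HypExtension

variable {K G Q : Type*} [Group K] [Group G] [Group Q] (E : HypExtension K G Q)

/-- A left inverse of `ι`, with junk values off the kernel of `π`. -/
noncomputable def ιInv : G → K := Function.invFun E.ι

@[simp]
lemma ιInv_ι (k : K) : E.ιInv (E.ι k) = k := Function.leftInverse_invFun E.ι_injective k

lemma ι_ιInv {g : G} (h : E.π g = 1) : E.ι (E.ιInv g) = g := by
  obtain ⟨k, rfl⟩ := E.exists_ι_eq h
  rw [ιInv_ι]

/-- The word metric of `K`, transported to the coset `π ⁻¹' {q}`. It is the pullback of `dK` along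
a map defined on all of `G`, so that it is a pseudometric on `G`; it is meaningful only on the
fiber over `q`. -/
noncomputable def fiberDist (q : Q) (x y : G) : ℝ :=
  E.dK (E.ιInv ((Function.surjInv E.π_surjective q)⁻¹ * x))
    (E.ιInv ((Function.surjInv E.π_surjective q)⁻¹ * y))

lemma isPseudoDist_fiberDist (q : Q) : IsPseudoDist (E.fiberDist q) where
  self _ := E.distK.self _
  symm _ _ := E.distK.symm _ _
  tri _ _ _ := E.distK.tri _ _ _

lemma isHypWith_fiberDist (q : Q) : IsHypWith (E.fiberDist q) E.δ where
  nonneg := E.hypK.nonneg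
  four_point _ _ _ _ := E.hypK.four_point _ _ _ _

lemma fiberDist_mul_ι {x : G} {q : Q} (hx : E.π x = q) (a b : K) :
    E.fiberDist q (x * E.ι a) (x * E.ι b) = E.dK a b := by
  obtain ⟨k, hk⟩ := E.exists_eq_mul_ι ((Function.surjInv_eq E.π_surjective q).trans hx.symm)
  have hcoord (a : K) : E.ιInv ((Function.surjInv E.π_surjective q)⁻¹ * (x * E.ι a)) = k * a := by
    rw [hk, mul_assoc, inv_mul_cancel_left, ← map_mul, ιInv_ι]
  rw [fiberDist, hcoord, hcoord, dK, wordDist_mul_left]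

lemma fiberDist_eq_lK {x y : G} {q : Q} (hx : E.π x = q) (hy : E.π y = q) :
    E.fiberDist q x y = E.lK (E.ιInv (x⁻¹ * y)) := by
  obtain ⟨k, rfl⟩ := E.exists_eq_mul_ι (hx.trans hy.symm)
  have h := E.fiberDist_mul_ι hx 1 k
  rw [map_one, mul_one, dK, wordDist_one_left] at h
  rw [h, inv_mul_cancel_left, ιInv_ι]

lemma coarseBtw_fiberDist_mul_ι {x : G} {q : Q} (hx : E.π x = q) {c : ℝ} {a m b : K} :
    CoarseBtw (E.fiberDist q) c (x * E.ι a) (x * E.ι m) (x * E.ι b) ↔ CoarseBtw E.dK c a m b := by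
  simp only [CoarseBtw, E.fiberDist_mul_ι hx]

lemma exists_fiber_geodesic {x y : G} {q : Q} (hx : E.π x = q) (hy : E.π y = q) :
    ∃ (n : ℕ) (p : ℕ → G), p 0 = x ∧ p n = y ∧ (∀ i, E.π (p i) = q) ∧
      IsDiscreteGeodesic (E.fiberDist q) p n := by
  obtain ⟨k, rfl⟩ := E.exists_eq_mul_ι (hx.trans hy.symm)
  obtain ⟨n, p, h0, hn, hp⟩ := E.graphK.exists_geodesic 1 k
  refine ⟨n, fun i => x * E.ι (p i), by simp [h0], by simp [hn], fun i => by simp [hx], ?_⟩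
  intro i j hij hj
  rw [E.fiberDist_mul_ι hx, hp i j hij hj]

lemma exists_dG_le_fiberDist : ∃ C : ℝ, 0 ≤ C ∧ ∀ (q : Q) (x y : G), E.π x = q → E.π y = q →
    E.dG x y ≤ C * E.fiberDist q x y := by
  obtain ⟨C, hC, hlip⟩ := exists_wordLength_map_le E.genK E.genG E.ι
  refine ⟨C, hC, fun q x y hx hy => ?_⟩
  have h := hlip (E.ιInv (x⁻¹ * y))
  rw [E.ι_ιInv (by simp [hx, hy])] at h
  rwa [E.fiberDist_eq_lK hx hy]

lemma exists_fiberDist_le (r : ℝ) : ∃ w : ℝ, 0 ≤ w ∧ ∀ (q : Q) (x y : G), E.π x = q → E.π y = q →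
    E.dG x y ≤ r → E.fiberDist q x y ≤ w := by
  obtain ⟨w, hw⟩ := ((finite_setOf_cast_wordLength_le E.genG r).image
    fun g => E.lK (E.ιInv g)).bddAbove
  refine ⟨max w 0, le_max_right _ _, fun q x y hx hy h => ?_⟩
  rw [E.fiberDist_eq_lK hx hy]
  exact (hw ⟨x⁻¹ * y, h, rfl⟩).trans (le_max_left _ _)

lemma exists_dQ_π_le : ∃ C : ℝ, 0 ≤ C ∧ ∀ x y : G, E.dQ (E.π x) (E.π y) ≤ C * E.dG x y := by
  obtain ⟨C, hC, hlip⟩ := exists_wordLength_map_le E.genG E.genQ E.π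
  refine ⟨C, hC, fun x y => ?_⟩
  rw [dQ, wordDist_map]
  exact hlip _

/-- The automorphism of `K` induced by conjugation by `g⁻¹`. -/
noncomputable def conj (g : G) : K →* K :=
  MonoidHom.mk' (fun k => E.ιInv (g⁻¹ * E.ι k * g)) fun a b => by
    apply E.ι_injective
    rw [map_mul E.ι (E.ιInv _) (E.ιInv _), E.ι_ιInv (by simp), E.ι_ιInv (by simp),
      E.ι_ιInv (by simp), map_mul]
    group

lemma ι_conj (g : G) (k : K) : E.ι (E.conj g k) = g⁻¹ * E.ι k * g :=
  E.ι_ιInv (by simp)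

lemma conj_mul (g h : G) (k : K) : E.conj (g * h) k = E.conj h (E.conj g k) := by
  apply E.ι_injective
  simp only [ι_conj]; group

lemma conj_inv_conj (g : G) (k : K) : E.conj g⁻¹ (E.conj g k) = k := by
  apply E.ι_injective
  simp only [ι_conj]; group

lemma conj_ι (k a : K) : E.conj (E.ι k) a = k⁻¹ * a * k := by
  apply E.ι_injective
  simp only [ι_conj, map_mul, map_inv]

lemma exists_lK_conj_le (r : ℝ) :
    ∃ l : ℝ, 0 ≤ l ∧ ∀ g, E.lG g ≤ r → ∀ k, E.lK (E.conj g k) ≤ l * E.lK k := by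
  choose C _ hlip using fun g => exists_wordLength_map_le E.genK E.genK (E.conj g)
  obtain ⟨w, hw⟩ := ((finite_setOf_cast_wordLength_le E.genG r).image C).bddAbove
  refine ⟨max w 0, le_max_right _ _, fun g hg k => (hlip g k).trans ?_⟩
  gcongr
  exact (hw ⟨g, hg, rfl⟩).trans (le_max_left _ _)

lemma exists_coarseBtw_conj {c : ℝ} (hc : 0 ≤ c) (r : ℝ) : ∃ c' : ℝ, 0 ≤ c' ∧ ∀ g, E.lG g ≤ r →
    ∀ a m b, CoarseBtw E.dK c a m b →
      CoarseBtw E.dK c' (E.conj g a) (E.conj g m) (E.conj g b) := by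
  obtain ⟨l, hl, hconj⟩ := E.exists_lK_conj_le r
  obtain ⟨D, hD, hbtw⟩ := CoarseBtw.exists_map_of_bilipschitz E.hypK.nonneg hl hc
  refine ⟨D, hD, fun g hg a m b => hbtw E.dK E.graphK E.dK E.graphK E.hypK (E.conj g)
    (fun x y => ?_) (fun x y => ?_) a m b⟩ <;> rw [dK, wordDist_map, wordDist]
  · linarith [hconj g hg (x⁻¹ * y)]
  · have h := hconj g⁻¹ (by rwa [lG, wordLength_inv E.genG]) (E.conj g (x⁻¹ * y))
    rw [conj_inv_conj] at h
    linarith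

/-- `m` lies coarsely between `u` and `v` inside the fiber over `q`. -/
structure FiberBtw (q : Q) (c : ℝ) (u m v : G) : Prop where
  π_left : E.π u = q
  π_mid : E.π m = q
  π_right : E.π v = q
  coarseBtw : CoarseBtw (E.fiberDist q) c u m v

variable {E}

lemma FiberBtw.mono {q : Q} {c c' : ℝ} {u m v : G} (h : E.FiberBtw q c u m v) (hc : c ≤ c') :
    E.FiberBtw q c' u m v :=
  ⟨h.π_left, h.π_mid, h.π_right, h.coarseBtw.mono hc⟩

lemma FiberBtw.symm {q : Q} {c : ℝ} {u m v : G} (h : E.FiberBtw q c u m v) :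
    E.FiberBtw q c v m u :=
  ⟨h.π_right, h.π_mid, h.π_left, h.coarseBtw.symm (E.isPseudoDist_fiberDist q)⟩

/-- `m` is a coarse center of the triangle `x`, `y`, `z` inside the fiber over `q`. -/
structure IsFiberCenter (E : HypExtension K G Q) (q : Q) (c : ℝ) (x y z m : G) : Prop where
  btw₁₂ : E.FiberBtw q c x m y
  btw₁₃ : E.FiberBtw q c x m z
  btw₂₃ : E.FiberBtw q c y m z

lemma IsFiberCenter.mono {q : Q} {c c' : ℝ} {x y z m : G} (h : E.IsFiberCenter q c x y z m)
    (hc : c ≤ c') : E.IsFiberCenter q c' x y z m :=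
  ⟨h.btw₁₂.mono hc, h.btw₁₃.mono hc, h.btw₂₃.mono hc⟩

lemma IsFiberCenter.fiberDist_le {q : Q} {c c' : ℝ} {x y z m m' : G}
    (h : E.IsFiberCenter q c x y z m) (h' : E.IsFiberCenter q c' x y z m') :
    E.fiberDist q m m' ≤ 5 * max c c' + 2 * E.δ := by
  replace h := h.mono (le_max_left c c')
  replace h' := h'.mono (le_max_right c c')
  exact IsCoarseCenter.dist_le (E.isPseudoDist_fiberDist q) (E.isHypWith_fiberDist q)
    ⟨h.btw₁₂.coarseBtw, h.btw₁₃.coarseBtw, h.btw₂₃.coarseBtw⟩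
    ⟨h'.btw₁₂.coarseBtw, h'.btw₁₃.coarseBtw, h'.btw₂₃.coarseBtw⟩

variable (E)

lemma exists_isFiberCenter {x y z : G} {q : Q} (hx : E.π x = q) (hy : E.π y = q)
    (hz : E.π z = q) : ∃ m, E.IsFiberCenter q (E.δ + 1) x y z m := by
  obtain ⟨a, rfl⟩ := E.exists_eq_mul_ι (hx.trans hy.symm)
  obtain ⟨b, rfl⟩ := E.exists_eq_mul_ι (hx.trans hz.symm)
  obtain ⟨m, h₁₂, h₁₃, h₂₃⟩ := exists_isCoarseCenter E.graphK E.hypK 1 a b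
  rw [← E.coarseBtw_fiberDist_mul_ι hx] at h₁₂ h₁₃ h₂₃
  rw [map_one, mul_one] at h₁₂ h₁₃
  have hm : E.π (x * E.ι m) = q := by simp [hx]
  exact ⟨x * E.ι m, ⟨hx, hm, hy, h₁₂⟩, ⟨hx, hm, hz, h₁₃⟩, ⟨hy, hm, hz, h₂₃⟩⟩

lemma exists_fiberBtw_mul_right {c : ℝ} (hc : 0 ≤ c) (r : ℝ) : ∃ c' : ℝ, 0 ≤ c' ∧ ∀ g, E.lG g ≤ r →
    ∀ q u m v, E.FiberBtw q c u m v → E.FiberBtw (q * E.π g) c' (u * g) (m * g) (v * g) := by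
  obtain ⟨c', hc', hconj⟩ := E.exists_coarseBtw_conj hc r
  refine ⟨c', hc', fun g hg q u m v h => ?_⟩
  obtain ⟨hu, hm, hv, hbtw⟩ := h
  obtain ⟨a, rfl⟩ := E.exists_eq_mul_ι (hu.trans hm.symm)
  obtain ⟨b, rfl⟩ := E.exists_eq_mul_ι (hu.trans hv.symm)
  have hug : E.π (u * g) = q * E.π g := by rw [map_mul, hu]
  have hslide (a : K) : u * g * E.ι (E.conj g a) = u * E.ι a * g := by rw [ι_conj]; group
  refine ⟨hug, by simp [hu], by simp [hu], ?_⟩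
  have hone : CoarseBtw E.dK c 1 a b := by
    rwa [← E.coarseBtw_fiberDist_mul_ι hu, map_one, mul_one]
  simpa only [hslide, map_one, mul_one] using
    (E.coarseBtw_fiberDist_mul_ι hug).2 (hconj g hg 1 a b hone)

theorem exists_fiberBtw_of_dG_le {c : ℝ} (hc : 0 ≤ c) (r : ℝ) : ∃ c' : ℝ, 0 ≤ c' ∧
    ∀ q q' u m v u' m' v', E.FiberBtw q c u m v → E.π u' = q' → E.π m' = q' → E.π v' = q' →
      E.dG u u' ≤ r → E.dG m m' ≤ r → E.dG v v' ≤ r → E.FiberBtw q' c' u' m' v' := by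
  obtain ⟨c₁, hc₁, hmul⟩ := E.exists_fiberBtw_mul_right hc r
  obtain ⟨w, hw, hproper⟩ := E.exists_fiberDist_le (r + r)
  refine ⟨c₁ + w + w, by positivity, fun q q' u m v u' m' v' h hu' hm' hv' hu hm hv => ?_⟩
  set g := u⁻¹ * u' with hg
  have hq' : q * E.π g = q' := by simp [hg, hu', h.π_left]
  obtain ⟨-, hmg, hvg, hbtw⟩ := hmul g hu q u m v h
  rw [hq'] at hmg hvg hbtw
  have hnear (x x' : G) (hx : E.π (x * g) = q') (hx' : E.π x' = q') (hxx' : E.dG x x' ≤ r) :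
      E.fiberDist q' (x * g) x' ≤ w := by
    refine hproper _ _ _ hx hx' ?_
    have hxg : E.dG (x * g) x ≤ r := by rw [E.distG.symm, dG_mul_right]; exact hu
    linarith [E.distG.tri (x * g) x x']
  rw [show u * g = u' from mul_inv_cancel_left u u'] at hbtw
  have hd := E.isPseudoDist_fiberDist q'
  exact ⟨hu', hm', hv', ((hbtw.move_mid hd (hnear m m' hmg hm' hm)).move_right hd
    (hnear v v' hvg hv' hv)).mono (by linarith)⟩

theorem exists_dG_le_of_isFiberCenter {c : ℝ} (hc : 0 ≤ c) (r : ℝ) : ∃ D : ℝ, 0 ≤ D ∧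
    ∀ q q' x y z m x' y' z' m', E.IsFiberCenter q c x y z m → E.IsFiberCenter q' c x' y' z' m' →
      E.dG x x' ≤ r → E.dG y y' ≤ r → E.dG z z' ≤ r → E.dG m m' ≤ D := by
  obtain ⟨c₁, -, htransp⟩ := E.exists_fiberBtw_of_dG_le hc r
  obtain ⟨L, hL, hlip⟩ := E.exists_dG_le_fiberDist
  have hbound : 0 ≤ 5 * max c₁ c + 2 * E.δ := by
    linarith [E.hypK.nonneg, le_max_right c₁ c]
  refine ⟨|r| + L * (5 * max c₁ c + 2 * E.δ), by positivity,
    fun q q' x y z m x' y' z' m' h h' hx hy hz => ?_⟩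
  set g := x⁻¹ * x' with hg
  have hmr : E.dG m (m * g) ≤ r := by rw [dG_mul_right]; exact hx
  have hπ : E.π (m * g) = q' := by
    simp [hg, h.btw₁₂.π_mid, h.btw₁₂.π_left, h'.btw₁₂.π_left]
  have hmove {u v u' v' : G} (huv : E.FiberBtw q c u m v) (huv' : E.FiberBtw q' c u' m' v')
      (hu : E.dG u u' ≤ r) (hv : E.dG v v' ≤ r) : E.FiberBtw q' c₁ u' (m * g) v' :=
    htransp q q' _ _ _ _ _ _ huv huv'.π_left hπ huv'.π_right hu hmr hv
  have hcen : E.IsFiberCenter q' c₁ x' y' z' (m * g) :=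
    ⟨hmove h.btw₁₂ h'.btw₁₂ hx hy, hmove h.btw₁₃ h'.btw₁₃ hx hz, hmove h.btw₂₃ h'.btw₂₃ hy hz⟩
  linarith [hlip q' _ _ hπ h'.btw₁₂.π_mid, mul_le_mul_of_nonneg_left (hcen.fiberDist_le h') hL,
    E.distG.tri m (m * g) m', le_abs_self r]

/-- `τ` is a `C`-Lipschitz section of `π`. -/
structure IsLipSection (C : ℝ) (τ : Q → G) : Prop where
  π_apply : ∀ q, E.π (τ q) = q
  lip : ∀ q q', E.dG (τ q) (τ q') ≤ C * E.dQ q q'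

variable {E}

lemma IsLipSection.mono {C C' : ℝ} {τ : Q → G} (h : E.IsLipSection C τ) (hC : C ≤ C') :
    E.IsLipSection C' τ :=
  ⟨h.π_apply, fun q q' => (h.lip q q').trans
    (mul_le_mul_of_nonneg_right hC (E.distQ.nonneg _ _))⟩

lemma IsLipSection.dG_le {C : ℝ} {τ : Q → G} (h : E.IsLipSection C τ) (hC : 0 ≤ C) {q q' : Q}
    (hq : E.dQ q q' ≤ 1) : E.dG (τ q) (τ q') ≤ C :=
  (h.lip q q').trans (mul_le_of_le_one_right hC hq)

variable (E)

theorem exists_isLipSection_of_isFiberCenter {C c : ℝ} (hC : 0 ≤ C) (hc : 0 ≤ c) :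
    ∃ C' : ℝ, 0 ≤ C' ∧ ∀ τ₁ τ₂ τ₃ τ : Q → G, E.IsLipSection C τ₁ → E.IsLipSection C τ₂ →
      E.IsLipSection C τ₃ → (∀ q, E.IsFiberCenter q c (τ₁ q) (τ₂ q) (τ₃ q) (τ q)) →
      E.IsLipSection C' τ := by
  obtain ⟨C', hC', hdist⟩ := E.exists_dG_le_of_isFiberCenter hc C
  exact ⟨C', hC', fun τ₁ τ₂ τ₃ τ h₁ h₂ h₃ hcen => ⟨fun q => (hcen q).btw₁₂.π_mid,
    dist_map_le_of_dist_le_one E.graphQ E.distG fun q q' hq => hdist q q' _ _ _ _ _ _ _ _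
      (hcen q) (hcen q') (h₁.dG_le hC hq) (h₂.dG_le hC hq) (h₃.dG_le hC hq)⟩⟩

end HypExtension

section Perturb

variable {X : Type*} {d : X → X → ℝ} {δ c e : ℝ} {x y z x' y' z' m : X}

lemma CoarseBtw.of_dist_le (hd : IsPseudoDist d) (hy : IsHypWith d δ) (hxx' : d x x' ≤ e)
    (hyy' : d y y' ≤ e) (h : CoarseBtw d c x m y) (hx : c + e + 2 * δ < d m x)
    (hy' : c + e + 2 * δ < d m y) : CoarseBtw d (c + 2 * δ) x' m y' := by
  rw [← gprod_le_iff_coarseBtw hd] at h ⊢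
  exact hy.gprod_le_of_dist_le hd hxx' hyy' h hx hy'

lemma IsCoarseCenter.of_dist_le (hd : IsPseudoDist d) (hy : IsHypWith d δ)
    (hxx' : d x x' ≤ e) (hyy' : d y y' ≤ e) (hzz' : d z z' ≤ e)
    (h : IsCoarseCenter d c x y z m) (hx : c + e + 2 * δ < d m x) (hy' : c + e + 2 * δ < d m y)
    (hz : c + e + 2 * δ < d m z) : IsCoarseCenter d (c + 2 * δ) x' y' z' m :=
  ⟨h.btw₁₂.of_dist_le hd hy hxx' hyy' hx hy', h.btw₁₃.of_dist_le hd hy hxx' hzz' hx hz,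
    h.btw₂₃.of_dist_le hd hy hyy' hzz' hy' hz⟩

lemma isCoarseCenter_wordDist_mul_left {Γ : Type*} [Group Γ] {S : Set Γ} (g x y z m : Γ) :
    IsCoarseCenter (wordDist S) c (g * x) (g * y) (g * z) (g * m) ↔
      IsCoarseCenter (wordDist S) c x y z m := by
  refine ⟨fun ⟨h₁₂, h₁₃, h₂₃⟩ => ?_, fun ⟨h₁₂, h₁₃, h₂₃⟩ => ?_⟩
  · rw [coarseBtw_wordDist_mul_left] at h₁₂ h₁₃ h₂₃
    exact ⟨h₁₂, h₁₃, h₂₃⟩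
  · rw [← coarseBtw_wordDist_mul_left g] at h₁₂ h₁₃ h₂₃
    exact ⟨h₁₂, h₁₃, h₂₃⟩

end Perturb

namespace HypExtension

open Filter

variable {K G Q : Type*} [Group K] [Group G] [Group Q] (E : HypExtension K G Q)

/-- A sequence of triangles in `K` whose corners tend to infinity, while the identity remains a
coarse center. It stands for an ideal triangle with three distinct vertices in `∂K`. -/
structure IsIdealTriangle (c : ℝ) (T : Fin 3 → ℕ → K) : Prop where
  le_lK : ∀ i (n : ℕ), (n : ℝ) ≤ E.lK (T i n)
  isCoarseCenter : ∀ n, IsCoarseCenter E.dK c (T 0 n) (T 1 n) (T 2 n) 1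

/-- `k` is a coarse center of the ideal triangle `T` conjugated by `m`. The ultrafilter makes
limits of centers exist. -/
def IsIdealCenter (T : Fin 3 → ℕ → K) (c : ℝ) (m : G) (k : K) : Prop :=
  ∀ᶠ n in (hyperfilter ℕ : Filter ℕ),
    IsCoarseCenter E.dK c (E.conj m (T 0 n)) (E.conj m (T 1 n)) (E.conj m (T 2 n)) k

lemma exists_isIdealTriangle : ∃ (c : ℝ) (T : Fin 3 → ℕ → K), 0 ≤ c ∧ E.IsIdealTriangle c T := by
  obtain ⟨c, hc, htri⟩ := E.exists_triples
  simp only [gprod_le_iff_coarseBtw E.distK] at htri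
  choose a b e ha hb he hab hae hbe using htri
  refine ⟨c, ![a, b, e], hc, fun i n => ?_, fun n => ⟨hab n, hae n, hbe n⟩⟩
  fin_cases i
  exacts [ha n, hb n, he n]

variable {E} {c c' C : ℝ} {T : Fin 3 → ℕ → K} {m : G} {k k' : K}

lemma IsIdealTriangle.eventually_lt_dK_conj (hT : E.IsIdealTriangle C T) (m : G) (R : ℝ) :
    ∀ᶠ n in (hyperfilter ℕ : Filter ℕ), ∀ i, R < E.dK 1 (E.conj m (T i n)) := by
  obtain ⟨l, hl, hconj⟩ := E.exists_lK_conj_le (E.lG m⁻¹)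
  obtain ⟨N, hN⟩ := exists_nat_gt (l * R)
  filter_upwards [(eventually_ge_atTop N).filter_mono Nat.hyperfilter_le_atTop] with n hn i
  have h := hconj m⁻¹ le_rfl (E.conj m (T i n))
  have hNn : (N : ℝ) ≤ n := by exact_mod_cast hn
  rw [conj_inv_conj] at h
  rw [dK, wordDist_one_left]
  by_contra! hle
  linarith [mul_le_mul_of_nonneg_left hle hl, hT.le_lK i n]

lemma IsIdealCenter.mul_ι (hT : E.IsIdealTriangle C T) (h : E.IsIdealCenter T c m k) :
    E.IsIdealCenter T (c + 2 * E.δ) (m * E.ι k) 1 := by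
  have hd := E.distK
  filter_upwards [h, hT.eventually_lt_dK_conj m (c + E.lK k + 2 * E.δ + E.lK k)] with n hn hfar
  have hn' := (isCoarseCenter_wordDist_mul_left k⁻¹ _ _ _ _).2 hn
  rw [inv_mul_cancel] at hn'
  simp only [conj_mul, conj_ι]
  have hnear (x : K) : E.dK (k⁻¹ * x) (k⁻¹ * x * k) ≤ E.lK k := by
    rw [dK, wordDist, inv_mul_cancel_left]
  have hfar' (i : Fin 3) : c + E.lK k + 2 * E.δ < E.dK 1 (k⁻¹ * E.conj m (T i n)) := by
    have hleft := wordDist_mul_left (S := E.SK) k⁻¹ k (E.conj m (T i n))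
    rw [inv_mul_cancel] at hleft
    rw [dK, hleft]
    linarith [hfar i, hd.tri 1 k (E.conj m (T i n)), wordDist_one_left (S := E.SK) k]
  exact hn'.of_dist_le hd E.hypK (hnear _) (hnear _) (hnear _) (hfar' 0) (hfar' 1) (hfar' 2)

lemma IsIdealCenter.of_mul_ι (hT : E.IsIdealTriangle C T)
    (h : E.IsIdealCenter T c (m * E.ι k) 1) : E.IsIdealCenter T (c + 2 * E.δ) m k := by
  have hd := E.distK
  filter_upwards [h, hT.eventually_lt_dK_conj (m * E.ι k) (c + E.lK k + 2 * E.δ)] with n hn hfar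
  simp only [conj_mul, conj_ι] at hn hfar
  have hnear (x : K) : E.dK (k⁻¹ * x * k) (k⁻¹ * x) ≤ E.lK k := by
    rw [hd.symm, dK, wordDist, inv_mul_cancel_left]
  have hcen := hn.of_dist_le hd E.hypK (hnear _) (hnear _) (hnear _) (hfar 0) (hfar 1) (hfar 2)
  simpa using (isCoarseCenter_wordDist_mul_left k _ _ _ _).2 hcen

lemma IsIdealCenter.dK_le (h : E.IsIdealCenter T c m k) (h' : E.IsIdealCenter T c' m k') :
    E.dK k k' ≤ 5 * max c c' + 2 * E.δ := by
  obtain ⟨n, hn, hn'⟩ := (h.and h').exists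
  exact (hn.mono (le_max_left c c')).dist_le E.distK E.hypK (hn'.mono (le_max_right c c'))

lemma exists_isIdealCenter_mul (T : Fin 3 → ℕ → K) (hc : 0 ≤ c) (r : ℝ) : ∃ c' : ℝ, 0 ≤ c' ∧
    ∀ g, E.lG g ≤ r → ∀ m, E.IsIdealCenter T c m 1 → E.IsIdealCenter T c' (m * g) 1 := by
  obtain ⟨c', hc', hconj⟩ := E.exists_coarseBtw_conj hc r
  refine ⟨c', hc', fun g hg m h => ?_⟩
  filter_upwards [h] with n hn
  have hbtw (x y : K) (hxy : CoarseBtw E.dK c x 1 y) := hconj g hg x 1 y hxy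
  simp only [map_one] at hbtw
  simp only [conj_mul]
  exact ⟨hbtw _ _ hn.btw₁₂, hbtw _ _ hn.btw₁₃, hbtw _ _ hn.btw₂₃⟩

/- The centers of the conjugated triangles stay in a finite ball, so one of them is attained for
almost all `n`. -/
lemma IsIdealTriangle.exists_isIdealCenter (hT : E.IsIdealTriangle C T) (hC : 0 ≤ C) (g : G) :
    ∃ k, E.IsIdealCenter T (E.δ + 1) g k := by
  obtain ⟨c', -, hconj⟩ := E.exists_coarseBtw_conj hC (E.lG g)
  have hone (n : ℕ) : IsCoarseCenter E.dK c' (E.conj g (T 0 n)) (E.conj g (T 1 n))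
      (E.conj g (T 2 n)) 1 := by
    have hbtw (x y : K) (hxy : CoarseBtw E.dK C x 1 y) := hconj g le_rfl x 1 y hxy
    simp only [map_one] at hbtw
    have h := hT.isCoarseCenter n
    exact ⟨hbtw _ _ h.btw₁₂, hbtw _ _ h.btw₁₃, hbtw _ _ h.btw₂₃⟩
  choose k hk using fun n => exists_isCoarseCenter E.graphK E.hypK (E.conj g (T 0 n))
    (E.conj g (T 1 n)) (E.conj g (T 2 n))
  set R := 5 * max c' (E.δ + 1) + 2 * E.δ
  have hball (n : ℕ) : E.lK (k n) ≤ R := by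
    have h := ((hone n).mono (le_max_left c' (E.δ + 1))).dist_le E.distK E.hypK
      ((hk n).mono (le_max_right c' (E.δ + 1)))
    rwa [dK, wordDist_one_left] at h
  have hcover : (⋃ x ∈ {x : K | E.lK x ≤ R}, {n | k n = x}) ∈ hyperfilter ℕ := by
    filter_upwards with n
    simp only [Set.mem_iUnion]
    exact ⟨k n, hball n, rfl⟩
  rw [Ultrafilter.finite_biUnion_mem_iff (finite_setOf_cast_wordLength_le E.genK R)] at hcover
  obtain ⟨x, -, hx⟩ := hcover
  refine ⟨x, ?_⟩
  filter_upwards [hx] with n (hn : k n = x)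
  exact hn ▸ hk n

lemma IsIdealTriangle.exists_π_eq (hT : E.IsIdealTriangle C T) (hC : 0 ≤ C) (q : Q) :
    ∃ m, E.π m = q ∧ E.IsIdealCenter T (E.δ + 1 + 2 * E.δ) m 1 := by
  obtain ⟨g, rfl⟩ := E.π_surjective q
  obtain ⟨k, hk⟩ := hT.exists_isIdealCenter hC g
  exact ⟨g * E.ι k, by simp, hk.mul_ι hT⟩

variable (E)

/- Over each `q` pick an element `m` such that the identity is a center of the ideal triangle
conjugated by `m`. -/
theorem exists_isLipSection : ∃ (C : ℝ) (σ : Q → G), 0 ≤ C ∧ E.IsLipSection C σ := by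
  obtain ⟨c₀, T, hc₀, hT⟩ := E.exists_isIdealTriangle
  choose σ hπ hcen using hT.exists_π_eq hc₀
  have hδ := E.hypK.nonneg
  set c := E.δ + 1 + 2 * E.δ
  obtain ⟨r, hr⟩ := ((finite_setOf_cast_wordLength_le E.genQ 1).image fun q => E.lG (σ q)).bddAbove
  obtain ⟨c₂, -, hmul⟩ := exists_isIdealCenter_mul (E := E) T (c := c) (by positivity) r
  obtain ⟨L, hL, hlip⟩ := exists_wordLength_map_le E.genK E.genG E.ι
  set B := 5 * max c₂ (c + 2 * E.δ) + 2 * E.δ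
  have hB : 0 ≤ B := by
    linarith [le_max_right c₂ (c + 2 * E.δ)]
  refine ⟨|r| + L * B, σ, add_nonneg (abs_nonneg r) (mul_nonneg hL hB), hπ,
    dist_map_le_of_dist_le_one E.graphQ E.distG fun q q' hq => ?_⟩
  set g := σ (q⁻¹ * q') with hg
  have hgr : E.lG g ≤ r := hr ⟨q⁻¹ * q', hq, rfl⟩
  obtain ⟨k, hk⟩ := E.exists_eq_mul_ι (g := σ q * g) (h := σ q') (by simp [hg, hπ])
  have hkB := (hmul g hgr _ (hcen q)).dK_le (.of_mul_ι hT (hk ▸ hcen q'))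
  rw [dK, wordDist_one_left] at hkB
  have hfirst : E.dG (σ q) (σ q * g) ≤ |r| := by
    rw [dG_mul_right]; exact hgr.trans (le_abs_self r)
  have hsecond : E.dG (σ q * g) (σ q') ≤ L * B := by
    rw [hk, dG_mul_right]; exact (hlip k).trans (mul_le_mul_of_nonneg_left hkB hL)
  linarith [E.distG.tri (σ q) (σ q * g) (σ q')]

lemma exists_isLipSection_one :
    ∃ (C : ℝ) (σ : Q → G), 0 ≤ C ∧ E.IsLipSection C σ ∧ σ 1 = 1 := by
  obtain ⟨C, σ, hC, hσ⟩ := E.exists_isLipSection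
  have hone : E.π (σ 1) = 1 := hσ.π_apply 1
  refine ⟨C, fun q => (σ 1)⁻¹ * σ q, hC, ⟨fun q => by simp [hone, hσ.π_apply], fun p q => ?_⟩,
    by simp⟩
  rw [dG, wordDist_mul_left]
  exact hσ.lip p q

/-- The Lipschitz constant of `baseLeaf`. -/
noncomputable def leafConst : ℝ := E.exists_isLipSection_one.choose

/-- A Lipschitz section of `π` through the identity. -/
noncomputable def baseLeaf : Q → G := E.exists_isLipSection_one.choose_spec.choose

lemma leafConst_nonneg : 0 ≤ E.leafConst :=
  E.exists_isLipSection_one.choose_spec.choose_spec.1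

lemma isLipSection_baseLeaf : E.IsLipSection E.leafConst E.baseLeaf :=
  E.exists_isLipSection_one.choose_spec.choose_spec.2.1

lemma baseLeaf_one : E.baseLeaf 1 = 1 :=
  E.exists_isLipSection_one.choose_spec.choose_spec.2.2

/-- The leaf through `g`: the translate of `baseLeaf` that passes through `g`. -/
noncomputable def leaf (g : G) (q : Q) : G := g * E.baseLeaf ((E.π g)⁻¹ * q)

lemma leaf_π (g : G) : E.leaf g (E.π g) = g := by
  rw [leaf, inv_mul_cancel, baseLeaf_one, mul_one]

lemma leaf_of_π_eq {g : G} {q : Q} (h : E.π g = q) : E.leaf g q = g := by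
  rw [← h, leaf_π]

lemma isLipSection_leaf (g : G) : E.IsLipSection E.leafConst (E.leaf g) where
  π_apply q := by rw [leaf, map_mul, E.isLipSection_baseLeaf.π_apply, mul_inv_cancel_left]
  lip q q' := by
    have h := E.isLipSection_baseLeaf.lip ((E.π g)⁻¹ * q) ((E.π g)⁻¹ * q')
    rw [dQ, wordDist_mul_left] at h
    rwa [leaf, leaf, dG, wordDist_mul_left]

lemma π_leaf (g : G) (q : Q) : E.π (E.leaf g q) = q := (E.isLipSection_leaf g).π_apply q

/- The section is obtained as the fiberwise center of the two given sections and the leaf through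
the point. -/
theorem exists_isLipSection_through {C c : ℝ} (hC : 0 ≤ C) (hc : 0 ≤ c) : ∃ C' : ℝ, 0 ≤ C' ∧
    ∀ τ₁ τ₂ m, E.IsLipSection C τ₁ → E.IsLipSection C τ₂ →
      E.FiberBtw (E.π m) c (τ₁ (E.π m)) m (τ₂ (E.π m)) →
      ∃ τ, E.IsLipSection C' τ ∧ τ (E.π m) = m ∧
        ∀ q, E.FiberBtw q (max c (E.δ + 1)) (τ₁ q) (τ q) (τ₂ q) := by
  obtain ⟨C', hC', hcen_sec⟩ := E.exists_isLipSection_of_isFiberCenter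
    (C := max C E.leafConst) (c := max c (E.δ + 1)) (le_max_of_le_left hC) (le_max_of_le_left hc)
  refine ⟨C', hC', fun τ₁ τ₂ m h₁ h₂ hm => ?_⟩
  have hex (q : Q) : ∃ x, (q = E.π m → x = m) ∧
      E.IsFiberCenter q (max c (E.δ + 1)) (τ₁ q) (τ₂ q) (E.leaf m q) x := by
    by_cases hq : q = E.π m
    · subst hq
      rw [leaf_π]
      have hrefl (x : G) (hx : E.π x = E.π m) : E.FiberBtw (E.π m) (max c (E.δ + 1)) x m m :=
        ⟨hx, rfl, rfl, .refl_right (E.isPseudoDist_fiberDist _) (le_max_of_le_left hc) x m⟩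
      exact ⟨m, fun _ => rfl, hm.mono (le_max_left _ _), hrefl _ (h₁.π_apply _),
        hrefl _ (h₂.π_apply _)⟩
    · obtain ⟨x, hx⟩ := E.exists_isFiberCenter (h₁.π_apply q) (h₂.π_apply q) (E.π_leaf m q)
      exact ⟨x, fun h => absurd h hq, hx.mono (le_max_right _ _)⟩
  choose τ hτm hcen using hex
  exact ⟨τ, hcen_sec τ₁ τ₂ (E.leaf m) τ (h₁.mono (le_max_left _ _)) (h₂.mono (le_max_left _ _))
    ((E.isLipSection_leaf m).mono (le_max_right _ _)) hcen, hτm _ rfl, fun q => (hcen q).btw₁₂⟩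

end HypExtension

section CoarseBtw

variable {X : Type*} {d : X → X → ℝ} {δ c c' c'' : ℝ} {x y a b m t p : X}

lemma CoarseBtw.left_or_right (hd : IsPseudoDist d) (hy : IsHypWith d δ)
    (h : CoarseBtw d c a m b) (h' : CoarseBtw d c a t b) :
    CoarseBtw d (2 * c + δ) a m t ∨ CoarseBtw d (2 * c + δ) t m b := by
  have hc := h.nonneg hd
  have hdist := h.dist_le hd hy h'
  have hδ := hy.nonneg
  unfold CoarseBtw at *
  rcases le_total (d a m) (d a t) with hle | hle
  · left
    rw [abs_of_nonpos (by linarith)] at hdist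
    linarith
  · right
    rw [abs_of_nonneg (by linarith)] at hdist
    linarith [hd.symm m t, hd.tri a t b]

lemma CoarseBtw.split (hd : IsPseudoDist d) (hy : IsHypWith d δ) (z : X)
    (h : CoarseBtw d c x p y) : CoarseBtw d (c + δ) x p z ∨ CoarseBtw d (c + δ) z p y := by
  unfold CoarseBtw at *
  rcases hy.four_point p x z y with h | h
  · left; linarith [hd.symm p z, hd.symm p y]
  · right; linarith [hd.symm p z, hd.symm p y]

lemma CoarseBtw.trans_left (hd : IsPseudoDist d) (h : CoarseBtw d c x a y)
    (hp : CoarseBtw d c' x p a) : CoarseBtw d (c + c') x p y := by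
  unfold CoarseBtw at *
  linarith [hd.tri p a y]

lemma CoarseBtw.trans_right (hd : IsPseudoDist d) (h : CoarseBtw d c x a y)
    (hp : CoarseBtw d c' a p y) : CoarseBtw d (c + c') x p y := by
  unfold CoarseBtw at *
  linarith [hd.tri x a p]

lemma CoarseBtw.of_coarseBtw_coarseBtw (hd : IsPseudoDist d) (hy : IsHypWith d δ)
    (ha : CoarseBtw d c x a y) (hb : CoarseBtw d c x b y) (hp : CoarseBtw d c' a p b) :
    CoarseBtw d (3 * c + δ + c') x p y := by
  rcases ha.left_or_right hd hy hb with h | h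
  · exact (hb.trans_left hd (h.trans_right hd hp)).mono (by linarith)
  · exact (hb.trans_right hd (h.trans_left hd (hp.symm hd))).mono (by linarith)

lemma CoarseBtw.dist_le_add (hd : IsPseudoDist d) (h : CoarseBtw d c x t y)
    (hleft : CoarseBtw d c' x m t) (hright : CoarseBtw d c'' t m y) : d m t ≤ c + c' + c'' := by
  unfold CoarseBtw at *
  linarith [hd.tri x m y, hd.symm m t]

end CoarseBtw

/- A discrete intermediate value theorem: the first index at which `A` fails is the place. -/
lemma exists_le_and_of_forall_or {A B C : ℕ → Prop} {n : ℕ} (h0 : C 0) (hn : B n)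
    (hor : ∀ i, A i ∨ B i) (hstep : ∀ i < n, A i → C (i + 1)) : ∃ j ≤ n, B j ∧ C j := by
  induction n with
  | zero => exact ⟨0, le_rfl, hn, h0⟩
  | succ n ih =>
    rcases hor n with h | h
    · exact ⟨n + 1, le_rfl, hn, hstep n (Nat.lt_succ_self n) h⟩
    · obtain ⟨j, hj, hBC⟩ := ih h fun i hi => hstep i (hi.trans (Nat.lt_succ_self n))
      exact ⟨j, hj.trans (Nat.le_succ n), hBC⟩

namespace HypExtension

variable {K G Q : Type*} [Group K] [Group G] [Group Q] (E : HypExtension K G Q)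
variable {C C' c c' : ℝ} {x y m t u v : G} {q : Q} {τ τ' : Q → G}

variable {E} in
lemma FiberBtw.left_or_right (h : E.FiberBtw q c u m v) (h' : E.FiberBtw q c u t v) :
    E.FiberBtw q (2 * c + E.δ) u m t ∨ E.FiberBtw q (2 * c + E.δ) t m v :=
  (h.coarseBtw.left_or_right (E.isPseudoDist_fiberDist q) (E.isHypWith_fiberDist q)
    h'.coarseBtw).imp (⟨h.π_left, h.π_mid, h'.π_mid, ·⟩) (⟨h'.π_mid, h.π_mid, h.π_right, ·⟩)

/-- The projection of `z` to the ladder spanned by the leaves of `x` and `y`, that is, to the union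
over all fibers of the geodesics between these two leaves. -/
noncomputable def ladderProj (x y z : G) : G :=
  (E.exists_isFiberCenter (E.π_leaf x (E.π z)) (E.π_leaf y (E.π z)) (rfl : E.π z = E.π z)).choose

lemma isFiberCenter_ladderProj (x y z : G) : E.IsFiberCenter (E.π z) (E.δ + 1)
    (E.leaf x (E.π z)) (E.leaf y (E.π z)) z (E.ladderProj x y z) :=
  (E.exists_isFiberCenter (E.π_leaf x (E.π z)) (E.π_leaf y (E.π z)) rfl).choose_spec

lemma fiberBtw_ladderProj (x y z : G) : E.FiberBtw (E.π z) (E.δ + 1) (E.leaf x (E.π z))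
    (E.ladderProj x y z) (E.leaf y (E.π z)) :=
  (E.isFiberCenter_ladderProj x y z).btw₁₂

@[simp]
lemma π_ladderProj (x y z : G) : E.π (E.ladderProj x y z) = E.π z :=
  (E.fiberBtw_ladderProj x y z).π_mid

lemma fiberBtw_refl_left (hc : 0 ≤ c) (hx : E.π x = q) (hy : E.π y = q) :
    E.FiberBtw q c x x y :=
  ⟨hx, hx, hy, .refl_left (E.isPseudoDist_fiberDist q) hc x y⟩

lemma fiberBtw_leaf_left (x y : G) (hc : 0 ≤ c) :
    E.FiberBtw (E.π x) c (E.leaf x (E.π x)) x (E.leaf y (E.π x)) := by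
  simpa only [leaf_π] using E.fiberBtw_refl_left hc rfl (E.π_leaf y (E.π x))

lemma fiberBtw_leaf_right (x y : G) (hc : 0 ≤ c) :
    E.FiberBtw (E.π y) c (E.leaf x (E.π y)) y (E.leaf y (E.π y)) :=
  (E.fiberBtw_leaf_left y x hc).symm

variable {E} in
lemma FiberBtw.fiberDist_ladderProj_le
    (h : E.FiberBtw (E.π m) c (E.leaf x (E.π m)) m (E.leaf y (E.π m))) :
    E.fiberDist (E.π m) m (E.ladderProj x y m) ≤ 5 * max c (E.δ + 1) + 2 * E.δ := by
  have hc := h.coarseBtw.nonneg (E.isPseudoDist_fiberDist _)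
  have hcen : E.IsFiberCenter (E.π m) c (E.leaf x (E.π m)) (E.leaf y (E.π m)) m m :=
    ⟨h, (E.fiberBtw_refl_left hc rfl (E.π_leaf _ _)).symm,
      (E.fiberBtw_refl_left hc rfl (E.π_leaf _ _)).symm⟩
  exact hcen.fiberDist_le (E.isFiberCenter_ladderProj x y m)

lemma fiberBtw_ladderProj_of_fiberBtw
    (h : E.FiberBtw (E.π m) (E.δ + 1) (E.leaf x (E.π m)) m (E.leaf y (E.π m)))
    (ht : E.π t = E.π m) :
    E.FiberBtw (E.π m) (5 * (E.δ + 1) + 2 * E.δ) m (E.ladderProj x y m) t := by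
  have hdist := h.fiberDist_ladderProj_le
  have hd := E.isPseudoDist_fiberDist (E.π m)
  rw [max_self] at hdist
  exact ⟨rfl, E.π_ladderProj x y m, ht,
    ((CoarseBtw.refl_left hd le_rfl m t).move_mid hd hdist).mono (by linarith)⟩

theorem exists_dG_ladderProj_le (hc : 0 ≤ c) : ∃ D : ℝ, 0 ≤ D ∧
    ∀ x y m, E.FiberBtw (E.π m) c (E.leaf x (E.π m)) m (E.leaf y (E.π m)) →
      E.dG m (E.ladderProj x y m) ≤ D := by
  obtain ⟨L, hL, hlip⟩ := E.exists_dG_le_fiberDist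
  have hδ := E.hypK.nonneg
  have hbound : 0 ≤ 5 * max c (E.δ + 1) + 2 * E.δ := by linarith [le_max_left c (E.δ + 1)]
  exact ⟨L * (5 * max c (E.δ + 1) + 2 * E.δ), mul_nonneg hL hbound, fun x y m h =>
    (hlip _ m _ rfl (E.π_ladderProj x y m)).trans
      (mul_le_mul_of_nonneg_left h.fiberDist_ladderProj_le hL)⟩

theorem exists_dG_ladderProj_ladderProj_le : ∃ C : ℝ, 0 ≤ C ∧
    ∀ x y z w, E.dG (E.ladderProj x y z) (E.ladderProj x y w) ≤ C * E.dG z w := by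
  obtain ⟨l, hl, hπ⟩ := E.exists_dQ_π_le
  have hδ := E.hypK.nonneg
  obtain ⟨D, hD, hdist⟩ := E.exists_dG_le_of_isFiberCenter (c := E.δ + 1) (by linarith)
    (max (E.leafConst * l) 1)
  refine ⟨D, hD, fun x y => dist_map_le_of_dist_le_one E.graphG E.distG fun z w hzw => ?_⟩
  have hq : E.dQ (E.π z) (E.π w) ≤ l := (hπ z w).trans (mul_le_of_le_one_right hl hzw)
  have hleaf (x : G) : E.dG (E.leaf x (E.π z)) (E.leaf x (E.π w)) ≤ max (E.leafConst * l) 1 :=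
    ((E.isLipSection_leaf x).lip _ _).trans
      (le_max_of_le_left (mul_le_mul_of_nonneg_left hq E.leafConst_nonneg))
  exact hdist _ _ _ _ _ _ _ _ _ _ (E.isFiberCenter_ladderProj x y z)
    (E.isFiberCenter_ladderProj x y w) (hleaf x) (hleaf y) (hzw.trans (le_max_right _ _))

/- Ladders are quasiconvex, since `ladderProj` is a coarse Lipschitz retraction. -/
theorem exists_dG_ladderProj_le_of_coarseBtw (hc : 0 ≤ c) : ∃ D : ℝ, 0 ≤ D ∧
    ∀ x y p, CoarseBtw E.dG c x p y → E.dG p (E.ladderProj x y p) ≤ D := by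
  have hδ := E.hypK.nonneg
  obtain ⟨C₁, hC₁, hlip⟩ := E.exists_dG_ladderProj_ladderProj_le
  obtain ⟨C₂, -, hnear⟩ := E.exists_dG_ladderProj_le (c := E.δ + 1) (by linarith)
  have hC : 0 ≤ max C₁ C₂ := le_max_of_le_left hC₁
  obtain ⟨D, hD, hretract⟩ := IsCoarseRetraction.exists_dist_le_of_coarseBtw hδ hC hc
  refine ⟨D, hD, fun x y p hp =>
    hretract E.dG E.graphG E.hypG (E.ladderProj x y) ⟨fun z w => ?_, fun z => ?_⟩ x y
      ((hnear x y x (E.fiberBtw_leaf_left x y (by linarith))).trans (le_max_right _ _))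
      ((hnear x y y (E.fiberBtw_leaf_right x y (by linarith))).trans (le_max_right _ _)) p hp⟩
  · have hdist := E.distG.nonneg z w
    exact (hlip x y z w).trans (by gcongr; exacts [le_max_left _ _, by linarith])
  · rw [E.distG.symm]
    refine (hnear x y _ ?_).trans (le_max_right _ _)
    rw [π_ladderProj]
    exact E.fiberBtw_ladderProj x y z

/-- `τ` is a Lipschitz section of `π` contained in the ladder spanned by the leaves of `x` and
`y`. -/
structure IsLadderSection (C c : ℝ) (x y : G) (τ : Q → G) : Prop where
  isLipSection : E.IsLipSection C τ
  fiberBtw : ∀ q, E.FiberBtw q c (E.leaf x q) (τ q) (E.leaf y q)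

variable {E}

lemma IsLadderSection.symm (h : E.IsLadderSection C c x y τ) : E.IsLadderSection C c y x τ :=
  ⟨h.isLipSection, fun q => (h.fiberBtw q).symm⟩

lemma IsLadderSection.mono (h : E.IsLadderSection C c x y τ) (hC : C ≤ C') (hc : c ≤ c') :
    E.IsLadderSection C' c' x y τ :=
  ⟨h.isLipSection.mono hC, fun q => (h.fiberBtw q).mono hc⟩

variable (E)

lemma exists_fiberBtw_ladderProj_of_dG_le_one (hC : 0 ≤ C) (hc : 0 ≤ c) : ∃ c' : ℝ, 0 ≤ c' ∧
    ∀ x y τ b b', E.IsLipSection C τ → E.dG b b' ≤ 1 →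
      E.FiberBtw (E.π b) c (E.leaf x (E.π b)) (E.ladderProj x y b) (τ (E.π b)) →
      E.FiberBtw (E.π b') c' (E.leaf x (E.π b')) (E.ladderProj x y b') (τ (E.π b')) := by
  obtain ⟨l, hl, hπ⟩ := E.exists_dQ_π_le
  obtain ⟨CP, hCP, hproj⟩ := E.exists_dG_ladderProj_ladderProj_le
  have hC' := E.leafConst_nonneg
  obtain ⟨c', hc', htransp⟩ := E.exists_fiberBtw_of_dG_le hc (E.leafConst * l + CP + C * l)
  refine ⟨c', hc', fun x y τ b b' hτ hb h => ?_⟩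
  have hq : E.dQ (E.π b) (E.π b') ≤ l := (hπ b b').trans (mul_le_of_le_one_right hl hb)
  have hleaf := ((E.isLipSection_leaf x).lip (E.π b) (E.π b')).trans
    (mul_le_mul_of_nonneg_left hq hC')
  have hτ' := (hτ.lip (E.π b) (E.π b')).trans (mul_le_mul_of_nonneg_left hq hC)
  have hP := (hproj x y b b').trans (mul_le_of_le_one_right hCP hb)
  have hleaf0 := mul_nonneg hC' hl
  have hτ0 := mul_nonneg hC hl
  exact htransp _ _ _ _ _ _ _ _ h (E.π_leaf x _) (E.π_ladderProj x y b') (hτ.π_apply _)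
    (by linarith) (by linarith) (by linarith)

/- Along a geodesic from `x` to `y` the section changes sides of the projection to the ladder. -/
lemma exists_fiberDist_ladderProj_geodesic_le (hC : 0 ≤ C) (hc : 0 ≤ c) : ∃ B : ℝ, 0 ≤ B ∧
    ∀ (b : ℕ → G) (n : ℕ) (τ : Q → G), IsDiscreteGeodesic E.dG b n →
      E.IsLadderSection C c (b 0) (b n) τ →
      ∃ j ≤ n, E.fiberDist (E.π (b j)) (E.ladderProj (b 0) (b n) (b j)) (τ (E.π (b j))) ≤ B := by
  have hδ := E.hypK.nonneg
  set c₀ := max c (E.δ + 1)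
  have : 0 ≤ c₀ := le_max_of_le_left hc
  have hc₀ : E.δ + 1 ≤ c₀ := le_max_right _ _
  set c₁ := 2 * c₀ + E.δ + (5 * c₀ + 2 * E.δ) with hc₁
  obtain ⟨c₂, _, hstep⟩ := E.exists_fiberBtw_ladderProj_of_dG_le_one (c := c₁) hC (by positivity)
  refine ⟨c + max c₁ c₂ + c₁, by positivity, fun b n τ hb hτ => ?_⟩
  set P := E.ladderProj (b 0) (b n)
  have hor (i : ℕ) : E.FiberBtw (E.π (b i)) c₁ (E.leaf (b 0) (E.π (b i))) (P (b i))
      (τ (E.π (b i))) ∨ E.FiberBtw (E.π (b i)) c₁ (τ (E.π (b i))) (P (b i))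
        (E.leaf (b n) (E.π (b i))) :=
    (((E.fiberBtw_ladderProj (b 0) (b n) (b i)).mono hc₀).left_or_right
      ((hτ.fiberBtw _).mono (le_max_left _ _))).imp (·.mono (by linarith only [hc₁, hc₀, hδ]))
      (·.mono (by linarith only [hc₁, hc₀, hδ]))
  have hfirst : E.FiberBtw (E.π (b 0)) (max c₁ c₂) (E.leaf (b 0) (E.π (b 0))) (P (b 0))
      (τ (E.π (b 0))) := by
    have h := E.fiberBtw_ladderProj_of_fiberBtw
      (E.fiberBtw_leaf_left (b 0) (b n) (by linarith)) (hτ.isLipSection.π_apply (E.π (b 0)))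
    rw [leaf_π]
    exact h.mono (le_max_of_le_left (by linarith only [hc₁, hc₀, hδ]))
  have hlast : E.FiberBtw (E.π (b n)) c₁ (τ (E.π (b n))) (P (b n))
      (E.leaf (b n) (E.π (b n))) := by
    have h := E.fiberBtw_ladderProj_of_fiberBtw
      (E.fiberBtw_leaf_right (b 0) (b n) (by linarith)) (hτ.isLipSection.π_apply (E.π (b n)))
    rw [leaf_π]
    exact h.symm.mono (by linarith only [hc₁, hc₀, hδ])
  have hcont (i : ℕ) (hi : i + 1 ≤ n) (h : E.FiberBtw (E.π (b i)) c₁ (E.leaf (b 0) (E.π (b i)))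
      (P (b i)) (τ (E.π (b i)))) : E.FiberBtw (E.π (b (i + 1))) (max c₁ c₂)
        (E.leaf (b 0) (E.π (b (i + 1)))) (P (b (i + 1))) (τ (E.π (b (i + 1)))) :=
    (hstep _ _ _ (b i) (b (i + 1)) hτ.isLipSection
      (by rw [hb i (i + 1) (by omega) hi]; push_cast; linarith) h).mono (le_max_right c₁ c₂)
  obtain ⟨j, hj, hright, hleft⟩ := exists_le_and_of_forall_or (C := fun i => E.FiberBtw (E.π (b i))
    (max c₁ c₂) (E.leaf (b 0) (E.π (b i))) (P (b i)) (τ (E.π (b i)))) hfirst hlast hor hcont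
  exact ⟨j, hj, (hτ.fiberBtw _).coarseBtw.dist_le_add (E.isPseudoDist_fiberDist _)
    hleft.coarseBtw hright.coarseBtw⟩

theorem exists_coarseBtw_ladderSection (hC : 0 ≤ C) (hc : 0 ≤ c) : ∃ R : ℝ, 0 ≤ R ∧
    ∀ x y τ, E.IsLadderSection C c x y τ → ∃ v, CoarseBtw E.dG R x (τ v) y := by
  obtain ⟨D, hD, hproj⟩ := E.exists_dG_ladderProj_le_of_coarseBtw (c := 0) le_rfl
  obtain ⟨L, hL, hlip⟩ := E.exists_dG_le_fiberDist
  obtain ⟨B, hB, hcross⟩ := E.exists_fiberDist_ladderProj_geodesic_le hC hc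
  refine ⟨0 + (D + L * B), by positivity, fun x y τ hτ => ?_⟩
  obtain ⟨n, b, rfl, rfl, hb⟩ := E.graphG.exists_geodesic x y
  obtain ⟨j, hj, hdist⟩ := hcross b n τ hb hτ
  have hbtw := hb.coarseBtw hj
  refine ⟨E.π (b j), hbtw.move_mid E.distG ?_⟩
  linarith [hproj _ _ _ hbtw, mul_le_mul_of_nonneg_left hdist hL,
    hlip _ _ _ (E.π_ladderProj (b 0) (b n) (b j)) (hτ.isLipSection.π_apply (E.π (b j))),
    E.distG.tri (b j) (E.ladderProj (b 0) (b n) (b j)) (τ (E.π (b j)))]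

variable {E} in
lemma isCubicQuasigeodesic_lift {r e l : ℝ} (hC : 0 ≤ C) (he : 0 ≤ e) (hl : 0 ≤ l)
    (hπ : ∀ x y, E.dQ (E.π x) (E.π y) ≤ l * E.dG x y) (hτ : E.IsLipSection C τ)
    (hτ' : E.IsLipSection C τ') {γ : ℕ → Q} {a n : ℕ} (hγa : E.dG (τ' (γ a)) (τ (γ a)) ≤ r)
    (hγ : ∀ i j, i ≤ j → j ≤ n →
      E.dQ (γ i) (γ j) ≤ (j : ℝ) - i ∧ (j : ℝ) - i ≤ E.dQ (γ i) (γ j) + 2 * e) :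
    IsCubicQuasigeodesic E.dG (C + r) (l + 2 * e)
      (fun i => if i < a then τ' (γ i) else τ (γ i)) n := by
  have hr : 0 ≤ r := (E.distG.nonneg _ _).trans hγa
  constructor
  · intro i hi
    have hγi : E.dQ (γ i) (γ (i + 1)) ≤ 1 := by
      have h := (hγ i (i + 1) (by omega) hi).1
      push_cast at h
      linarith
    rcases lt_trichotomy (i + 1) a with h | h | h
    · rw [if_pos h, if_pos (by omega)]
      linarith [hτ'.dG_le hC hγi]
    · subst h
      rw [if_pos (Nat.lt_succ_self i), if_neg (lt_irrefl _)]
      linarith [hτ'.dG_le hC hγi, E.distG.tri (τ' (γ i)) (τ' (γ (i + 1))) (τ (γ (i + 1)))]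
    · rw [if_neg (by omega), if_neg (by omega)]
      linarith [hτ.dG_le hC hγi]
  · intro i j hij hj
    set Γ : ℕ → G := fun i => if i < a then τ' (γ i) else τ (γ i)
    have hπΓ (i : ℕ) : E.π (Γ i) = γ i := by
      by_cases h : i < a
      · simp only [Γ, if_pos h, hτ'.π_apply]
      · simp only [Γ, if_neg h, hτ.π_apply]
    have ht := E.distG.nonneg (Γ i) (Γ j)
    have hproj := hπ (Γ i) (Γ j)
    rw [hπΓ, hπΓ] at hproj
    have hle := mul_le_mul_of_nonneg_left (add_one_le_cube ht) (by positivity : 0 ≤ l + 2 * e)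
    linarith [(hγ i j hij hj).2, mul_nonneg he ht]

/- Two Lipschitz sections that nearly meet over `q`, joined over a quasigeodesic through `q`, form a
quasigeodesic. -/
theorem exists_coarseBtw_lift {r e : ℝ} (hC : 0 ≤ C) (hr : 0 ≤ r) (he : 0 ≤ e) :
    ∃ D : ℝ, 0 ≤ D ∧ ∀ τ τ' v' q v, E.IsLipSection C τ → E.IsLipSection C τ' →
      E.dG (τ' q) (τ q) ≤ r → CoarseBtw E.dQ e v' q v →
      CoarseBtw E.dG D (τ' v') (τ q) (τ v) := by
  obtain ⟨l, hl, hπ⟩ := E.exists_dQ_π_le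
  obtain ⟨D, hD, hmorse⟩ := exists_isCoarseGeodesic_of_isCubicQuasigeodesic (k := C + r)
    (A := l + 2 * e) E.hypG.nonneg (by positivity) (by positivity)
  refine ⟨D + r, by positivity, fun τ τ' v' q v hτ hτ' hq hbtw => ?_⟩
  obtain ⟨n, a, γ, han, rfl, rfl, rfl, hγ⟩ := hbtw.exists_path E.graphQ
  have hquasi := isCubicQuasigeodesic_lift hC he hl hπ hτ hτ' hq hγ
  have h := (hmorse E.dG E.graphG E.hypG _ n hquasi).coarseBtw a han
  rw [if_neg (lt_irrefl a), if_neg han.not_gt] at h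
  refine h.move_left E.distG ?_
  by_cases ha : 0 < a
  · rw [if_pos ha, E.distG.self]
    exact hr
  · obtain rfl : a = 0 := by omega
    rwa [if_neg ha, E.distG.symm]

end HypExtension

section Gates

variable {X : Type*} {d : X → X → ℝ} {A : Set X} {v v' q q' : X} {c c' r δ : ℝ}

/-- `q` is a gate of `v` in `A`: a coarse nearest-point projection of `v` to `A`, through which one
must pass on the way from `v` to any point of `A`. -/
structure IsGate (d : X → X → ℝ) (c : ℝ) (A : Set X) (v q : X) : Prop where
  mem : q ∈ A
  coarseBtw : ∀ a ∈ A, CoarseBtw d c v q a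

lemma IsGate.mono (h : IsGate d c A v q) (hc : c ≤ c') : IsGate d c' A v q :=
  ⟨h.mem, fun a ha => (h.coarseBtw a ha).mono hc⟩

lemma isGate_self (hd : IsPseudoDist d) (hc : 0 ≤ c) (hq : q ∈ A) : IsGate d c A q q :=
  ⟨hq, fun a _ => .refl_left hd hc q a⟩

lemma IsGate.move_left (hd : IsPseudoDist d) (h : IsGate d c A v q) (hv : d v v' ≤ r) :
    IsGate d (c + r) A v' q :=
  ⟨h.mem, fun a ha => (h.coarseBtw a ha).move_left hd hv⟩

lemma IsGate.dist_le_add (hd : IsPseudoDist d) (h : IsGate d c A v q) {a : X} (ha : a ∈ A) :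
    d v q ≤ d v a + 2 * c :=
  (le_add_of_nonneg_right (hd.nonneg q a)).trans (h.coarseBtw a ha)

lemma IsGate.dist_le (hd : IsPseudoDist d) (h : IsGate d c A v q) (h' : IsGate d c A v q') :
    d q q' ≤ 2 * c := by
  have h₁ := h.coarseBtw q' h'.mem
  have h₂ := h'.coarseBtw q h.mem
  unfold CoarseBtw at h₁ h₂
  linarith [hd.symm q q']

lemma IsGate.dist_le_or_coarseBtw (hd : IsPseudoDist d) (hy : IsHypWith d δ)
    (h : IsGate d c A v q) (h' : IsGate d c A v' q') :
    d q' q ≤ 2 * c + δ ∨ CoarseBtw d (c + δ) v' q v := by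
  refine or_iff_not_imp_left.2 fun hfar => ?_
  have h₁ := h.coarseBtw q' h'.mem
  have h₂ := h'.coarseBtw q h.mem
  unfold CoarseBtw at h₁ h₂ ⊢
  rcases hy.four_point q v v' q' with h₃ | h₃ <;>
    linarith [hd.symm q q', hd.symm q' v', hd.symm v' v, hd.symm q v]

lemma exists_isGate_or_coarseBtw (hd : IsPseudoDist d) (hy : IsHypWith d δ) (hc : 0 ≤ c)
    (hgate : ∀ v, ∃ q, IsGate d c A v q) (c' : ℝ) :
    ∃ b : ℝ, 0 ≤ b ∧ ∀ v q v', IsGate d c' A v q → IsGate d b A v' q ∨ CoarseBtw d b v' q v := by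
  have hm : 0 ≤ max c' c := le_max_of_le_right hc
  have hδ := hy.nonneg
  refine ⟨max c' c + (2 * max c' c + δ), by linarith, fun v q v' h => ?_⟩
  obtain ⟨q', hq'⟩ := hgate v'
  replace hq' := hq'.mono (le_max_right c' c)
  rcases (h.mono (le_max_left c' c)).dist_le_or_coarseBtw hd hy hq' with hnear | hbtw
  · exact Or.inl ⟨h.mem, fun a ha => (hq'.coarseBtw a ha).move_mid hd hnear⟩
  · exact Or.inr (hbtw.mono (by linarith))

end Gates

namespace HypExtension

variable {K G Q : Type*} [Group K] [Group G] [Group Q] (E : HypExtension K G Q)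

variable {Q₁ : Set Q} {A A' C D c c' e : ℝ} {τ τ' : Q → G} {x y p : G}

variable {E} in
lemma IsLipSection.of_dG_le (hτ : E.IsLipSection C τ) (hC : 0 ≤ C) (hτ' : ∀ q, E.π (τ' q) = q)
    (hdist : ∀ q, E.dG (τ q) (τ' q) ≤ D) : E.IsLipSection (C + 2 * D) τ' :=
  ⟨hτ', dist_map_le_of_dist_le_one E.graphQ E.distG fun q q' hq => by
    linarith [hτ.dG_le hC hq, hdist q, hdist q', E.distG.symm (τ' q) (τ q),
      E.distG.tri (τ' q) (τ q) (τ' q'), E.distG.tri (τ q) (τ q') (τ' q')]⟩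

variable {E} in
lemma IsLadderSection.update [DecidableEq Q] (hτ : E.IsLadderSection C c x y τ) (hC : 0 ≤ C)
    (hp : E.FiberBtw (E.π p) c' (E.leaf x (E.π p)) p (E.leaf y (E.π p)))
    (hdist : E.dG (τ (E.π p)) p ≤ D) :
    E.IsLadderSection (C + 2 * D) (max c c') x y (Function.update τ (E.π p) p) := by
  refine ⟨hτ.isLipSection.of_dG_le hC (fun q => ?_) (fun q => ?_), fun q => ?_⟩ <;>
    rcases eq_or_ne q (E.π p) with rfl | hq
  · rw [Function.update_self]
  · rw [Function.update_of_ne hq, hτ.isLipSection.π_apply]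
  · rwa [Function.update_self]
  · rw [Function.update_of_ne hq, E.distG.self]
    exact (E.distG.nonneg _ _).trans hdist
  · rw [Function.update_self]
    exact hp.mono (le_max_right c c')
  · rw [Function.update_of_ne hq]
    exact (hτ.fiberBtw q).mono (le_max_left c c')

lemma exists_isLadderSection_ladderProj : ∃ C : ℝ, 0 ≤ C ∧ ∀ x y p, ∃ τ,
    E.IsLadderSection C (E.δ + 1) x y τ ∧ τ (E.π p) = E.ladderProj x y p := by
  obtain ⟨C, hC, hthrough⟩ := E.exists_isLipSection_through E.leafConst_nonneg
    (by linarith [E.hypK.nonneg] : 0 ≤ E.δ + 1)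
  refine ⟨C, hC, fun x y p => ?_⟩
  obtain ⟨τ, hτ, hτp, hbtw⟩ := hthrough (E.leaf x) (E.leaf y) (E.ladderProj x y p)
    (E.isLipSection_leaf x) (E.isLipSection_leaf y) (by
      rw [π_ladderProj]; exact E.fiberBtw_ladderProj x y p)
  rw [π_ladderProj] at hτp
  exact ⟨τ, ⟨hτ, fun q => max_self (E.δ + 1) ▸ hbtw q⟩, hτp⟩

/-- `p` lies on the coarse line of `π ⁻¹' Q₁` joining `x` and `y`: a section of the ladder of `x`
and `y` passes through `p`, at a point `v` it is between `x` and `y`, and `π p` is a gate of `v`. -/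
def CoarseLine (Q₁ : Set Q) (A : ℝ) (x y p : G) : Prop :=
  ∃ τ v, E.IsLadderSection A A x y τ ∧ τ (E.π p) = p ∧ IsGate E.dQ A Q₁ v (E.π p) ∧
    CoarseBtw E.dG A x (τ v) y

variable {E} in
lemma CoarseLine.mono (h : E.CoarseLine Q₁ A x y p) (hA : A ≤ A') : E.CoarseLine Q₁ A' x y p :=
  let ⟨τ, v, hτ, hτp, hv, hbtw⟩ := h
  ⟨τ, v, hτ.mono hA hA, hτp, hv.mono hA, hbtw.mono hA⟩

variable {E} in
lemma CoarseLine.symm (h : E.CoarseLine Q₁ A x y p) : E.CoarseLine Q₁ A y x p :=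
  let ⟨τ, v, hτ, hτp, hv, hbtw⟩ := h
  ⟨τ, v, hτ.symm, hτp, hv, hbtw.symm E.distG⟩

variable {E} in
lemma CoarseLine.π_mem (h : E.CoarseLine Q₁ A x y p) : E.π p ∈ Q₁ :=
  let ⟨_, _, _, _, hv, _⟩ := h
  hv.mem

variable {E} in
lemma CoarseLine.fiberBtw (h : E.CoarseLine Q₁ A x y p) :
    E.FiberBtw (E.π p) A (E.leaf x (E.π p)) p (E.leaf y (E.π p)) := by
  obtain ⟨τ, v, hτ, hτp, -, -⟩ := h
  simpa only [hτp] using hτ.fiberBtw (E.π p)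

lemma CoarseLine.exists_isGate_coarseBtw (he : 0 ≤ e) (hgate : ∀ v, ∃ q, IsGate E.dQ e Q₁ v q)
    (hA : 0 ≤ A) : ∃ B : ℝ, 0 ≤ B ∧ ∀ x y p τ, E.CoarseLine Q₁ A x y p →
      E.IsLadderSection A A x y τ → τ (E.π p) = p →
      ∃ v, IsGate E.dQ B Q₁ v (E.π p) ∧ CoarseBtw E.dG B x (τ v) y := by
  obtain ⟨R, hR, hcross⟩ := E.exists_coarseBtw_ladderSection hA hA
  obtain ⟨b, hb, hor⟩ := exists_isGate_or_coarseBtw E.distQ E.hypQ he hgate A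
  obtain ⟨D, hD, hlift⟩ := E.exists_coarseBtw_lift hA le_rfl hb
  have hδ := E.hypG.nonneg
  have hm : 0 ≤ max R A := le_max_of_le_left hR
  refine ⟨b + R + (3 * max R A + E.δ + D), by positivity, fun x y p τ' hp hτ' hτ'p => ?_⟩
  obtain ⟨τ, v, hτ, hτp, hv, hbtw⟩ := hp
  obtain ⟨v', hv'⟩ := hcross x y τ' hτ'
  rcases hor v (E.π p) v' hv with h | h
  · exact ⟨v', h.mono (by linarith), hv'.mono (by linarith)⟩
  · have hp := hlift τ τ' v' (E.π p) v hτ.isLipSection hτ'.isLipSection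
      (by rw [hτp, hτ'p, E.distG.self]) h
    rw [hτp] at hp
    refine ⟨E.π p, isGate_self E.distQ (by positivity) hv.mem, ?_⟩
    rw [hτ'p]
    exact (CoarseBtw.of_coarseBtw_coarseBtw E.distG E.hypG (hv'.mono (le_max_left R A))
      (hbtw.mono (le_max_right R A)) hp).mono (by linarith)

lemma exists_dQ_le_and_coarseBtw (hA : 0 ≤ A) : ∃ B : ℝ, 0 ≤ B ∧ ∀ R : ℝ, ∃ r : ℝ, 0 ≤ r ∧
    ∀ τ x y v v₁, E.IsLipSection A τ → CoarseBtw E.dG R x (τ v) y → CoarseBtw E.dG A x (τ v₁) y →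
      ∃ v₂, E.dQ v v₂ ≤ r ∧ CoarseBtw E.dG B x (τ v₂) y := by
  obtain ⟨D, hD, hlift⟩ := E.exists_coarseBtw_lift hA le_rfl le_rfl
  obtain ⟨l, hl, hπ⟩ := E.exists_dQ_π_le
  have hδ := E.hypG.nonneg
  refine ⟨A + (D + E.δ), by positivity, fun R => ?_⟩
  set M := 2 * max R A + E.δ
  obtain ⟨r, hr⟩ := exists_nat_gt (l * (M + 2 * D + E.δ + 1))
  refine ⟨r, by positivity, fun τ x y v v₁ hτ hv hv₁ => ?_⟩
  obtain ⟨n, γ, rfl, rfl, hγ⟩ := E.graphQ.exists_geodesic v v₁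
  rcases le_total n r with hn | hn
  · exact ⟨γ n, by rw [hγ.dist_endpoints]; exact_mod_cast hn, hv₁.mono (by linarith)⟩
  have hdist : E.dQ (γ 0) (γ r) = r := by simpa using hγ 0 r (Nat.zero_le r) hn
  have hmid := hlift τ τ _ _ _ hτ hτ (by rw [E.distG.self]) (hγ.coarseBtw hn)
  have hfar : M + 2 * D + E.δ < E.dG (τ (γ 0)) (τ (γ r)) := by
    have h := hπ (τ (γ 0)) (τ (γ r))
    rw [hτ.π_apply, hτ.π_apply, hdist] at h
    by_contra! hle
    linarith [mul_le_mul_of_nonneg_left hle hl]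
  have key (x : G) (hx : CoarseBtw E.dG M x (τ (γ 0)) (τ (γ n))) :
      CoarseBtw E.dG (D + E.δ) x (τ (γ r)) (τ (γ n)) := by
    refine (hmid.split E.distG E.hypG x).resolve_left fun h => ?_
    unfold CoarseBtw at h hx hmid
    linarith [E.distG.symm x (τ (γ 0)), E.distG.symm (τ (γ r)) x,
      E.distG.tri x (τ (γ r)) (τ (γ n))]
  refine ⟨γ r, hdist.le, ?_⟩
  rcases (hv.mono (le_max_left R A)).left_or_right E.distG E.hypG
    (hv₁.mono (le_max_right R A)) with h | h
  · exact hv₁.trans_left E.distG (key x h)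
  · exact hv₁.trans_right E.distG ((key y (h.symm E.distG)).symm E.distG)

lemma CoarseLine.exists_dG_ladderProj_le (hA : 0 ≤ A) : ∃ A' D : ℝ, 0 ≤ D ∧ A ≤ A' ∧
    ∀ x y p, E.CoarseLine Q₁ A x y p →
      E.dG p (E.ladderProj x y p) ≤ D ∧ E.CoarseLine Q₁ A' x y (E.ladderProj x y p) := by
  classical
  obtain ⟨D, hD, hproj⟩ := E.exists_dG_ladderProj_le hA
  have hδ := E.hypK.nonneg
  refine ⟨A + 2 * D + (E.δ + 1), D, hD, by linarith, fun x y p hp => ?_⟩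
  have hdist := hproj x y p hp.fiberBtw
  refine ⟨hdist, ?_⟩
  obtain ⟨τ, v, hτ, hτp, hv, hbtw⟩ := hp
  have hτ' := hτ.update (p := E.ladderProj x y p) (c' := E.δ + 1) (D := D) hA
    (by rw [π_ladderProj]; exact E.fiberBtw_ladderProj x y p) (by rwa [π_ladderProj, hτp])
  have hclose : E.dG (τ v) (Function.update τ (E.π (E.ladderProj x y p))
      (E.ladderProj x y p) v) ≤ D := by
    rw [π_ladderProj]
    rcases eq_or_ne v (E.π p) with rfl | hne
    · rwa [Function.update_self, hτp]
    · rwa [Function.update_of_ne hne, E.distG.self]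
  refine ⟨_, v, hτ'.mono (by linarith) (max_le (by linarith) (by linarith)),
    Function.update_self _ _ _, ?_, (hbtw.move_mid E.distG hclose).mono (by linarith)⟩
  rw [π_ladderProj]
  exact hv.mono (by linarith)

theorem CoarseLine.exists_near (he : 0 ≤ e) (hgate : ∀ v, ∃ q, IsGate E.dQ e Q₁ v q) :
    ∃ A₀ : ℝ, 0 ≤ A₀ ∧ ∀ A, 0 ≤ A → ∃ D : ℝ, 0 ≤ D ∧ ∀ x y p, E.CoarseLine Q₁ A x y p →
      ∃ p', E.dG p p' ≤ D ∧ E.CoarseLine Q₁ A₀ x y p' := by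
  have hδ := E.hypK.nonneg
  obtain ⟨C, hC, hthrough⟩ := E.exists_isLadderSection_ladderProj
  set a := C + (E.δ + 1)
  have ha0 : 0 ≤ a := by positivity
  obtain ⟨R, hR, hcross⟩ := E.exists_coarseBtw_ladderSection ha0 ha0
  obtain ⟨B₀, hB₀, hfellow⟩ := E.exists_dQ_le_and_coarseBtw (add_nonneg ha0 hR)
  refine ⟨a + e + B₀, by positivity, fun A hA => ?_⟩
  obtain ⟨A', D, hD, hAA', hproj⟩ := CoarseLine.exists_dG_ladderProj_le E (Q₁ := Q₁) hA
  obtain ⟨B, hB, hchange⟩ := CoarseLine.exists_isGate_coarseBtw E he hgate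
    (add_nonneg ha0 (hA.trans hAA'))
  obtain ⟨r, hr, hnear⟩ := hfellow B
  refine ⟨D + a * (2 * (B + r + e)), by positivity, fun x y p hp => ?_⟩
  obtain ⟨hdist, hline⟩ := hproj x y p hp
  obtain ⟨τ, hτ, hτp⟩ := hthrough x y p
  replace hτ : E.IsLadderSection a a x y τ := hτ.mono (by linarith) (by linarith)
  obtain ⟨v, hv, hbtw⟩ := hchange x y _ τ (hline.mono (by linarith))
    (hτ.mono (by linarith) (by linarith)) (by rw [π_ladderProj, hτp])
  obtain ⟨v₁, hv₁⟩ := hcross x y τ hτ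
  obtain ⟨v₂, hv₂, hbtw₂⟩ := hnear τ x y v v₁ (hτ.isLipSection.mono (by linarith)) hbtw
    (hv₁.mono (by linarith))
  obtain ⟨q, hq⟩ := hgate v₂
  rw [π_ladderProj] at hv
  have hqdist := ((hv.move_left E.distQ hv₂).mono (by linarith : B + r ≤ B + r + e)).dist_le
    E.distQ (hq.mono (by linarith : e ≤ B + r + e))
  refine ⟨τ q, ?_, τ, v₂, hτ.mono (by linarith) (by linarith), ?_, ?_, hbtw₂.mono (by linarith)⟩
  · have hlip := hτ.isLipSection.lip (E.π p) q
    rw [hτp] at hlip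
    linarith [mul_le_mul_of_nonneg_left hqdist ha0, E.distG.tri p (E.ladderProj x y p) (τ q)]
  · rw [hτ.isLipSection.π_apply]
  · rw [hτ.isLipSection.π_apply]
    exact hq.mono (by linarith)

lemma CoarseLine.exists_dG_le (hA : 0 ≤ A) {r : ℝ} (hr : 0 ≤ r) : ∃ D : ℝ, 0 ≤ D ∧
    ∀ x y p, E.π x ∈ Q₁ → E.dG x y ≤ r → E.CoarseLine Q₁ A x y p → E.dG p x ≤ D := by
  obtain ⟨l, hl, hπ⟩ := E.exists_dQ_π_le
  refine ⟨A * (l * (r + 2 * A) + 2 * A) + (r + 2 * A), by positivity, fun x y p hx hxy hp => ?_⟩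
  obtain ⟨τ, v, hτ, hτp, hv, hbtw⟩ := hp
  have hxv : E.dG x (τ v) ≤ r + 2 * A := by
    unfold CoarseBtw at hbtw
    linarith [E.distG.nonneg (τ v) y]
  have hQ := (hπ x (τ v)).trans (mul_le_mul_of_nonneg_left hxv hl)
  rw [hτ.isLipSection.π_apply] at hQ
  have hgate := hv.coarseBtw _ hx
  unfold CoarseBtw at hgate
  have hpv : E.dQ (E.π p) v ≤ l * (r + 2 * A) + 2 * A := by
    linarith [E.distQ.nonneg (E.π p) (E.π x), E.distQ.symm (E.π p) v, E.distQ.symm v (E.π x)]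
  have hlip := (hτ.isLipSection.lip (E.π p) v).trans (mul_le_mul_of_nonneg_left hpv hA)
  rw [hτp] at hlip
  linarith [E.distG.tri p (τ v) x, E.distG.symm x (τ v)]

end HypExtension

namespace HypExtension

variable {K G Q : Type*} [Group K] [Group G] [Group Q] (E : HypExtension K G Q)

variable {Q₁ : Set Q} {A C c c' e : ℝ} {τ : Q → G} {x y z p m u v w : G} {q : Q}

variable {E} in
lemma FiberBtw.trans_left (h : E.FiberBtw q c u m v) (hp : E.FiberBtw q c' u p m) :
    E.FiberBtw q (c + c') u p v :=
  ⟨h.π_left, hp.π_mid, h.π_right,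
    h.coarseBtw.trans_left (E.isPseudoDist_fiberDist q) hp.coarseBtw⟩

variable {E} in
lemma FiberBtw.of_fiberBtw_fiberBtw (hm : E.FiberBtw q c u m v) (hw : E.FiberBtw q c u w v)
    (hp : E.FiberBtw q c' m p w) : E.FiberBtw q (3 * c + E.δ + c') u p v :=
  ⟨hm.π_left, hp.π_mid, hm.π_right, hm.coarseBtw.of_coarseBtw_coarseBtw
    (E.isPseudoDist_fiberDist q) (E.isHypWith_fiberDist q) hw.coarseBtw hp.coarseBtw⟩

variable {E} in
lemma IsFiberCenter.swap (h : E.IsFiberCenter q c x y z m) : E.IsFiberCenter q c y x z m :=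
  ⟨h.btw₁₂.symm, h.btw₂₃, h.btw₁₃⟩

section Thin

variable {E} in
lemma IsLadderSection.coarseLine (hA : 0 ≤ A) (hτ : E.IsLadderSection A A x y τ) (hq : q ∈ Q₁)
    (hbtw : CoarseBtw E.dG A x (τ q) y) : E.CoarseLine Q₁ A x y (τ q) := by
  refine ⟨τ, q, hτ, ?_, ?_, hbtw⟩ <;> rw [hτ.isLipSection.π_apply]
  exact isGate_self E.distQ hA hq

lemma exists_isLadderSection_of_isFiberCenter (hA : 0 ≤ A) : ∃ C : ℝ, A ≤ C ∧
    ∀ x y z p σ, E.IsLipSection A σ →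
      (∀ q, E.IsFiberCenter q A (E.leaf x q) (E.leaf y q) (E.leaf z q) (σ q)) →
      E.FiberBtw (E.π p) A (E.leaf x (E.π p)) p (σ (E.π p)) →
      ∃ τ, E.IsLadderSection C C x y τ ∧ E.IsLadderSection C C x z τ ∧ τ (E.π p) = p := by
  have hm : 0 ≤ max A E.leafConst := le_max_of_le_left hA
  obtain ⟨C, hC, hthrough⟩ := E.exists_isLipSection_through hm hA
  have hc : 0 ≤ max A (E.δ + 1) := le_max_of_le_left hA
  refine ⟨C + (A + max A (E.δ + 1)), by linarith, fun x y z p σ hσ hcen hp => ?_⟩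
  obtain ⟨τ, hτ, hτp, hbtw⟩ := hthrough (E.leaf x) σ p
    ((E.isLipSection_leaf x).mono (le_max_right _ _)) (hσ.mono (le_max_left _ _)) hp
  exact ⟨τ, ⟨hτ.mono (by linarith), fun q =>
      ((hcen q).btw₁₂.trans_left (hbtw q)).mono (by linarith)⟩,
    ⟨hτ.mono (by linarith), fun q =>
      ((hcen q).btw₁₃.trans_left (hbtw q)).mono (by linarith)⟩, hτp⟩

/- By hypothesis `p` is also coarsely between the leaves of `z` and `y`, so it is itself a coarse
center of the fiber triangle. -/
lemma exists_dG_le_of_isFiberCenter_of_coarseBtw (hA : 0 ≤ A) (hc : 0 ≤ c) : ∃ D : ℝ, 0 ≤ D ∧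
    ∀ x y z p m, E.IsFiberCenter (E.π p) A (E.leaf x (E.π p)) (E.leaf y (E.π p))
        (E.leaf z (E.π p)) m →
      E.FiberBtw (E.π p) A (E.leaf x (E.π p)) p (E.leaf y (E.π p)) →
      E.FiberBtw (E.π p) A (E.leaf x (E.π p)) p (E.leaf z (E.π p)) →
      CoarseBtw E.dG c z p y → E.dG p m ≤ D := by
  obtain ⟨L, hL, hlip⟩ := E.exists_dG_le_fiberDist
  obtain ⟨D, -, hproj⟩ := E.exists_dG_ladderProj_le_of_coarseBtw hc
  obtain ⟨r, hr, hproper⟩ := E.exists_fiberDist_le D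
  have hδ := E.hypK.nonneg
  set B := E.δ + 1 + r
  have : 0 ≤ max (A + B) A := le_max_of_le_right hA
  refine ⟨L * (5 * max (A + B) A + 2 * E.δ), by positivity, fun x y z p m hm hxy hxz hzy => ?_⟩
  have hnear := hproper (E.π p) _ p (E.π_ladderProj z y p) rfl
    (by rw [E.distG.symm]; exact hproj z y p hzy)
  have hzpy := (E.isFiberCenter_ladderProj z y p).btw₁₂.coarseBtw.move_mid
    (E.isPseudoDist_fiberDist _) hnear
  have hp : E.IsFiberCenter (E.π p) (A + B) (E.leaf x (E.π p)) (E.leaf y (E.π p))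
      (E.leaf z (E.π p)) p :=
    ⟨hxy.mono (by linarith), hxz.mono (by linarith), hxy.π_right, rfl, hxz.π_right,
      (hzpy.symm (E.isPseudoDist_fiberDist _)).mono (by linarith)⟩
  exact (hlip (E.π p) p m rfl hm.btw₁₂.π_mid).trans
    (mul_le_mul_of_nonneg_left (hp.fiberDist_le hm) hL)

lemma CoarseLine.exists_near_of_fiberBtw (he : 0 ≤ e) (hgate : ∀ v, ∃ q, IsGate E.dQ e Q₁ v q)
    (hA : 0 ≤ A) : ∃ B : ℝ, 0 ≤ B ∧ ∀ x y z p σ, E.CoarseLine Q₁ A x y p → E.IsLipSection A σ →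
      (∀ q, E.IsFiberCenter q A (E.leaf x q) (E.leaf y q) (E.leaf z q) (σ q)) →
      E.FiberBtw (E.π p) A (E.leaf x (E.π p)) p (σ (E.π p)) →
      ∃ p', E.dG p p' ≤ B ∧ (E.CoarseLine Q₁ B x z p' ∨ E.CoarseLine Q₁ B z y p') := by
  obtain ⟨C, hAC, hsection⟩ := E.exists_isLadderSection_of_isFiberCenter hA
  have hC : 0 ≤ C := hA.trans hAC
  obtain ⟨B₁, hB₁, hchange⟩ := CoarseLine.exists_isGate_coarseBtw E he hgate hC
  obtain ⟨R, hR, hcross⟩ := E.exists_coarseBtw_ladderSection hC hC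
  obtain ⟨B₂, hB₂, hor⟩ := exists_isGate_or_coarseBtw E.distQ E.hypQ he hgate B₁
  obtain ⟨D, hD, hlift⟩ := E.exists_coarseBtw_lift hC le_rfl hB₂
  have hδ := E.hypG.nonneg
  set R' := B₁ + E.δ + (D + E.δ)
  obtain ⟨D', hD', hcenter⟩ := E.exists_dG_le_of_isFiberCenter_of_coarseBtw hC
    (by positivity : 0 ≤ R')
  set B := C + R' + R + B₂ + D'
  have hB0 : 0 ≤ B := by positivity
  refine ⟨B, hB0, fun x y z p σ hp hσ hcen hpσ => ?_⟩
  obtain ⟨τ, hτy, hτz, hτp⟩ := hsection x y z p σ hσ hcen hpσ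
  have hτz' : E.IsLadderSection B B x z τ := hτz.mono (by linarith) (by linarith)
  have hself : E.dG p p ≤ B := by rwa [E.distG.self]
  obtain ⟨v, hv, hxy⟩ := hchange x y p τ (hp.mono hAC) hτy hτp
  rcases hxy.split E.distG E.hypG z with hxz | hzy
  · exact ⟨p, hself, Or.inl ⟨τ, v, hτz', hτp, hv.mono (by linarith), hxz.mono (by linarith)⟩⟩
  obtain ⟨v₁, hxz⟩ := hcross x z τ hτz
  rcases hor v (E.π p) v₁ hv with hv₁ | hv₁
  · exact ⟨p, hself, Or.inl ⟨τ, v₁, hτz', hτp, hv₁.mono (by linarith), hxz.mono (by linarith)⟩⟩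
  have hmid := hlift τ τ v₁ (E.π p) v hτz.isLipSection hτz.isLipSection (E.distG.self _).le hv₁
  rcases hmid.split E.distG E.hypG z with hpz | hzp
  · have hline := hτz'.coarseLine hB0 hp.π_mem
      ((hxz.trans_right E.distG hpz).mono (by linarith))
    exact ⟨p, hself, Or.inl (hτp ▸ hline)⟩
  · rw [hτp] at hzp
    have hzpy := hzy.trans_left E.distG hzp
    have hpy := hτy.fiberBtw (E.π p)
    have hpz := hτz.fiberBtw (E.π p)
    rw [hτp] at hpy hpz
    have hpσ := hcenter x y z p _ ((hcen (E.π p)).mono hAC) hpy hpz hzpy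
    have hσ' : E.IsLadderSection B B z y σ :=
      ⟨hσ.mono (by linarith), fun q => ((hcen q).btw₂₃.symm).mono (by linarith)⟩
    exact ⟨σ (E.π p), by linarith, Or.inr (hσ'.coarseLine hB0 hp.π_mem
      ((hzpy.move_mid E.distG hpσ).mono (by linarith)))⟩

/- The fiberwise centers of the leaves of `x`, `y`, `z` form a section; a point of the coarse line
of `x` and `y` lies on the `x`-side or on the `y`-side of it. -/
theorem CoarseLine.exists_thin (he : 0 ≤ e) (hgate : ∀ v, ∃ q, IsGate E.dQ e Q₁ v q)
    (hA : 0 ≤ A) : ∃ B : ℝ, 0 ≤ B ∧ ∀ x y z p, E.CoarseLine Q₁ A x y p →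
      ∃ p', E.dG p p' ≤ B ∧ (E.CoarseLine Q₁ B x z p' ∨ E.CoarseLine Q₁ B z y p') := by
  have hδ := E.hypK.nonneg
  obtain ⟨C, hC, hlip⟩ := E.exists_isLipSection_of_isFiberCenter E.leafConst_nonneg
    (by linarith : 0 ≤ E.δ + 1)
  set A' := C + (E.δ + 1) + A + (2 * (A + (E.δ + 1)) + E.δ)
  obtain ⟨B, hB, hnear⟩ := CoarseLine.exists_near_of_fiberBtw E he hgate
    (by positivity : 0 ≤ A')
  refine ⟨B, hB, fun x y z p hp => ?_⟩
  choose σ hσ using fun q => E.exists_isFiberCenter (E.π_leaf x q) (E.π_leaf y q) (E.π_leaf z q)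
  have hlipσ := (hlip _ _ _ σ (E.isLipSection_leaf x) (E.isLipSection_leaf y)
    (E.isLipSection_leaf z) hσ).mono (by linarith : C ≤ A')
  have hcen (q : Q) := (hσ q).mono (by linarith : E.δ + 1 ≤ A')
  have hpA := hp.mono (by linarith : A ≤ A')
  rcases (hp.fiberBtw.mono (by linarith : A ≤ A + (E.δ + 1))).left_or_right
    ((hσ (E.π p)).btw₁₂.mono (by linarith)) with h | h
  · exact hnear x y z p σ hpA hlipσ hcen (h.mono (by linarith))
  · obtain ⟨p', hp', hline⟩ := hnear y x z p σ hpA.symm hlipσ (fun q => (hcen q).swap)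
      (h.symm.mono (by linarith))
    exact ⟨p', hp', hline.symm.imp CoarseLine.symm CoarseLine.symm⟩

theorem CoarseLine.exists_near_and_thin (he : 0 ≤ e)
    (hgate : ∀ v, ∃ q, IsGate E.dQ e Q₁ v q) : ∃ A₀ : ℝ, 0 ≤ A₀ ∧
    (∀ A, 0 ≤ A → ∃ D : ℝ, 0 ≤ D ∧ ∀ x y p, E.CoarseLine Q₁ A x y p →
      ∃ p', E.dG p p' ≤ D ∧ E.CoarseLine Q₁ A₀ x y p') ∧
    ∃ B : ℝ, 0 ≤ B ∧ ∀ x y z p, E.CoarseLine Q₁ A₀ x y p →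
      ∃ p', E.dG p p' ≤ B ∧ (E.CoarseLine Q₁ A₀ x z p' ∨ E.CoarseLine Q₁ A₀ z y p') := by
  obtain ⟨A₀, hA₀, hnear⟩ := CoarseLine.exists_near E he hgate
  obtain ⟨B, hB, hthin⟩ := CoarseLine.exists_thin E he hgate hA₀
  obtain ⟨D, hD, hnearB⟩ := hnear B hB
  refine ⟨A₀, hA₀, hnear, B + D, by positivity, fun x y z p hp => ?_⟩
  obtain ⟨p', hp', hline | hline⟩ := hthin x y z p hp <;>
    obtain ⟨p'', hp'', hline'⟩ := hnearB _ _ _ hline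
  · exact ⟨p'', by linarith [E.distG.tri p p' p''], Or.inl hline'⟩
  · exact ⟨p'', by linarith [E.distG.tri p p' p''], Or.inr hline'⟩

end Thin

section Chain

lemma exists_isLadderSection_between (hC : 0 ≤ C) : ∃ C' : ℝ, 0 ≤ C' ∧
    ∀ x y τ₁ τ₂ m, E.IsLadderSection C c x y τ₁ → E.IsLadderSection C c x y τ₂ →
      E.FiberBtw (E.π m) 0 (τ₁ (E.π m)) m (τ₂ (E.π m)) →
      ∃ τ, E.IsLadderSection C' (3 * c + E.δ + (E.δ + 1)) x y τ ∧ τ (E.π m) = m ∧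
        ∀ q, E.FiberBtw q (E.δ + 1) (τ₁ q) (τ q) (τ₂ q) := by
  obtain ⟨C', hC', hthrough⟩ := E.exists_isLipSection_through hC le_rfl
  refine ⟨C', hC', fun x y τ₁ τ₂ m h₁ h₂ hm => ?_⟩
  obtain ⟨τ, hτ, hτm, hbtw⟩ := hthrough τ₁ τ₂ m h₁.isLipSection h₂.isLipSection hm
  rw [max_eq_right (by linarith [E.hypK.nonneg])] at hbtw
  exact ⟨τ, ⟨hτ, fun q => (h₁.fiberBtw q).of_fiberBtw_fiberBtw (h₂.fiberBtw q) (hbtw q)⟩, hτm,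
    hbtw⟩

lemma exists_dG_ladderProj_section_le (hC : 0 ≤ C) : ∃ D : ℝ, 0 ≤ D ∧ ∀ x y z w τ,
    E.IsLipSection C τ → τ (E.π w) = E.ladderProj x y w → E.dG z w ≤ 1 →
      E.dG (E.ladderProj x y z) (τ (E.π z)) ≤ D := by
  obtain ⟨L, hL, hproj⟩ := E.exists_dG_ladderProj_ladderProj_le
  obtain ⟨l, hl, hπ⟩ := E.exists_dQ_π_le
  refine ⟨L + C * l, by positivity, fun x y z w τ hτ hτw hzw => ?_⟩
  have hQ := (hπ z w).trans (mul_le_of_le_one_right hl hzw)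
  have hlip := hτ.lip (E.π w) (E.π z)
  rw [hτw, E.distQ.symm] at hlip
  linarith [(hproj x y z w).trans (mul_le_of_le_one_right hL hzw),
    mul_le_mul_of_nonneg_left hQ hC,
    E.distG.tri (E.ladderProj x y z) (E.ladderProj x y w) (τ (E.π z))]

lemma exists_isLadderSection_near (hC : 0 ≤ C) : ∃ A : ℝ, 0 ≤ A ∧ ∀ x y z w q m τ₁ τ₂,
    CoarseBtw E.dG 0 x z y → E.dG z w ≤ 1 → E.IsLadderSection C (E.δ + 1) x y τ₁ →
    E.IsLadderSection C (E.δ + 1) x y τ₂ → τ₁ (E.π z) = E.ladderProj x y z →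
    τ₂ (E.π w) = E.ladderProj x y w → E.FiberBtw q 0 (τ₁ q) m (τ₂ q) →
      ∃ τ, E.IsLadderSection A A x y τ ∧ τ q = m ∧ E.dG z (τ (E.π z)) ≤ A := by
  obtain ⟨C', hC', hbetween⟩ := E.exists_isLadderSection_between (c := E.δ + 1) hC
  obtain ⟨D, -, hsection⟩ := E.exists_dG_ladderProj_section_le hC
  obtain ⟨r, hr, hproper⟩ := E.exists_fiberDist_le D
  obtain ⟨L, hL, hlip⟩ := E.exists_dG_le_fiberDist
  obtain ⟨D', hD', hproj⟩ := E.exists_dG_ladderProj_le_of_coarseBtw le_rfl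
  have hδ := E.hypK.nonneg
  have hB : 0 ≤ L * (r + 2 * (E.δ + 1)) := by positivity
  refine ⟨C' + (3 * (E.δ + 1) + E.δ + (E.δ + 1)) + (D' + L * (r + 2 * (E.δ + 1))), by positivity,
    fun x y z w q m τ₁ τ₂ hz hzw h₁ h₂ hτ₁ hτ₂ hm => ?_⟩
  obtain rfl := hm.π_mid
  obtain ⟨τ, hτ, hτm, hbtw⟩ := hbetween x y τ₁ τ₂ m h₁ h₂ hm
  refine ⟨τ, hτ.mono (by linarith) (by linarith), hτm, ?_⟩
  have hgap := hproper _ _ _ (E.π_ladderProj x y z) (h₂.isLipSection.π_apply (E.π z))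
    (hsection x y z w τ₂ h₂.isLipSection hτ₂ hzw)
  have hfiber : E.fiberDist (E.π z) (E.ladderProj x y z) (τ (E.π z)) ≤ r + 2 * (E.δ + 1) := by
    have h := (hbtw (E.π z)).coarseBtw
    rw [hτ₁] at h
    unfold CoarseBtw at h
    linarith [(E.isPseudoDist_fiberDist (E.π z)).nonneg (τ (E.π z)) (τ₂ (E.π z))]
  linarith [hlip _ _ _ (E.π_ladderProj x y z) (hτ.isLipSection.π_apply (E.π z)),
    mul_le_mul_of_nonneg_left hfiber hL, hproj x y z hz,
    E.distG.tri z (E.ladderProj x y z) (τ (E.π z))]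

/-- A chain from `x` to `y` in `π ⁻¹' Q₁` alternating fiber segments from `u i` to `w i`, which stay
on the coarse line of `x` and `y`, and bounded jumps from `w i` to `u (i + 1)`. -/
structure IsFiberChain (Q₁ : Set Q) (A : ℝ) (x y : G) (n : ℕ) (u w : ℕ → G) : Prop where
  π_mem : ∀ i, E.π (u i) ∈ Q₁
  π_eq : ∀ i, E.π (w i) = E.π (u i)
  coarseLine : ∀ i < n, ∀ m, E.FiberBtw (E.π (u i)) 0 (u i) m (w i) → E.CoarseLine Q₁ A x y m
  dG_le : ∀ i < n, E.dG (u i) (w i) ≤ A * (n + 1)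
  jump : ∀ i < n, E.dG (w i) (u (i + 1)) ≤ A
  start : E.dG x (u 0) ≤ A
  finish : E.dG (u n) y ≤ A

lemma exists_dG_section_section_le (hC : 0 ≤ C) : ∃ D : ℝ, 0 ≤ D ∧ ∀ x y z w q τ₁ τ₂,
    E.IsLipSection C τ₁ → E.IsLipSection C τ₂ → τ₁ (E.π z) = E.ladderProj x y z →
    τ₂ (E.π w) = E.ladderProj x y w → E.dG z w ≤ 1 →
      E.dG (τ₁ q) (τ₂ q) ≤ D + 2 * C * E.dQ (E.π z) q := by
  obtain ⟨D, hD, hsection⟩ := E.exists_dG_ladderProj_section_le hC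
  refine ⟨D, hD, fun x y z w q τ₁ τ₂ h₁ h₂ hτ₁ hτ₂ hzw => ?_⟩
  have hlip := h₁.lip q (E.π z)
  rw [hτ₁, E.distQ.symm] at hlip
  linarith [h₂.lip (E.π z) q, hsection x y z w τ₂ h₂ hτ₂ hzw,
    E.distG.tri (τ₁ q) (E.ladderProj x y z) (τ₂ q),
    E.distG.tri (E.ladderProj x y z) (τ₂ (E.π z)) (τ₂ q)]

lemma exists_coarseLine_of_fiberBtw (he : 0 ≤ e) (hC : 0 ≤ C) : ∃ A : ℝ, 0 ≤ A ∧
    ∀ x y z w q m τ₁ τ₂,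
    CoarseBtw E.dG 0 x z y → E.dG z w ≤ 1 → IsGate E.dQ e Q₁ (E.π z) q →
    E.IsLadderSection C (E.δ + 1) x y τ₁ → E.IsLadderSection C (E.δ + 1) x y τ₂ →
    τ₁ (E.π z) = E.ladderProj x y z → τ₂ (E.π w) = E.ladderProj x y w →
    E.FiberBtw q 0 (τ₁ q) m (τ₂ q) → E.CoarseLine Q₁ A x y m := by
  obtain ⟨A, hA, hnear⟩ := E.exists_isLadderSection_near hC
  refine ⟨A + e, by positivity, fun x y z w q m τ₁ τ₂ hz hzw hq h₁ h₂ hτ₁ hτ₂ hm => ?_⟩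
  obtain ⟨τ, hτ, hτm, hzτ⟩ := hnear x y z w q m τ₁ τ₂ hz hzw h₁ h₂ hτ₁ hτ₂ hm
  have hAe : A ≤ A + e := le_add_of_nonneg_right he
  obtain rfl := hm.π_mid
  exact ⟨τ, E.π z, hτ.mono hAe hAe, hτm, hq.mono (by linarith),
    (hz.move_mid E.distG hzτ).mono (by linarith)⟩

/- Put a section of the ladder through the projection of each point of a geodesic from `x` to `y`,
and evaluate each of these and the next one at a gate of the corresponding point of `Q`. -/
theorem exists_isFiberChain (he : 0 ≤ e) (hgate : ∀ v, ∃ q, IsGate E.dQ e Q₁ v q) :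
    ∃ A : ℝ, 0 ≤ A ∧ ∀ x y, E.π x ∈ Q₁ → E.π y ∈ Q₁ → ∃ (n : ℕ) (u w : ℕ → G),
      (n : ℝ) = E.dG x y ∧ E.IsFiberChain Q₁ A x y n u w := by
  obtain ⟨l, hl, hπ⟩ := E.exists_dQ_π_le
  obtain ⟨D₀, hD₀, hproj⟩ := E.exists_dG_ladderProj_le_of_coarseBtw le_rfl
  obtain ⟨C, hC, hthrough⟩ := E.exists_isLadderSection_ladderProj
  obtain ⟨D, hD, hsection⟩ := E.exists_dG_section_section_le hC
  obtain ⟨A₁, hA₁, hline⟩ := E.exists_coarseLine_of_fiberBtw (Q₁ := Q₁) he hC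
  have hCl : 0 ≤ C * l := by positivity
  have hCe : 0 ≤ C * e := by positivity
  refine ⟨A₁ + e + D₀ + D + 2 * C * l + 4 * C * e, by positivity, fun x y hx hy => ?_⟩
  obtain ⟨n, b, rfl, rfl, hb⟩ := E.graphG.exists_geodesic x y
  choose τ hτ hτb using fun i => hthrough (b 0) (b n) (b i)
  choose q hq using fun i => hgate (E.π (b i))
  have hstep (i : ℕ) (hi : i < n) : E.dG (b i) (b (i + 1)) ≤ 1 := by
    simp [hb i (i + 1) (by omega) hi]
  have hend (i : ℕ) (hi : i ≤ n) (hmem : E.π (b i) ∈ Q₁) :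
      E.dG (b i) (τ i (q i)) ≤ D₀ + C * (2 * e) := by
    have hlip := (hτ i).isLipSection.lip (E.π (b i)) (q i)
    have hgap := (hq i).dist_le_add E.distQ hmem
    rw [hτb] at hlip
    rw [E.distQ.self, zero_add] at hgap
    linarith [hproj _ _ _ (hb.coarseBtw hi), mul_le_mul_of_nonneg_left hgap hC,
      E.distG.tri (b i) (E.ladderProj (b 0) (b n) (b i)) (τ i (q i))]
  refine ⟨n, fun i => τ i (q i), fun i => τ (i + 1) (q i), hb.dist_endpoints.symm, fun i => ?_,
    fun i => ?_, fun i hi m hm => ?_, fun i hi => ?_, fun i hi => ?_, ?_, ?_⟩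
  · rw [(hτ i).isLipSection.π_apply]
    exact (hq i).mem
  · rw [(hτ i).isLipSection.π_apply, (hτ (i + 1)).isLipSection.π_apply]
  · rw [(hτ i).isLipSection.π_apply] at hm
    exact (hline _ _ _ _ _ m _ _ (hb.coarseBtw hi.le) (hstep i hi) (hq i) (hτ i) (hτ (i + 1))
      (hτb i) (hτb (i + 1)) hm).mono (by linarith)
  · have hbi : E.dG (b i) (b 0) ≤ n := by
      simpa [E.distG.symm (b i), hb 0 i (Nat.zero_le i) hi.le] using hi.le
    have hQ : E.dQ (E.π (b i)) (q i) ≤ l * n + 2 * e := by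
      linarith [(hq i).dist_le_add E.distQ hx, hπ (b i) (b 0), mul_le_mul_of_nonneg_left hbi hl]
    have hn : (0 : ℝ) ≤ (A₁ + e + D₀ + D + 4 * C * e) * n := by positivity
    linarith [mul_le_mul_of_nonneg_left hQ hC, hsection _ _ _ _ (q i) _ _ (hτ i).isLipSection
      (hτ (i + 1)).isLipSection (hτb i) (hτb (i + 1)) (hstep i hi)]
  · have hQ := (hπ (b i) (b (i + 1))).trans (mul_le_of_le_one_right hl (hstep i hi))
    have hq' := ((hq i).move_left E.distQ hQ).dist_le E.distQ
      ((hq (i + 1)).mono (by linarith : e ≤ e + l))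
    linarith [(hτ (i + 1)).isLipSection.lip (q i) (q (i + 1)), mul_le_mul_of_nonneg_left hq' hC]
  · linarith [hend 0 (Nat.zero_le n) hx]
  · rw [E.distG.symm]
    linarith [hend n le_rfl hy]

end Chain

end HypExtension

section Undistorted

variable {X Y : Type*} {d : X → X → ℝ} {d' : Y → Y → ℝ}

lemma IsDiscreteGeodesic.isCubicQuasigeodesic_comp {p : ℕ → X} {n : ℕ} {f : X → Y} {C A : ℝ}
    (hp : IsDiscreteGeodesic d p n) (hC : ∀ x y, d' (f x) (f y) ≤ C * d x y)
    (hA : ∀ x y, d x y ≤ A * (d' (f x) (f y) + 1) ^ 3) :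
    IsCubicQuasigeodesic d' C A (fun i => f (p i)) n where
  step i hi := by
    have h := hC (p i) (p (i + 1))
    rw [hp i (i + 1) (by omega) hi] at h
    push_cast at h
    linarith
  length_le i j hij hj := by
    rw [← hp i j hij hj]
    exact hA _ _

variable {Γ Γ' : Type*} [Group Γ] [Group Γ'] {S : Set Γ} {S' : Set Γ'} {H : Subgroup Γ} {T : Set H}

lemma exists_wordDist_map_le (hS : GenSet S) (hS' : GenSet S') (f : Γ →* Γ') :
    ∃ C : ℝ, 0 ≤ C ∧ ∀ x y, wordDist S' (f x) (f y) ≤ C * wordDist S x y := by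
  obtain ⟨C, hC, hlip⟩ := exists_wordLength_map_le hS hS' f
  refine ⟨C, hC, fun x y => ?_⟩
  rw [wordDist_map]
  exact hlip _

lemma exists_wordDist_le_of_map_le (S : Set Γ) (hS' : GenSet S') {f : Γ →* Γ'}
    (hf : Function.Injective f) (r : ℝ) :
    ∃ w : ℝ, 0 ≤ w ∧ ∀ x y, wordDist S' (f x) (f y) ≤ r → wordDist S x y ≤ w := by
  obtain ⟨w, hw⟩ := (((finite_setOf_cast_wordLength_le hS' r).preimage hf.injOn).image
    fun x => (wordLength S x : ℝ)).bddAbove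
  refine ⟨max w 0, le_max_right _ _, fun x y h => le_max_of_le_left (hw ⟨x⁻¹ * y, ?_, rfl⟩)⟩
  rwa [wordDist_map] at h

lemma exists_wordDist_le_of_qiEmbSubgroup (hS : GenSet S) (h : QIEmbSubgroup H) :
    ∃ T : Set H, GenSet T ∧ ∃ k : ℝ, 0 ≤ k ∧
      ∀ x y : H, wordDist T x y ≤ k * (wordDist S (x : Γ) y + 1) := by
  obtain ⟨S', T, hS', hT, k, hk, hqi⟩ := h
  obtain ⟨C, hC, hlip⟩ := exists_wordDist_map_le hS hS' (MonoidHom.id Γ)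
  refine ⟨T, hT, k * (C + k), by positivity, fun x y => ?_⟩
  have hlow : wordDist T x y / k ≤ C * wordDist S (x : Γ) y + k :=
    sub_le_iff_le_add.1 ((hqi x y).1.trans (hlip x y))
  have hnn := (isPseudoDist_wordDist hS).nonneg (x : Γ) y
  calc wordDist T x y ≤ (C * wordDist S (x : Γ) y + k) * k := (div_le_iff₀ (by linarith)).1 hlow
    _ ≤ k * (C + k) * (wordDist S (x : Γ) y + 1) := by
      nlinarith [mul_nonneg (by positivity : 0 ≤ k * k) hnn, mul_nonneg (by linarith : 0 ≤ k) hC]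

lemma qiEmbSubgroup_of_wordDist_le (hS : GenSet S) (hT : GenSet T) {k : ℝ} (hk : 0 ≤ k)
    (h : ∀ x y : H, wordDist T x y ≤ k * (wordDist S (x : Γ) y + 1)) : QIEmbSubgroup H := by
  obtain ⟨C, hC, hlip⟩ := exists_wordDist_map_le hT hS H.subtype
  refine ⟨S, T, hS, hT, k + 1 + C, by linarith, fun x y => ⟨?_, ?_⟩⟩
  · have hnn := (isPseudoDist_wordDist hS).nonneg (x : Γ) y
    have hdiv : wordDist T x y / (k + 1 + C) ≤ wordDist S (x : Γ) y + 1 := by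
      rw [div_le_iff₀ (by linarith)]
      nlinarith [h x y]
    linarith
  · have hT₀ := (isPseudoDist_wordDist hT).nonneg x y
    refine (hlip x y).trans ?_
    nlinarith

lemma qiEmbSubgroup_of_finite (hS : GenSet S) (hH : (H : Set Γ).Finite) : QIEmbSubgroup H := by
  have : Finite H := hH
  have hT : GenSet (Set.univ : Set H) := ⟨Set.finite_univ, Subgroup.closure_univ⟩
  obtain ⟨w, hw⟩ := (Set.finite_range fun x : H => (wordLength (Set.univ : Set H) x : ℝ)).bddAbove
  refine qiEmbSubgroup_of_wordDist_le hS hT (le_max_right w 0) fun x y => ?_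
  have hbound : wordDist Set.univ x y ≤ max w 0 := le_max_of_le_left (hw ⟨x⁻¹ * y, rfl⟩)
  nlinarith [le_max_right w 0, (isPseudoDist_wordDist hS).nonneg (x : Γ) y]

section Hyperbolic

variable {δ : ℝ}

theorem exists_isCoarseGeodesic_subgroup (hS : GenSet S) (hy : IsHypWith (wordDist S) δ)
    (hT : GenSet T) {A : ℝ} (hA : 0 ≤ A)
    (h : ∀ x y : H, wordDist T x y ≤ A * (wordDist S (x : Γ) y + 1) ^ 3) :
    ∃ D : ℝ, 0 ≤ D ∧ ∀ x y : H, ∃ (n : ℕ) (p : ℕ → H), p 0 = x ∧ p n = y ∧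
      (n : ℝ) = wordDist T x y ∧ IsCoarseGeodesic (wordDist S) D (fun i => (p i : Γ)) n := by
  obtain ⟨C, hC, hlip⟩ := exists_wordDist_map_le hT hS H.subtype
  obtain ⟨D, hD, hmorse⟩ := exists_isCoarseGeodesic_of_isCubicQuasigeodesic hy.nonneg hC hA
  refine ⟨D, hD, fun x y => ?_⟩
  obtain ⟨n, p, rfl, rfl, hp⟩ := (isGraphDist_wordDist hT).exists_geodesic x y
  exact ⟨n, p, rfl, rfl, hp.dist_endpoints.symm, hmorse _ (isGraphDist_wordDist hS) hy _ _
    (hp.isCubicQuasigeodesic_comp (f := H.subtype) hlip h)⟩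

theorem qiEmbSubgroup_of_wordDist_le_cube (hS : GenSet S) (hy : IsHypWith (wordDist S) δ)
    (hT : GenSet T) {A : ℝ} (hA : 0 ≤ A)
    (h : ∀ x y : H, wordDist T x y ≤ A * (wordDist S (x : Γ) y + 1) ^ 3) : QIEmbSubgroup H := by
  obtain ⟨D, hD, hgeod⟩ := exists_isCoarseGeodesic_subgroup hS hy hT hA h
  refine qiEmbSubgroup_of_wordDist_le hS hT hD fun x y => ?_
  obtain ⟨n, p, rfl, rfl, hn, hp⟩ := hgeod x y
  rw [← hn]
  exact hp.length_le

lemma exists_isQuasiconvexSet_of_qiEmbSubgroup (hS : GenSet S) (hy : IsHypWith (wordDist S) δ)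
    (h : QIEmbSubgroup H) : ∃ D : ℝ, 0 ≤ D ∧ IsQuasiconvexSet (wordDist S) D (H : Set Γ) := by
  obtain ⟨T, hT, k, hk, hqi⟩ := exists_wordDist_le_of_qiEmbSubgroup hS h
  obtain ⟨D, hD, hgeod⟩ := exists_isCoarseGeodesic_subgroup hS hy hT hk fun x y =>
    (hqi x y).trans (mul_le_mul_of_nonneg_left
      (add_one_le_cube ((isPseudoDist_wordDist hS).nonneg _ _)) hk)
  refine ⟨D, hD, fun a ha a' ha' m hm => ?_⟩
  obtain ⟨n, p, h0, hn, -, hp⟩ := hgeod ⟨a, ha⟩ ⟨a', ha'⟩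
  obtain ⟨i, -, hi⟩ := hp.exists_close 0 m (by simpa only [h0, hn] using hm)
  exact ⟨p i, (p i).2, by simpa using hi⟩

theorem exists_isGate_of_qiEmbSubgroup (hS : GenSet S) (hy : IsHypWith (wordDist S) δ)
    (h : QIEmbSubgroup H) :
    ∃ e : ℝ, 0 ≤ e ∧ ∀ v, ∃ q, IsGate (wordDist S) e (H : Set Γ) v q := by
  obtain ⟨D, hD, hconvex⟩ := exists_isQuasiconvexSet_of_qiEmbSubgroup hS hy h
  refine ⟨2 * δ + D + 1, by linarith [hy.nonneg], fun v => ?_⟩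
  obtain ⟨q, hq, hnear⟩ := exists_mem_forall_wordDist_le (S := S) v ⟨1, H.one_mem⟩
  exact ⟨q, hq, fun a ha =>
    hconvex.coarseBtw_of_nearest (isGraphDist_wordDist hS) hy hq hnear ha⟩

end Hyperbolic

end Undistorted

namespace HypExtension

variable {K G Q : Type*} [Group K] [Group G] [Group Q] (E : HypExtension K G Q)

variable {Q₁ : Subgroup Q} {S₁ : Set (Q₁.comap E.π)} {H : Subgroup G} {A e r : ℝ}

lemma CoarseLine.exists_isThinFamily (hS₁ : GenSet S₁) (hA : 0 ≤ A) (hr : 0 ≤ r) {B : ℝ}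
    (hthin : ∀ x y z p, E.CoarseLine Q₁ A x y p →
      ∃ p', E.dG p p' ≤ B ∧ (E.CoarseLine Q₁ A x z p' ∨ E.CoarseLine Q₁ A z y p')) :
    ∃ D : ℝ, 0 ≤ D ∧ IsThinFamily (wordDist S₁)
      (fun x y p : Q₁.comap E.π => E.CoarseLine Q₁ A (x : G) y p) D r := by
  obtain ⟨C, hC, hlip⟩ := exists_wordDist_map_le hS₁ E.genG (Q₁.comap E.π).subtype
  obtain ⟨D₁, -, hsmall⟩ := CoarseLine.exists_dG_le E (Q₁ := Q₁) hA (mul_nonneg hC hr)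
  obtain ⟨D, hD, hproper⟩ := exists_wordDist_le_of_map_le S₁ E.genG
    (Q₁.comap E.π).subtype_injective (max B D₁)
  refine ⟨D, hD, fun x y z p hp => ?_, fun x y p hxy hp => ?_⟩
  · obtain ⟨p', hpp', hline⟩ := hthin x y z p hp
    exact ⟨⟨p', hline.elim CoarseLine.π_mem CoarseLine.π_mem⟩,
      hproper _ _ (le_max_of_le_left hpp'), hline⟩
  · exact hproper _ _ (le_max_of_le_right (hsmall x y p x.2
      ((hlip x y).trans (mul_le_mul_of_nonneg_left hxy hC)) hp))

lemma CoarseLine.exists_mem_dG_le_of_isThinFamily (hS₁ : GenSet S₁)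
    (hH : QIEmbSubgroup (H.subgroupOf (Q₁.comap E.π)))
    (hthin : ∀ r, 0 ≤ r → ∃ D : ℝ, 0 ≤ D ∧ IsThinFamily (wordDist S₁)
      (fun x y p : Q₁.comap E.π => E.CoarseLine Q₁ A (x : G) y p) D r) :
    ∃ D : ℝ, 0 ≤ D ∧ ∀ x y p : Q₁.comap E.π, (x : G) ∈ H → (y : G) ∈ H →
      E.CoarseLine Q₁ A (x : G) y p → ∃ h ∈ H, E.dG p h ≤ D := by
  obtain ⟨T, hT, k, hk, hqi⟩ := exists_wordDist_le_of_qiEmbSubgroup hS₁ hH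
  obtain ⟨C, hC, hlip⟩ := exists_wordDist_map_le hS₁ E.genG (Q₁.comap E.π).subtype
  obtain ⟨r, hr, hlipH⟩ := exists_wordDist_map_le hT hS₁ (H.subgroupOf (Q₁.comap E.π)).subtype
  obtain ⟨D, hD, hfamily⟩ := hthin r hr
  obtain ⟨M, hM, hnear⟩ := IsThinFamily.exists_dist_le_of_quasigeodesic hD hr hk
  refine ⟨C * M, by positivity, fun x y p hx hy hp => ?_⟩
  obtain ⟨n, γ, h0, hn, hγ⟩ := (isGraphDist_wordDist hT).exists_geodesic
    (⟨x, hx⟩ : H.subgroupOf (Q₁.comap E.π)) ⟨y, hy⟩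
  obtain ⟨i, -, hi⟩ := hnear _ (isPseudoDist_wordDist hS₁) _ hfamily (fun i => (γ i).1) n
    (fun i hi => by
      have h := hlipH (γ i) (γ (i + 1))
      rw [hγ i (i + 1) (by omega) hi] at h
      push_cast at h
      simpa using h)
    (fun i j hij hj => by
      rw [← hγ i j hij hj]
      exact hqi _ _) p (by simpa only [h0, hn] using hp)
  exact ⟨(γ i).1, (γ i).2, (hlip p (γ i).1).trans (mul_le_mul_of_nonneg_left hi hC)⟩

theorem CoarseLine.exists_mem_dG_le (he : 0 ≤ e) (hgate : ∀ v, ∃ q, IsGate E.dQ e Q₁ v q)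
    (hle : H ≤ Q₁.comap E.π) (hH : QIEmbSubgroup (H.subgroupOf (Q₁.comap E.π))) (hA : 0 ≤ A) :
    ∃ D : ℝ, 0 ≤ D ∧ ∀ x ∈ H, ∀ y ∈ H, ∀ p, E.CoarseLine Q₁ A x y p → ∃ h ∈ H, E.dG p h ≤ D := by
  obtain ⟨S₁, _, hS₁, -⟩ := id hH
  obtain ⟨A₀, hA₀, hnear, B, -, hthin⟩ := CoarseLine.exists_near_and_thin E he hgate
  obtain ⟨D₁, hD₁, hnear⟩ := hnear A hA
  obtain ⟨D, hD, hmem⟩ := CoarseLine.exists_mem_dG_le_of_isThinFamily E hS₁ hH fun r hr =>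
    CoarseLine.exists_isThinFamily E hS₁ hA₀ hr hthin
  refine ⟨D₁ + D, by positivity, fun x hx y hy p hp => ?_⟩
  obtain ⟨p', hpp', hp'⟩ := hnear x y p hp
  obtain ⟨h, hh, hdist⟩ := hmem ⟨x, hle hx⟩ ⟨y, hle hy⟩ ⟨p', hp'.π_mem⟩ hx hy hp'
  exact ⟨h, hh, by linarith [E.distG.tri p p' h]⟩

end HypExtension

section Undistorted

variable {Γ Γ' : Type*} [Group Γ] [Group Γ'] {S : Set Γ} {P L H : Subgroup Γ} {S₁ : Set P}

lemma genSet_image_of_surjective (hS : GenSet S) {f : Γ →* Γ'} (hf : Function.Surjective f) :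
    GenSet (f '' S) := by
  refine ⟨hS.1.image f, ?_⟩
  rw [← MonoidHom.map_closure, hS.2, Subgroup.map_top_of_surjective f hf]

lemma exists_wordDist_le_of_inv_mul_mem (hS : GenSet S) (hS₁ : GenSet S₁) (hLP : L ≤ P)
    (hL : QIEmbSubgroup L) : ∃ C : ℝ, 0 ≤ C ∧ ∀ a b : P, (a : Γ)⁻¹ * b ∈ L →
      wordDist S₁ a b ≤ C * (wordDist S (a : Γ) b + 1) := by
  obtain ⟨T, hT, k, hk, hqi⟩ := exists_wordDist_le_of_qiEmbSubgroup hS hL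
  obtain ⟨C, hC, hlip⟩ := exists_wordDist_map_le hT hS₁ (Subgroup.inclusion hLP)
  refine ⟨C * k, by positivity, fun a b hab => ?_⟩
  have h := (hlip 1 ⟨_, hab⟩).trans (mul_le_mul_of_nonneg_left (hqi 1 ⟨_, hab⟩) hC)
  rw [map_one, wordDist_one_left, Subgroup.coe_one, wordDist_one_left, ← mul_assoc] at h
  exact h

lemma qiEmbSubgroup_of_wordDist_le_sq {δ : ℝ} (hS : GenSet S) (hy : IsHypWith (wordDist S) δ)
    (hS₁ : GenSet S₁) (hHP : H ≤ P) (hH : QIEmbSubgroup (H.subgroupOf P)) {B : ℝ} (hB : 0 ≤ B)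
    (h : ∀ x y : P, (x : Γ) ∈ H → (y : Γ) ∈ H →
      wordDist S₁ x y ≤ B * (wordDist S (x : Γ) y + 1) ^ 2) : QIEmbSubgroup H := by
  obtain ⟨T, hT, k, hk, hqi⟩ := exists_wordDist_le_of_qiEmbSubgroup hS₁ hH
  let f := Subgroup.subgroupOfEquivOfLe hHP
  have hfT : GenSet (f.toMonoidHom '' T) := genSet_image_of_surjective hT f.surjective
  obtain ⟨C, hC, hlip⟩ := exists_wordDist_map_le hT hfT f.toMonoidHom
  refine qiEmbSubgroup_of_wordDist_le_cube hS hy hfT (A := C * (k * (B + 1))) (by positivity)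
    fun x y => ?_
  obtain ⟨x, rfl⟩ := f.surjective x
  obtain ⟨y, rfl⟩ := f.surjective y
  have hxy := h x y x.2 y.2
  change _ ≤ C * (k * (B + 1)) * (wordDist S (x : Γ) y + 1) ^ 3
  have hnn := (isPseudoDist_wordDist hS).nonneg (x : Γ) y
  set t := wordDist S (x : Γ) y
  have hcube : B * (t + 1) ^ 2 + 1 ≤ (B + 1) * (t + 1) ^ 3 := by
    have h₂ : (t + 1) ^ 2 ≤ (t + 1) ^ 3 := pow_le_pow_right₀ (by linarith) (by norm_num)
    have h₃ : 1 ≤ (t + 1) ^ 3 := one_le_pow₀ (by linarith)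
    linarith [mul_le_mul_of_nonneg_left h₂ hB]
  calc wordDist (f.toMonoidHom '' T) (f x) (f y) ≤ C * wordDist T x y := hlip x y
    _ ≤ C * (k * (B * (t + 1) ^ 2 + 1)) := by
      gcongr
      exact (hqi x y).trans (mul_le_mul_of_nonneg_left (by linarith) hk)
    _ ≤ C * (k * ((B + 1) * (t + 1) ^ 3)) := by gcongr
    _ = C * (k * (B + 1)) * (t + 1) ^ 3 := by ring

end Undistorted

namespace HypExtension

variable {K G Q : Type*} [Group K] [Group G] [Group Q] (E : HypExtension K G Q)

variable {Q₁ : Subgroup Q} {S₁ : Set (Q₁.comap E.π)} {H : Subgroup G} {A B D e : ℝ}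

/-- The subgroup generated by the elements of `K ∩ H` of length at most `D` in `G`. For large `D`
this is the subgroup `K₁` of the theorem. -/
def shortSubgroup (H : Subgroup G) (D : ℝ) : Subgroup G :=
  Subgroup.closure {g | g ∈ E.ι.range ⊓ H ∧ E.lG g ≤ D}

lemma shortSubgroup_le (H : Subgroup G) (D : ℝ) : E.shortSubgroup H D ≤ E.ι.range ⊓ H :=
  (Subgroup.closure_le _).2 fun _ hg => hg.1

lemma fg_shortSubgroup (H : Subgroup G) (D : ℝ) : (E.shortSubgroup H D).FG :=
  (Subgroup.fg_iff _).2
    ⟨_, rfl, (finite_setOf_cast_wordLength_le E.genG D).subset fun _ hg => hg.2⟩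

lemma inv_mul_mem_shortSubgroup {a : ℕ → G} {n : ℕ} (hH : ∀ i ≤ n, a i ∈ H)
    (hπ : ∀ i ≤ n, E.π (a i) = E.π (a 0)) (hD : ∀ i < n, E.dG (a i) (a (i + 1)) ≤ D) :
    (a 0)⁻¹ * a n ∈ E.shortSubgroup H D := by
  induction n with
  | zero => simp
  | succ n ih =>
    have hstep : (a n)⁻¹ * a (n + 1) ∈ E.shortSubgroup H D := by
      obtain ⟨k, hk⟩ := E.exists_eq_mul_ι ((hπ n (by omega)).trans (hπ (n + 1) le_rfl).symm)
      exact Subgroup.subset_closure ⟨⟨⟨k, by rw [hk, inv_mul_cancel_left]⟩,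
        H.mul_mem (H.inv_mem (hH n (by omega))) (hH (n + 1) le_rfl)⟩, hD n (by omega)⟩
    have hprod := mul_mem (ih (fun i hi => hH i (by omega)) (fun i hi => hπ i (by omega))
      fun i hi => hD i (by omega)) hstep
    rwa [mul_assoc, mul_inv_cancel_left] at hprod

lemma exists_mem_π_eq_lG_le (H : Subgroup G) (r : ℝ) : ∃ w : ℝ, 0 ≤ w ∧ ∀ g, E.lG g ≤ r →
    ∀ h ∈ H, E.π h = E.π g → ∃ t ∈ H, E.π t = E.π g ∧ E.lG t ≤ w := by
  have hlift (g : G) : ∃ t, ∀ h ∈ H, E.π h = E.π g → t ∈ H ∧ E.π t = E.π g := by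
    by_cases hg : ∃ t ∈ H, E.π t = E.π g
    · exact hg.imp fun t ht _ _ _ => ht
    · exact ⟨1, fun h hh hhg => (hg ⟨h, hh, hhg⟩).elim⟩
  choose t ht using hlift
  obtain ⟨w, hw⟩ := ((finite_setOf_cast_wordLength_le E.genG r).image
    fun g => E.lG (t g)).bddAbove
  refine ⟨max w 0, le_max_right _ _, fun g hg h hh hhg => ⟨t g, (ht g h hh hhg).1,
    (ht g h hh hhg).2, le_max_of_le_left (hw ⟨g, hg, rfl⟩)⟩⟩

/- Elements of `H` near two points of the same fiber lie in fibers a bounded distance apart; since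
there are finitely many possibilities, the second one can be moved within `H` to the fiber of the
first. -/
lemma exists_mem_π_eq_dG_le (H : Subgroup G) (r : ℝ) : ∃ w : ℝ, ∀ x y, E.π x = E.π y →
    ∀ h ∈ H, E.dG x h ≤ r → ∀ h' ∈ H, E.dG y h' ≤ r →
      ∃ a ∈ H, E.π a = E.π h ∧ E.dG y a ≤ w := by
  obtain ⟨w, -, hw⟩ := E.exists_mem_π_eq_lG_le H (r + r)
  refine ⟨r + w, fun x y hxy h hh hxh h' hh' hyh' => ?_⟩
  have hlen : E.lG ((y⁻¹ * h')⁻¹ * (x⁻¹ * h)) ≤ r + r := by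
    have htri := E.distG.tri (y⁻¹ * h') 1 (x⁻¹ * h)
    rw [E.distG.symm (y⁻¹ * h') 1] at htri
    simp only [dG, wordDist_one_left] at htri
    exact htri.trans (add_le_add hyh' hxh)
  obtain ⟨t, ht, hπt, htw⟩ := hw _ hlen (h'⁻¹ * h) (mul_mem (inv_mem hh') hh) (by
    simp only [map_mul, map_inv, hxy]; group)
  refine ⟨h' * t, mul_mem hh' ht, ?_, ?_⟩
  · simp only [map_mul, hπt, map_inv, hxy]; group
  · linarith [E.distG.tri y h' (h' * t), E.dG_mul_right h' t]

lemma exists_inv_mul_mem_shortSubgroup (H : Subgroup G) (D : ℝ) : ∃ D' r : ℝ, ∀ u w,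
    E.π w = E.π u → (∀ m, E.FiberBtw (E.π u) 0 u m w → ∃ h ∈ H, E.dG m h ≤ D) →
      ∃ a ∈ H, ∃ b ∈ H, a⁻¹ * b ∈ E.shortSubgroup H D' ∧ E.dG u a ≤ r ∧ E.dG w b ≤ r := by
  obtain ⟨r, hmove⟩ := E.exists_mem_π_eq_dG_le H D
  obtain ⟨C, -, hlip⟩ := E.exists_dG_le_fiberDist
  refine ⟨2 * r + C, r, fun u w huw hnear => ?_⟩
  obtain ⟨n, p, rfl, rfl, hπ, hp⟩ := E.exists_fiber_geodesic rfl huw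
  have hnear' (i : ℕ) (hi : i ≤ n) : ∃ h ∈ H, E.dG (p i) h ≤ D :=
    hnear _ ⟨rfl, hπ i, huw, hp.coarseBtw hi⟩
  obtain ⟨h₀, hh₀, hd₀⟩ := hnear' 0 (Nat.zero_le n)
  have hfiber (i : ℕ) (hi : i ≤ n) : ∃ a ∈ H, E.π a = E.π h₀ ∧ E.dG (p i) a ≤ r := by
    obtain ⟨h, hh, hd⟩ := hnear' i hi
    exact hmove _ _ (hπ i).symm h₀ hh₀ hd₀ h hh hd
  choose! a haH haπ had using hfiber
  refine ⟨a 0, haH 0 (Nat.zero_le n), a n, haH n le_rfl, E.inv_mul_mem_shortSubgroup haH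
    (fun i hi => (haπ i hi).trans (haπ 0 (Nat.zero_le n)).symm) fun i hi => ?_,
    had 0 (Nat.zero_le n), had n le_rfl⟩
  have hstep := hlip _ _ _ (hπ i) (hπ (i + 1))
  rw [hp i (i + 1) (by omega) hi] at hstep
  push_cast at hstep
  linarith [had i hi.le, had (i + 1) hi, E.distG.tri (a i) (p i) (a (i + 1)),
    E.distG.tri (p i) (p (i + 1)) (a (i + 1)), E.distG.symm (a i) (p i)]

lemma exists_wordDist_le_of_qiEmb_shortSubgroup (hS₁ : GenSet S₁) (hle : H ≤ Q₁.comap E.π)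
    (D : ℝ) : ∃ D' : ℝ, QIEmbSubgroup (E.shortSubgroup H D') → ∃ B : ℝ, 0 ≤ B ∧
      ∀ u w : Q₁.comap E.π, E.π w = E.π u →
        (∀ m, E.FiberBtw (E.π u) 0 (u : G) m w → ∃ h ∈ H, E.dG m h ≤ D) →
        wordDist S₁ u w ≤ B * (E.dG u w + 1) := by
  obtain ⟨D', r, hsegment⟩ := E.exists_inv_mul_mem_shortSubgroup H D
  refine ⟨D', fun hqi => ?_⟩
  obtain ⟨C, hC, hL⟩ := exists_wordDist_le_of_inv_mul_mem E.genG hS₁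
    ((E.shortSubgroup_le H D').trans (inf_le_right.trans hle)) hqi
  obtain ⟨ρ, hρ, hproper⟩ := exists_wordDist_le_of_map_le S₁ E.genG
    (Q₁.comap E.π).subtype_injective r
  have hr : 0 ≤ max r 0 := le_max_right r 0
  refine ⟨2 * ρ + C * (2 * max r 0 + 1), by positivity, fun u w huw hnear => ?_⟩
  obtain ⟨a, ha, b, hb, hab, hua, hwb⟩ := hsegment u w huw hnear
  have hd := isPseudoDist_wordDist hS₁
  have hab' := hL ⟨a, hle ha⟩ ⟨b, hle hb⟩ hab
  have hdab : E.dG a b ≤ E.dG u w + 2 * max r 0 := by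
    linarith [E.distG.tri a u b, E.distG.tri u w b, E.distG.symm a u, le_max_left r 0]
  have hnn := E.distG.nonneg (u : G) w
  calc wordDist S₁ u w ≤ ρ + C * (E.dG a b + 1) + ρ := by
        linarith [hd.tri u ⟨a, hle ha⟩ w, hd.tri ⟨a, hle ha⟩ ⟨b, hle hb⟩ w,
          hd.symm ⟨b, hle hb⟩ w, hproper u ⟨a, hle ha⟩ hua, hproper w ⟨b, hle hb⟩ hwb]
    _ ≤ ρ + C * (E.dG u w + 2 * max r 0 + 1) + ρ := by gcongr
    _ ≤ (2 * ρ + C * (2 * max r 0 + 1)) * (E.dG u w + 1) := by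
      nlinarith [mul_nonneg hρ hnn, mul_nonneg (mul_nonneg hC hr) hnn]

lemma IsFiberChain.wordDist_le {x y : Q₁.comap E.π} {n : ℕ} {u w : ℕ → Q₁.comap E.π} {ρ : ℝ}
    (h : E.IsFiberChain Q₁ A x y n (fun i => u i) fun i => w i) (hS₁ : GenSet S₁)
    (hproper : ∀ a b : Q₁.comap E.π, E.dG a b ≤ A → wordDist S₁ a b ≤ ρ) (hB : 0 ≤ B)
    (hsegment : ∀ i < n, wordDist S₁ (u i) (w i) ≤ B * (n + 1)) :
    wordDist S₁ x y ≤ (B + 2 * ρ) * (n + 1) ^ 2 := by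
  have hd := isPseudoDist_wordDist hS₁
  have hρ : 0 ≤ ρ := (hd.nonneg _ _).trans (hproper _ _ h.start)
  have hchain := dist_le_mul_of_step_le hd (γ := u) (k := B * (n + 1) + ρ) (n := n)
    (fun i hi => by
      linarith [hsegment i hi, hproper _ _ (h.jump i hi), hd.tri (u i) (w i) (u (i + 1))])
    (Nat.zero_le n) le_rfl
  have hBn : 0 ≤ B * n := by positivity
  have hρn : 0 ≤ ρ * n := by positivity
  have hρn' : 0 ≤ ρ * n * n := by positivity
  simp only [Nat.cast_zero, sub_zero] at hchain
  nlinarith [hd.tri x (u 0) y, hd.tri (u 0) (u n) y, hproper _ _ h.start, hproper _ _ h.finish]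

/- If `K₁` were undistorted in `G`, the distance in `G₁` of two points of a fiber segment near `H`
would be linear in their distance in `G`, so a fiber chain would give a quadratic bound for the
distance in `G₁` of its endpoints. -/
theorem exists_not_qiEmb_shortSubgroup (he : 0 ≤ e) (hgate : ∀ v, ∃ q, IsGate E.dQ e Q₁ v q)
    (hle : H ≤ Q₁.comap E.π) (hH : QIEmbSubgroup (H.subgroupOf (Q₁.comap E.π)))
    (hdist : ¬ QIEmbSubgroup H) : ∃ D, ¬ QIEmbSubgroup (E.shortSubgroup H D) := by
  obtain ⟨S₁, _, hS₁, -⟩ := id hH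
  obtain ⟨A, hA, hchain⟩ := E.exists_isFiberChain he hgate
  obtain ⟨D, -, hnear⟩ := CoarseLine.exists_mem_dG_le E he hgate hle hH hA
  obtain ⟨D', hshort⟩ := E.exists_wordDist_le_of_qiEmb_shortSubgroup hS₁ hle D
  refine ⟨D', fun hqi => hdist ?_⟩
  obtain ⟨B, hB, hsegment⟩ := hshort hqi
  obtain ⟨ρ, hρ, hproper⟩ := exists_wordDist_le_of_map_le S₁ E.genG
    (Q₁.comap E.π).subtype_injective A
  refine qiEmbSubgroup_of_wordDist_le_sq E.genG E.hypG hS₁ hle hH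
    (B := B * (A + 1) + 2 * ρ) (by positivity) fun x y hx hy => ?_
  obtain ⟨n, u, w, hn, h⟩ := hchain x y x.2 y.2
  change wordDist S₁ x y ≤ _ * (E.dG x y + 1) ^ 2
  rw [← hn]
  refine IsFiberChain.wordDist_le E (u := fun i => ⟨u i, h.π_mem i⟩)
    (w := fun i => ⟨w i, Subgroup.mem_comap.2 (h.π_eq i ▸ h.π_mem i)⟩) h hS₁ hproper
    (by positivity) fun i hi => (hsegment _ _ (h.π_eq i) fun m hm =>
      hnear x hx y hy m (h.coarseLine i hi m hm)).trans ?_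
  rw [mul_assoc]
  exact mul_le_mul_of_nonneg_left (by linarith [h.dG_le i hi, (Nat.cast_nonneg n : (0 : ℝ) ≤ n)]) hB

end HypExtension

section Bilipschitz

variable {X Y : Type*} {d : X → X → ℝ} {d' : Y → Y → ℝ} {f : X → Y} {δ l : ℝ}

/-- `f` distorts distances by a factor of at most `l` in either direction. -/
structure IsBilipschitz (l : ℝ) (d : X → X → ℝ) (d' : Y → Y → ℝ) (f : X → Y) : Prop where
  nonneg : 0 ≤ l
  dist_map_le : ∀ x y, d' (f x) (f y) ≤ l * d x y
  dist_le_map : ∀ x y, d x y ≤ l * d' (f x) (f y)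

lemma IsBilipschitz.isCubicQuasigeodesic_comp (hf : IsBilipschitz l d d' f)
    (hd' : IsPseudoDist d') {n : ℕ} {p : ℕ → X} (hp : IsDiscreteGeodesic d p n) :
    IsCubicQuasigeodesic d' l l (fun i => f (p i)) n :=
  hp.isCubicQuasigeodesic_comp hf.dist_map_le fun x y => (hf.dist_le_map x y).trans <| by
    have hcube := add_one_le_cube (hd'.nonneg (f x) (f y))
    have hl := hf.nonneg
    gcongr
    linarith

lemma IsBilipschitz.exists_coarseBtw_of_map (hf : IsBilipschitz l d d' f) (hd : IsGraphDist d)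
    (hd' : IsGraphDist d') (hy : IsHypWith d' δ) (c : ℝ) : ∃ D : ℝ, ∀ x m y,
      CoarseBtw d' c (f x) (f m) (f y) → CoarseBtw d D x m y := by
  obtain ⟨D, -, hgeod⟩ := exists_isCoarseGeodesic_of_isCubicQuasigeodesic hy.nonneg hf.nonneg
    hf.nonneg
  refine ⟨0 + l * (D + 2 * c), fun x m y hm => ?_⟩
  obtain ⟨n, p, rfl, rfl, hp⟩ := hd.exists_geodesic x y
  have hqg := hf.isCubicQuasigeodesic_comp hd'.toIsPseudoDist hp
  obtain ⟨i, hi, hclose⟩ := (hgeod d' hd' hy _ n hqg).exists_close c (f m) hm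
  refine (hp.coarseBtw hi).move_mid hd.toIsPseudoDist ?_
  rw [hd.symm]
  exact (hf.dist_le_map _ _).trans (mul_le_mul_of_nonneg_left hclose hf.nonneg)

/- A coarse center of `f o`, `f x`, `f y` is the image of a point coarsely between `x` and `y`,
which is far from `o`. -/
lemma IsBilipschitz.exists_le_gprod_map (hf : IsBilipschitz l d d' f) (hd : IsGraphDist d)
    (hd' : IsGraphDist d') (hy : IsHypWith d' δ) (hsurj : Function.Surjective f) (M : ℝ) :
    ∃ N : ℝ, ∀ o x y, N ≤ gprod d o x y → M ≤ gprod d' (f o) (f x) (f y) := by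
  obtain ⟨D, hbtw⟩ := hf.exists_coarseBtw_of_map hd hd' hy (δ + 1)
  refine ⟨l * (M + 2 * (δ + 1)) + D + 1, fun o x y hN => ?_⟩
  obtain ⟨m', hm⟩ := exists_isCoarseCenter hd' hy (f o) (f x) (f y)
  obtain ⟨m, rfl⟩ := hsurj m'
  have hxy := (gprod_le_iff_coarseBtw hd.toIsPseudoDist).2 (hbtw x m y hm.btw₂₃)
  have hom : gprod d o x y ≤ d o m + D := by
    linarith [gprod_sub_dist_le_base hd.toIsPseudoDist o m x y]
  by_contra! hlt
  have hfom : d' (f o) (f m) ≤ M + 2 * (δ + 1) := by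
    have h₁ := hm.btw₁₂
    have h₂ := hm.btw₁₃
    unfold gprod at hlt
    unfold CoarseBtw at h₁ h₂
    linarith [hd'.tri (f x) (f m) (f y), hd'.symm (f x) (f o), hd'.symm (f y) (f o),
      hd'.symm (f x) (f m)]
  linarith [hf.dist_le_map o m, mul_le_mul_of_nonneg_left hfom hf.nonneg]

lemma exists_isBilipschitz_mulEquiv {Γ Γ' : Type*} [Group Γ] [Group Γ'] {S : Set Γ} {S' : Set Γ'}
    (hS : GenSet S) (hS' : GenSet S') (φ : Γ ≃* Γ') :
    ∃ l, IsBilipschitz l (wordDist S) (wordDist S') φ := by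
  obtain ⟨C, hC, h⟩ := exists_wordDist_map_le hS hS' (φ : Γ →* Γ')
  obtain ⟨C', -, h'⟩ := exists_wordDist_map_le hS' hS (φ.symm : Γ' →* Γ)
  refine ⟨max C C', le_max_of_le_left hC, fun x y => (h x y).trans ?_, fun x y => ?_⟩
  · have hd := (isPseudoDist_wordDist hS).nonneg x y
    gcongr
    exact le_max_left _ _
  · have hd := (isPseudoDist_wordDist hS').nonneg (φ x) (φ y)
    have hxy := h' (φ x) (φ y)
    simp only [MonoidHom.coe_coe, MulEquiv.symm_apply_apply] at hxy
    refine hxy.trans ?_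
    gcongr
    exact le_max_right _ _

end Bilipschitz

section Boundary

variable {X Y : Type*} {d : X → X → ℝ} {d' : Y → Y → ℝ} {f : X → Y} {δ l r D : ℝ}

lemma seqFellow_symm (hd : IsPseudoDist d) {a b : ℕ → X} (h : SeqFellow d a b) :
    SeqFellow d b a := fun o M =>
  (h o M).imp fun _ hN m n hm hn => gprod_comm hd o (a n) (b m) ▸ hN n m hn hm

lemma seqFellow_trans (hy : IsHypWith d δ) {a b c : ℕ → X} (hab : SeqFellow d a b)
    (hbc : SeqFellow d b c) : SeqFellow d a c := by
  intro o M
  obtain ⟨N, hN⟩ := hab o (M + δ)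
  obtain ⟨N', hN'⟩ := hbc o (M + δ)
  refine ⟨max N N', fun m n hm hn => ?_⟩
  linarith [hy.le_gprod_trans (hN m _ (le_of_max_le_left hm) (le_max_left _ _))
    (hN' _ n (le_max_right _ _) (le_of_max_le_right hn))]

lemma seqToInf_of_coarseBtw (hd : IsPseudoDist d) {o : X} {s : ℕ → X}
    (hbtw : ∀ i j, i ≤ j → CoarseBtw d D o (s i) (s j))
    (hfar : ∀ M, ∃ N, ∀ n, N ≤ n → M ≤ d o (s n)) : SeqToInf d s := by
  intro o' M
  obtain ⟨N, hN⟩ := hfar (M + D + d o o')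
  have hle (i j : ℕ) (hi : N ≤ i) (hij : i ≤ j) : M ≤ gprod d o' (s i) (s j) := by
    refine le_trans ?_ (gprod_sub_dist_le_base hd o o' (s i) (s j))
    have h := hbtw i j hij
    unfold CoarseBtw at h
    unfold gprod
    linarith [hN i hi, hd.symm o (s i), hd.symm o (s j)]
  refine ⟨N, fun i j hi hj => ?_⟩
  rcases le_total i j with hij | hji
  · exact hle i j hi hij
  · rw [gprod_comm hd]; exact hle j i hj hji

/- `Bdry` is the quotient by the relation generated by `SeqFellow`, which is an equivalence relation
on the hyperbolic side `d'` only. -/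
lemma IsBilipschitz.seqFellow_map_of_mk_eq (hf : IsBilipschitz l d d' f) (hd : IsGraphDist d)
    (hd' : IsGraphDist d') (hy : IsHypWith d' δ) (hsurj : Function.Surjective f)
    {s t : BdryPre d} (h : Bdry.mk s = Bdry.mk t) :
    SeqFellow d' (fun n => f (s.1 n)) (fun n => f (t.1 n)) := by
  have hmap (a b : ℕ → X) (hab : SeqFellow d a b) :
      SeqFellow d' (fun n => f (a n)) (fun n => f (b n)) := by
    intro o' M
    obtain ⟨o, rfl⟩ := hsurj o'
    obtain ⟨B, hB⟩ := hf.exists_le_gprod_map hd hd' hy hsurj M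
    exact (hab o B).imp fun N hN m n hm hn => hB _ _ _ (hN m n hm hn)
  have hgen := Quot.eqvGen_exact h
  clear h
  induction hgen with
  | rel a b h => exact hmap _ _ h
  | refl a => exact hmap _ _ a.2
  | symm a b _ ih => exact seqFellow_symm hd'.toIsPseudoDist ih
  | trans a b c _ _ ih ih' => exact seqFellow_trans hy ih ih'

lemma limitSetD_eq_univ (hd : IsPseudoDist d) {A : Set X} (hA : ∀ x, ∃ a ∈ A, d x a ≤ r) :
    limitSetD d A = Set.univ := by
  refine Set.eq_univ_of_forall fun ξ => ?_
  induction ξ using Quot.ind with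
  | mk s =>
    choose a haA ha using hA
    have hfellow : SeqFellow d (fun n => a (s.1 n)) s.1 := seqFellow_symm hd fun o M =>
      (s.2 o (M + r)).imp fun N hN i j hi hj => by
        linarith [hN i j hi hj, ha (s.1 j),
          gprod_sub_dist_le_right hd o (s.1 i) (s.1 j) (a (s.1 j))]
    have hinf : SeqToInf d fun n => a (s.1 n) := fun o M =>
      (hfellow o (M + r)).imp fun N hN i j hi hj => by
        linarith [hN i j hi hj, ha (s.1 j),
          gprod_sub_dist_le_right hd o (a (s.1 i)) (s.1 j) (a (s.1 j))]
    exact ⟨_, fun n => haA (s.1 n), hinf, Quot.sound hfellow⟩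

end Boundary

section FiniteIndex

variable {Γ : Type*} [Group Γ] {S : Set Γ} {H L : Subgroup Γ} {D : ℝ}

lemma exists_forall_exists_wordDist_le_of_index_ne_zero (S : Set Γ) (hL : L.index ≠ 0) :
    ∃ r : ℝ, ∀ x, ∃ a ∈ L, wordDist S x a ≤ r := by
  have : L.FiniteIndex := ⟨hL⟩
  obtain ⟨r, hr⟩ :=
    (Set.finite_range fun x : Γ ⧸ L => (wordLength S (Quotient.out x) : ℝ)).bddAbove
  refine ⟨r, fun x => ⟨x * Quotient.out (QuotientGroup.mk x⁻¹ : Γ ⧸ L), ?_, ?_⟩⟩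
  · rw [← inv_inv x, inv_inv x⁻¹]
    exact QuotientGroup.eq.1 (Quotient.out_eq _).symm
  · rw [wordDist, inv_mul_cancel_left]
    exact hr ⟨_, rfl⟩

lemma index_subgroupOf_ne_zero (hS : GenSet S) (hle : H ≤ L)
    (hnear : ∀ x ∈ L, ∃ h ∈ H, wordDist S x h ≤ D) : (H.subgroupOf L).index ≠ 0 := by
  have hfin : {x : L | (wordLength S (x : Γ) : ℝ) ≤ D}.Finite :=
    (finite_setOf_cast_wordLength_le hS D).preimage Subtype.val_injective.injOn
  have : Finite (L ⧸ H.subgroupOf L) := by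
    refine Set.finite_univ_iff.1
      ((hfin.image (QuotientGroup.mk (s := H.subgroupOf L))).subset fun z _ => ?_)
    induction z using QuotientGroup.induction_on with
    | H x =>
      obtain ⟨h, hh, hd⟩ := hnear (x⁻¹ : L) (x⁻¹).2
      refine ⟨x * ⟨h, hle hh⟩, ?_, QuotientGroup.mk_mul_of_mem _ hh⟩
      simpa [wordDist] using hd
  exact Subgroup.index_ne_zero_of_finite

end FiniteIndex

section LimitSet

variable {Γ Γ' : Type*} [Group Γ] [Group Γ'] {S : Set Γ} {S' : Set Γ'} {k : Γ} {C δ : ℝ}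

lemma exists_forall_le_wordLength_pow (hC : 0 ≤ C)
    (hk : ∀ n : ℕ, (n : ℝ) ≤ C * wordLength S (k ^ n)) (M : ℝ) :
    ∃ N : ℕ, ∀ n, N ≤ n → M ≤ wordLength S (k ^ n) := by
  obtain ⟨N, hN⟩ := exists_nat_gt (C * M)
  refine ⟨N, fun n hn => ?_⟩
  by_contra! hlt
  have hNn : (N : ℝ) ≤ n := by exact_mod_cast hn
  linarith [hk n, mul_le_mul_of_nonneg_left hlt.le hC]

lemma seqToInf_symm_pow (hS' : GenSet S') (hS : GenSet S) (hy : IsHypWith (wordDist S) δ)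
    (φ : Γ' ≃* Γ) (hC : 0 ≤ C) (hk : ∀ n : ℕ, (n : ℝ) ≤ C * wordLength S (k ^ n)) :
    SeqToInf (wordDist S') fun n => φ.symm (k ^ n) := by
  obtain ⟨l, hφ⟩ := exists_isBilipschitz_mulEquiv hS' hS φ
  obtain ⟨D, -, haxis, -⟩ := exists_coarseBtw_zpow hS hy hC hk
  obtain ⟨D', hbtw⟩ := hφ.exists_coarseBtw_of_map (isGraphDist_wordDist hS')
    (isGraphDist_wordDist hS) hy D
  refine seqToInf_of_coarseBtw (isPseudoDist_wordDist hS') (o := 1) (fun i j hij => hbtw _ _ _ ?_)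
    fun M => ?_
  · simpa using haxis 0 i j (by simp) (by exact_mod_cast hij)
  · have hk' (n : ℕ) : (n : ℝ) ≤ C * l * wordLength S' (φ.symm k ^ n) := by
      have h := hφ.dist_map_le 1 (φ.symm k ^ n)
      rw [map_one, map_pow, MulEquiv.apply_symm_apply, wordDist_one_left, wordDist_one_left] at h
      rw [mul_assoc]
      exact (hk n).trans (mul_le_mul_of_nonneg_left h hC)
    simpa [wordDist_one_left] using
      exists_forall_le_wordLength_pow (mul_nonneg hC hφ.nonneg) hk' M

lemma exists_mem_forall_le_gprod_pow (hS' : GenSet S') (hS : GenSet S)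
    (hy : IsHypWith (wordDist S) δ) (φ : Γ' ≃* Γ) {A : Set Γ'}
    (hA : limitSetD (wordDist S') A = Set.univ) (hC : 0 ≤ C)
    (hk : ∀ n : ℕ, (n : ℝ) ≤ C * wordLength S (k ^ n)) (M : ℝ) :
    ∃ t ∈ A, ∃ N : ℕ, ∀ n, N ≤ n → M ≤ gprod (wordDist S) 1 (φ t) (k ^ n) := by
  obtain ⟨l, hφ⟩ := exists_isBilipschitz_mulEquiv hS' hS φ
  have hinf := seqToInf_symm_pow hS' hS hy φ hC hk
  obtain ⟨t, htA, _, hmk⟩ : Bdry.mk ⟨_, hinf⟩ ∈ limitSetD (wordDist S') A := hA ▸ Set.mem_univ _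
  obtain ⟨N, hN⟩ := hφ.seqFellow_map_of_mk_eq (isGraphDist_wordDist hS')
    (isGraphDist_wordDist hS) hy φ.surjective hmk 1 M
  exact ⟨t N, htA N, N, fun n hn => by simpa using hN N n le_rfl hn⟩

end LimitSet

section WideBtw

variable {X : Type*} {d : X → X → ℝ} {x x' y y' u u' m o : X} {M M' δ c e : ℝ}

/-- `m` lies coarsely between `x` and `y`, at distance at least `M` from both. -/
structure IsWideBtw (d : X → X → ℝ) (c M : ℝ) (x m y : X) : Prop where
  coarseBtw : CoarseBtw d c x m y
  le_left : M ≤ d m x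
  le_right : M ≤ d m y

lemma IsWideBtw.mono {c' : ℝ} (h : IsWideBtw d c M x m y) (hc : c ≤ c') (hM : M' ≤ M) :
    IsWideBtw d c' M' x m y :=
  ⟨h.coarseBtw.mono hc, hM.trans h.le_left, hM.trans h.le_right⟩

lemma IsWideBtw.coarseBtw_of_dist_le (hd : IsPseudoDist d) (hy : IsHypWith d δ)
    (h : IsWideBtw d c M x m y) (hM : c + e + 2 * δ < M) (hx : d x x' ≤ e) (hy' : d y y' ≤ e) :
    CoarseBtw d (c + 2 * δ) x' m y' :=
  h.coarseBtw.of_dist_le hd hy hx hy' (hM.trans_le h.le_left) (hM.trans_le h.le_right)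

lemma isWideBtw_of_le_gprod (hd : IsPseudoDist d) (hy : IsHypWith d δ)
    (hu : CoarseBtw d c u o u') (hM : c + 2 * δ < M) (hx : M ≤ gprod d o x u)
    (hx' : M ≤ gprod d o x' u') : IsWideBtw d (c + 2 * δ) M x o x' := by
  refine ⟨(gprod_le_iff_coarseBtw hd).1 ?_, hx.trans (gprod_le_dist_left hd o x u),
    hx'.trans (gprod_le_dist_left hd o x' u')⟩
  by_contra! hlt
  obtain ⟨B, hB, hBM, hBx⟩ : ∃ B, c + 2 * δ < B ∧ B ≤ M ∧ B ≤ gprod d o x x' :=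
    ⟨min M (gprod d o x x'), lt_min hM hlt, min_le_left _ _, min_le_right _ _⟩
  have hux' : B - δ ≤ gprod d o u x' :=
    hy.le_gprod_trans (gprod_comm hd o x u ▸ hBM.trans hx) hBx
  linarith [hy.le_gprod_trans hux' (by linarith [hy.nonneg]), (gprod_le_iff_coarseBtw hd).2 hu]

end WideBtw

lemma exists_coarseBtw_pow_inv_pow {Γ : Type*} [Group Γ] {S : Set Γ} {k : Γ} {C δ : ℝ}
    (hS : GenSet S) (hy : IsHypWith (wordDist S) δ) (hC : 0 ≤ C)
    (hk : ∀ n : ℕ, (n : ℝ) ≤ C * wordLength S (k ^ n)) :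
    ∃ D : ℝ, 0 ≤ D ∧ ∀ n : ℕ, CoarseBtw (wordDist S) D (k ^ n) 1 (k⁻¹ ^ n) := by
  obtain ⟨D, hD, haxis, -⟩ := exists_coarseBtw_zpow hS hy hC hk
  refine ⟨D, hD, fun n => CoarseBtw.symm ?_ (isPseudoDist_wordDist hS)⟩
  simpa using haxis (-n) 0 n (by simp) (by simp)

namespace HypExtension

variable {K G Q : Type*} [Group K] [Group G] [Group Q] (E : HypExtension K G Q)

/- The quantitative form of the existence of a Cannon–Thurston map: if `1` is close to a geodesic
of `G`, it is close to the ladder of its endpoints, whose fiber over `1` is a geodesic of `K`. -/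
theorem exists_le_gprod_ι (M : ℝ) :
    ∃ N : ℝ, ∀ y y', N ≤ gprod E.dK 1 y y' → M ≤ gprod E.dG 1 (E.ι y) (E.ι y') := by
  obtain ⟨D, -, hladder⟩ := E.exists_dG_ladderProj_le_of_coarseBtw (le_max_right M 0)
  obtain ⟨w, -, hproper⟩ := E.exists_fiberDist_le D
  refine ⟨E.δ + 1 + w + 1, fun y y' hN => ?_⟩
  by_contra! hlt
  have hd := E.isPseudoDist_fiberDist 1
  have hG := (gprod_le_iff_coarseBtw E.distG).1 (hlt.le.trans (le_max_left M 0))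
  have hfiber := E.fiberBtw_ladderProj (E.ι y) (E.ι y') 1
  rw [map_one, leaf_of_π_eq E (E.π_ι y), leaf_of_π_eq E (E.π_ι y')] at hfiber
  have hnear := hproper 1 1 _ (map_one _) hfiber.π_mid (hladder _ _ _ hG)
  have hbtw := hfiber.coarseBtw.move_mid hd ((hd.symm _ _).trans_le hnear)
  have hK := (E.coarseBtw_fiberDist_mul_ι (map_one E.π) (a := y) (m := 1) (b := y')
    (c := E.δ + 1 + w)).1 (by simpa using hbtw)
  linarith [(gprod_le_iff_coarseBtw E.distK).2 hK]

variable {S : Set K} {A : Set K}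

lemma exists_mem_forall_le_gprod_conj (hS : GenSet S)
    (hA : limitSetD (wordDist S) A = Set.univ) {k : K} {C : ℝ} (hC : 0 ≤ C)
    (hk : ∀ n : ℕ, (n : ℝ) ≤ C * E.lK (k ^ n)) (p : G) (M : ℝ) :
    ∃ t ∈ A, ∃ N : ℕ, ∀ n, N ≤ n → M ≤ gprod E.dK 1 (E.conj p t) (k ^ n) ∧
      M ≤ gprod E.dG 1 (E.ι (E.conj p t)) (E.ι k ^ n) := by
  obtain ⟨M', hM'⟩ := E.exists_le_gprod_ι M
  have hinv (x : K) : E.conj p (E.conj p⁻¹ x) = x := by simpa using E.conj_inv_conj p⁻¹ x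
  obtain ⟨t, htA, N, hN⟩ := exists_mem_forall_le_gprod_pow hS E.genK E.hypK
    ((E.conj p).toMulEquiv (E.conj p⁻¹) (MonoidHom.ext (E.conj_inv_conj p)) (MonoidHom.ext hinv))
    hA hC hk (max M M')
  refine ⟨t, htA, N, fun n hn => ⟨(le_max_left _ _).trans (hN n hn), ?_⟩⟩
  rw [← map_pow]
  exact hM' _ _ ((le_max_right _ _).trans (hN n hn))

theorem exists_isWideBtw_conj (hS : GenSet S) (hA : limitSetD (wordDist S) A = Set.univ) :
    ∃ R : ℝ, 0 ≤ R ∧ ∀ (p : G) (M : ℝ), ∃ t ∈ A, ∃ t' ∈ A,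
      IsWideBtw E.dK R M (E.conj p t) 1 (E.conj p t') ∧
      IsWideBtw E.dG R M (E.ι (E.conj p t)) 1 (E.ι (E.conj p t')) := by
  obtain ⟨k, C, hC, hkG, hkK⟩ := E.exists_loxodromic
  have hkK' (n : ℕ) : (n : ℝ) ≤ C * E.lK (k⁻¹ ^ n) := by
    rw [inv_pow, lK, wordLength_inv E.genK]
    exact hkK n
  obtain ⟨DK, hDK, haxisK⟩ := exists_coarseBtw_pow_inv_pow E.genK E.hypK hC hkK
  obtain ⟨DG, -, haxisG⟩ := exists_coarseBtw_pow_inv_pow E.genG E.hypG (k := E.ι k) zero_le_one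
    (by simpa using hkG)
  have hδ := E.hypK.nonneg
  have : 0 ≤ max DK DG := le_max_of_le_left hDK
  refine ⟨max DK DG + 2 * E.δ, by positivity, fun p M => ?_⟩
  have hM : max DK DG + 2 * E.δ < max M (max DK DG + 2 * E.δ + 1) :=
    lt_max_of_lt_right (lt_add_one _)
  obtain ⟨t, htA, N, hN⟩ := E.exists_mem_forall_le_gprod_conj hS hA hC hkK p
    (max M (max DK DG + 2 * E.δ + 1))
  obtain ⟨t', htA', N', hN'⟩ := E.exists_mem_forall_le_gprod_conj hS hA hC hkK' p
    (max M (max DK DG + 2 * E.δ + 1))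
  obtain ⟨hK, hG⟩ := hN _ (le_max_left N N')
  obtain ⟨hK', hG'⟩ := hN' _ (le_max_right N N')
  rw [map_inv] at hG'
  exact ⟨t, htA, t', htA',
    (isWideBtw_of_le_gprod E.distK E.hypK ((haxisK _).mono (le_max_left _ _)) hM hK hK').mono
      le_rfl (le_max_left _ _),
    (isWideBtw_of_le_gprod E.distG E.hypG ((haxisG _).mono (le_max_right _ _)) hM hG hG').mono
      le_rfl (le_max_left _ _)⟩

lemma coarseBtw_ι_of_isWideBtw {R M : ℝ} {p : G} {t t' : K}
    (h : IsWideBtw E.dG R M (E.ι (E.conj p t)) 1 (E.ι (E.conj p t')))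
    (hM : R + E.lG p + 2 * E.δ < M) :
    CoarseBtw E.dG (R + 2 * E.δ) (E.ι t) p (E.ι t') := by
  have hmove (t : K) : E.dG (E.ι (E.conj p t)) (p⁻¹ * E.ι t) ≤ E.lG p := by
    rw [E.distG.symm, ι_conj, dG_mul_right]
  have hbtw := h.coarseBtw_of_dist_le E.distG E.hypG hM (hmove t) (hmove t')
  simpa using (coarseBtw_wordDist_mul_left p _ _ _).2 hbtw

lemma fiberBtw_leaf_of_isWideBtw {R M : ℝ} {p : G} {t t' : K}
    (h : IsWideBtw E.dK R M (E.conj p t) 1 (E.conj p t'))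
    (hM : R + E.lK (E.ιInv (p⁻¹ * E.baseLeaf (E.π p))) + 2 * E.δ < M) :
    E.FiberBtw (E.π p) (R + 2 * E.δ) (E.leaf (E.ι t) (E.π p)) p (E.leaf (E.ι t') (E.π p)) := by
  have hleaf (t : K) : E.leaf (E.ι t) (E.π p) =
      p * E.ι (E.conj p t * E.ιInv (p⁻¹ * E.baseLeaf (E.π p))) := by
    rw [map_mul, E.ι_conj, E.ι_ιInv (by simp [E.isLipSection_baseLeaf.π_apply]), leaf, π_ι]
    group
  have hmove (t : K) : E.dK (E.conj p t) (E.conj p t * E.ιInv (p⁻¹ * E.baseLeaf (E.π p))) ≤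
      E.lK (E.ιInv (p⁻¹ * E.baseLeaf (E.π p))) := by
    rw [dK, wordDist, inv_mul_cancel_left]
  refine ⟨E.π_leaf _ _, rfl, E.π_leaf _ _, ?_⟩
  have hbtw := (E.coarseBtw_fiberDist_mul_ι (x := p) rfl).2
    (h.coarseBtw_of_dist_le E.distK E.hypK hM (hmove t) (hmove t'))
  rwa [map_one, mul_one, ← hleaf, ← hleaf] at hbtw

variable {Q₁ : Subgroup Q} {H : Subgroup G} {e : ℝ}

lemma exists_coarseLine (Q₁ : Subgroup Q) {c : ℝ} (hc : 0 ≤ c) : ∃ B : ℝ, 0 ≤ B ∧ ∀ x y p,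
    E.π p ∈ Q₁ → E.FiberBtw (E.π p) c (E.leaf x (E.π p)) p (E.leaf y (E.π p)) →
      CoarseBtw E.dG c x p y → E.CoarseLine Q₁ B x y p := by
  obtain ⟨C, hC, hthrough⟩ := E.exists_isLipSection_through E.leafConst_nonneg hc
  refine ⟨max C (max c (E.δ + 1)), le_max_of_le_left hC, fun x y p hp hfiber hG => ?_⟩
  obtain ⟨τ, hτ, hτp, hbtw⟩ := hthrough _ _ p (E.isLipSection_leaf x) (E.isLipSection_leaf y)
    hfiber
  refine ⟨τ, E.π p, ⟨hτ.mono (le_max_left _ _), fun q => (hbtw q).mono (le_max_right _ _)⟩, hτp,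
    isGate_self E.distQ (le_max_of_le_left hC) hp, hτp.symm ▸ hG.mono ?_⟩
  exact (le_max_left _ _).trans (le_max_right _ _)

/- Every point `p` over `Q₁` is on a coarse line joining two points of `A`: translating by `p⁻¹`,
choose them close to the two ends of a quasigeodesic through `1` in `K`. -/
theorem exists_mem_dG_le_of_limitSetD_eq_univ (he : 0 ≤ e)
    (hgate : ∀ v, ∃ q, IsGate E.dQ e Q₁ v q) (hle : H ≤ Q₁.comap E.π)
    (hH : QIEmbSubgroup (H.subgroupOf (Q₁.comap E.π))) (hS : GenSet S)
    (hA : limitSetD (wordDist S) A = Set.univ) (hAH : ∀ t ∈ A, E.ι t ∈ H) :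
    ∃ D : ℝ, ∀ p ∈ Q₁.comap E.π, ∃ h ∈ H, E.dG p h ≤ D := by
  obtain ⟨R, hR, hwide⟩ := E.exists_isWideBtw_conj hS hA
  have hδ := E.hypK.nonneg
  obtain ⟨B, hB, hline⟩ := E.exists_coarseLine Q₁ (c := R + 2 * E.δ) (by positivity)
  obtain ⟨D, -, hnear⟩ := CoarseLine.exists_mem_dG_le E he hgate hle hH hB
  refine ⟨D, fun p hp => ?_⟩
  set a := E.lG p
  set b := E.lK (E.ιInv (p⁻¹ * E.baseLeaf (E.π p)))
  obtain ⟨t, ht, t', ht', hK, hG⟩ := hwide p (R + max a b + 2 * E.δ + 1)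
  exact hnear _ (hAH t ht) _ (hAH t' ht') p (hline _ _ p hp
    (E.fiberBtw_leaf_of_isWideBtw hK (by linarith [le_max_right a b]))
    (E.coarseBtw_ι_of_isWideBtw hG (by linarith [le_max_left a b])))

end HypExtension

end HypExt

/-- Theorem 4.1. Let `1 → K → G → Q → 1` be an exact sequence of
infinite hyperbolic groups, `Q₁ < Q` a qi embedded subgroup, `G₁ = π⁻¹(Q₁)`. If `H`
is a qi embedded subgroup of `G₁` of infinite index which is not qi embedded in `G`,
then there is a finitely generated infinite subgroup `K₁` of `K ∩ H` such that
`Λ_K(K₁) ≠ ∂K`, `[K : K₁] = ∞`, and `K₁` is distorted in `G`. -/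
theorem stmt_13 {K G Q : Type*} [Group K] [Group G] [Group Q]
    [Infinite K] [Infinite G] [Infinite Q]
    (hK : IsHypGroup K) (hG : IsHypGroup G) (hQ : IsHypGroup Q)
    (ι : K →* G) (π : G →* Q)
    (hι : Function.Injective ι) (hπ : Function.Surjective π)
    (hexact : ι.range = π.ker)
    (Q₁ : Subgroup Q) (hQ₁ : QIEmbSubgroup Q₁)
    (H : Subgroup G) (hHle : H ≤ Q₁.comap π)
    (hHqiG₁ : QIEmbSubgroup (H.subgroupOf (Q₁.comap π)))
    (hHinf : (H.subgroupOf (Q₁.comap π)).index = 0)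
    (hHnotqi : ¬ QIEmbSubgroup H) :
    ∃ K₁ : Subgroup G, K₁ ≤ ι.range ⊓ H ∧ K₁.FG ∧ (K₁ : Set G).Infinite ∧
      -- Λ_K(K₁) ≠ ∂K (for any word metric on K):
      (∀ SK : Set K, GenSet SK →
        limitSetD (wordDist SK) { k : K | ι k ∈ K₁ } ≠ Set.univ) ∧
      -- [K : K₁] = ∞:
      (K₁.comap ι).index = 0 ∧
      -- K₁ is distorted in G:
      ¬ QIEmbSubgroup K₁ := by
  obtain ⟨E, rfl, rfl⟩ := HypExt.HypExtension.exists_of_isHypGroup hK hG hQ hι hπ hexact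
  obtain ⟨e, he, hgate⟩ := HypExt.exists_isGate_of_qiEmbSubgroup E.genQ E.hypQ hQ₁
  obtain ⟨D, hdist⟩ := E.exists_not_qiEmb_shortSubgroup he hgate hHle hHqiG₁ hHnotqi
  have hlim (S : Set K) (hS : GenSet S) :
      limitSetD (wordDist S) {k : K | E.ι k ∈ E.shortSubgroup H D} ≠ Set.univ := by
    intro huniv
    obtain ⟨D', hnear⟩ := E.exists_mem_dG_le_of_limitSetD_eq_univ he hgate hHle hHqiG₁ hS huniv
      fun t ht => (E.shortSubgroup_le H D ht).2
    exact HypExt.index_subgroupOf_ne_zero E.genG hHle hnear hHinf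
  refine ⟨E.shortSubgroup H D, E.shortSubgroup_le H D, E.fg_shortSubgroup H D,
    fun hfin => hdist (HypExt.qiEmbSubgroup_of_finite E.genG hfin), hlim, ?_, hdist⟩
  by_contra hindex
  obtain ⟨r, hr⟩ := HypExt.exists_forall_exists_wordDist_le_of_index_ne_zero E.SK hindex
  exact hlim E.SK E.genK (HypExt.limitSetD_eq_univ E.distK hr)
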